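/- Let 𝒫 = (P_θ)_{θ∈Θ} be a d-dimensional exponential family dP_θ(x) = exp(θᵀT(x) − A(θ)) dμ(x) with Θ = {θ : A(θ) < ∞} having nonempty interior, such that for each θ the law of T(X) is absolutely continuous with respect to Lebesgue measure on ℝ^d, and the components of T are linearly independent (aᵀT(x) = 0 for μ-almost every x implies a = 0). Then there exists an absolute constant c > 0 (independent of n, m, d and the family) and a constant C > 0 depending only on the exponential family such that for all integers n ≥ 2 and m ≥ 0, the minimax sample-amplification error satisfies ε*(𝒫,n,m) ≥ c·min(m√d/n, 1) − C·(log n / n)^{1/3}. -/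

import Mathlib

open MeasureTheory ProbabilityTheory
open scoped ENNReal NNReal BigOperators

/-- Total variation distance between two measures: `sup_A |P(A) - Q(A)|`. -/
noncomputable def tvDist {X : Type*} [MeasurableSpace X] (μ ν : Measure X) : ℝ :=
  ⨆ A : {s : Set X // MeasurableSet s}, |(μ A).toReal - (ν A).toReal|

/-- Minimax sample amplification error `ε*(𝒫, n, m)` for the family `(P θ)_θ`. -/
noncomputable def ampErr {X Θ : Type*} [MeasurableSpace X] (P : Θ → Measure X)
    (n m : ℕ) : ℝ :=
  ⨅ T : {T : Kernel (Fin n → X) (Fin (n + m) → X) // IsMarkovKernel T},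
    ⨆ θ : Θ, tvDist (Measure.pi fun _ : Fin (n + m) => P θ)
      ((Measure.pi fun _ : Fin n => P θ).bind T.1)

/-- Partition function `∫ exp(θᵀ T(x)) dμ(x)` of an exponential family, in `ℝ≥0∞`. -/
noncomputable def expFamZ {X : Type*} [MeasurableSpace X] {d : ℕ} (μ : Measure X)
    (T : X → Fin d → ℝ) (θ : Fin d → ℝ) : ℝ≥0∞ :=
  ∫⁻ x, ENNReal.ofReal (Real.exp (∑ i, θ i * T x i)) ∂μ

/-- The natural parameter domain `Θ = {θ : A(θ) < ∞}` of the exponential family. -/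
noncomputable def expFamDom {X : Type*} [MeasurableSpace X] {d : ℕ} (μ : Measure X)
    (T : X → Fin d → ℝ) : Set (Fin d → ℝ) :=
  {θ | expFamZ μ T θ ≠ ⊤}

/-- Log-partition function `A(θ)` of the exponential family. -/
noncomputable def expFamA {X : Type*} [MeasurableSpace X] {d : ℕ} (μ : Measure X)
    (T : X → Fin d → ℝ) (θ : Fin d → ℝ) : ℝ :=
  Real.log (expFamZ μ T θ).toReal

/-- Member `P_θ` of the exponential family: `dP_θ(x) = exp(θᵀT(x) − A(θ)) dμ(x)`. -/
noncomputable def expFam {X : Type*} [MeasurableSpace X] {d : ℕ} (μ : Measure X)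
    (T : X → Fin d → ℝ) (θ : Fin d → ℝ) : Measure X :=
  μ.withDensity fun x => ENNReal.ofReal (Real.exp (∑ i, θ i * T x i - expFamA μ T θ))

theorem tvDist_bddAbove {X : Type*} [MeasurableSpace X] (μ ν : Measure X)
    [IsProbabilityMeasure μ] [IsProbabilityMeasure ν] (A : {s : Set X // MeasurableSet s}) :
    |(μ A).toReal - (ν A).toReal| ≤ 1 := by
  have h1 : (μ A).toReal ≤ 1 := measureReal_le_one
  have h2 : (ν A).toReal ≤ 1 := measureReal_le_one
  have h3 : 0 ≤ (μ A).toReal := ENNReal.toReal_nonneg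
  have h4 : 0 ≤ (ν A).toReal := ENNReal.toReal_nonneg
  rw [abs_le]; constructor <;> linarith

theorem tvDist_le_one {X : Type*} [MeasurableSpace X] (μ ν : Measure X)
    [IsProbabilityMeasure μ] [IsProbabilityMeasure ν] : tvDist μ ν ≤ 1 :=
  Real.iSup_le (fun A => tvDist_bddAbove μ ν A) zero_le_one

theorem tvDist_nonneg {X : Type*} [MeasurableSpace X] (μ ν : Measure X) : 0 ≤ tvDist μ ν :=
  Real.iSup_nonneg fun _ => abs_nonneg _

theorem measureReal_sub_le_tvDist {X : Type*} [MeasurableSpace X] (μ ν : Measure X)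
    [IsProbabilityMeasure μ] [IsProbabilityMeasure ν] {A : Set X} (hA : MeasurableSet A) :
    |(μ A).toReal - (ν A).toReal| ≤ tvDist μ ν :=
  le_ciSup (f := fun A : {s : Set X // MeasurableSet s} => |(μ A).toReal - (ν A).toReal|)
    ⟨1, by rintro _ ⟨A, rfl⟩; exact tvDist_bddAbove μ ν A⟩ ⟨A, hA⟩

theorem measure_le_add_tvDist {X : Type*} [MeasurableSpace X] (μ ν : Measure X)
    [IsProbabilityMeasure μ] [IsProbabilityMeasure ν] {A : Set X} (hA : MeasurableSet A) :
    μ A ≤ ν A + ENNReal.ofReal (tvDist μ ν) := by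
  have h := (abs_le.1 (measureReal_sub_le_tvDist μ ν hA)).2
  rw [← ENNReal.ofReal_toReal (measure_ne_top μ A), ← ENNReal.ofReal_toReal (measure_ne_top ν A),
    ← ENNReal.ofReal_add ENNReal.toReal_nonneg (tvDist_nonneg μ ν)]
  exact ENNReal.ofReal_le_ofReal (by linarith)

theorem measure_le_add_tvDist' {X : Type*} [MeasurableSpace X] (μ ν : Measure X)
    [IsProbabilityMeasure μ] [IsProbabilityMeasure ν] {A : Set X} (hA : MeasurableSet A) :
    ν A ≤ μ A + ENNReal.ofReal (tvDist μ ν) := by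
  have h := (abs_le.1 (measureReal_sub_le_tvDist μ ν hA)).1
  rw [← ENNReal.ofReal_toReal (measure_ne_top μ A), ← ENNReal.ofReal_toReal (measure_ne_top ν A),
    ← ENNReal.ofReal_add ENNReal.toReal_nonneg (tvDist_nonneg μ ν)]
  exact ENNReal.ofReal_le_ofReal (by linarith)

theorem lintegral_le_add_of_measure_le_add {X : Type*} [MeasurableSpace X] {μ ν : Measure X}
    {ε : ℝ≥0∞} (h : ∀ A, MeasurableSet A → μ A ≤ ν A + ε) {f : X → ℝ≥0∞} (hf : Measurable f)
    (hf1 : ∀ x, f x ≤ 1) : ∫⁻ x, f x ∂μ ≤ ∫⁻ x, f x ∂ν + ε := by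
  have key : ∀ κ : Measure X,
      ∫⁻ x, f x ∂κ = ∫⁻ t in Set.Ioc (0 : ℝ) 1, κ {x | t < (f x).toReal} := by
    intro κ
    have h1 : ∫⁻ x, f x ∂κ = ∫⁻ x, ENNReal.ofReal (f x).toReal ∂κ := by
      refine lintegral_congr fun x => ?_
      rw [ENNReal.ofReal_toReal ((hf1 x).trans_lt ENNReal.one_lt_top).ne]
    rw [h1, lintegral_eq_lintegral_meas_lt κ (Filter.Eventually.of_forall fun x =>
      ENNReal.toReal_nonneg) hf.ennreal_toReal.aemeasurable]
    rw [← Set.Ioc_union_Ioi_eq_Ioi zero_le_one, lintegral_union measurableSet_Ioi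
      (Set.Ioc_disjoint_Ioi le_rfl)]
    have h2 : ∫⁻ t in Set.Ioi (1 : ℝ), κ {x | t < (f x).toReal} = 0 := by
      rw [setLIntegral_congr_fun (g := fun _ => 0) measurableSet_Ioi]
      · simp
      · intro t ht
        have : {x | t < (f x).toReal} = ∅ := by
          ext x
          simp only [Set.mem_ofPred_eq, Set.mem_empty_iff_false, iff_false, not_lt]
          have := ENNReal.toReal_mono ENNReal.one_ne_top (hf1 x)
          simp only [ENNReal.toReal_one] at this
          exact this.trans (le_of_lt ht)
        simp [this]
    rw [h2, add_zero]
  rw [key μ, key ν]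
  calc ∫⁻ t in Set.Ioc (0 : ℝ) 1, μ {x | t < (f x).toReal}
      ≤ ∫⁻ t in Set.Ioc (0 : ℝ) 1, (ν {x | t < (f x).toReal} + ε) :=
        lintegral_mono fun t => h _ (measurableSet_lt measurable_const hf.ennreal_toReal)
    _ = _ := by rw [lintegral_add_right _ measurable_const]; simp

/-- Data processing for the hockey-stick divergence between the joint law of `(θ, x)` and the
product of the reference measure `ρ · π` with the marginal law of `x`. -/
theorem hockeyStick_le_add_of_amplification {Ω Y₁ Y₂ : Type*} [MeasurableSpace Ω]
    [MeasurableSpace Y₁] [MeasurableSpace Y₂] (π : Measure Ω) [IsFiniteMeasure π]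
    (B₁ : Measure Y₁) (B₂ : Measure Y₂) [SFinite B₁] [SFinite B₂]
    (L₁ : Ω → Y₁ → ℝ≥0∞) (L₂ : Ω → Y₂ → ℝ≥0∞) (hL₁ : Measurable (Function.uncurry L₁))
    (hL₂ : Measurable (Function.uncurry L₂)) (ρ : Ω → ℝ≥0∞) (hρ : Measurable ρ)
    (hpos : ∀ y, ∫⁻ θ, L₂ θ y ∂π ≠ 0) (hfin : ∀ y, ∫⁻ θ, L₂ θ y ∂π ≠ ⊤)
    (hprob : ∀ᵐ θ ∂π, IsProbabilityMeasure (B₂.withDensity (L₂ θ)))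
    (T : Kernel Y₁ Y₂) [IsMarkovKernel T] {ε : ℝ≥0∞}
    (h : ∀ᵐ θ ∂π, ∀ A, MeasurableSet A →
      B₂.withDensity (L₂ θ) A ≤ (B₁.withDensity (L₁ θ)).bind T A + ε ∧
      (B₁.withDensity (L₁ θ)).bind T A ≤ B₂.withDensity (L₂ θ) A + ε) :
    ∫⁻ y, ∫⁻ θ, (L₂ θ y - ρ θ * ∫⁻ θ', L₂ θ' y ∂π) ∂π ∂B₂ ≤
      ∫⁻ x, ∫⁻ θ, (L₁ θ x - ρ θ * ∫⁻ θ', L₁ θ' x ∂π) ∂π ∂B₁ + 2 * (ε * π Set.univ) := by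
  set M₁ : Y₁ → ℝ≥0∞ := fun x => ∫⁻ θ', L₁ θ' x ∂π with hM₁
  set M₂ : Y₂ → ℝ≥0∞ := fun x => ∫⁻ θ', L₂ θ' x ∂π with hM₂
  have mM₁ : Measurable M₁ := hL₁.lintegral_prod_left'
  have mM₂ : Measurable M₂ := hL₂.lintegral_prod_left'
  set S : Set (Ω × Y₂) := {p | ρ p.1 * M₂ p.2 < L₂ p.1 p.2} with hS
  have mS : MeasurableSet S :=
    measurableSet_lt ((hρ.comp measurable_fst).mul (mM₂.comp measurable_snd)) hL₂
  have mS1 : ∀ y, MeasurableSet {θ | (θ, y) ∈ S} := fun y => measurable_prodMk_right mS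
  have mS2 : ∀ θ, MeasurableSet {y | (θ, y) ∈ S} := fun θ => measurable_prodMk_left mS
  set f : Y₂ → ℝ≥0∞ := fun y => ∫⁻ θ in {θ | (θ, y) ∈ S}, ρ θ ∂π with hf
  have fe : f = fun y => ∫⁻ θ, S.indicator (fun p => ρ p.1) (θ, y) ∂π := by
    funext y
    rw [hf]; simp only
    rw [← lintegral_indicator (mS1 y)]
    rfl
  have mf : Measurable f := by
    rw [fe]
    exact ((hρ.comp measurable_fst).indicator mS).lintegral_prod_left'
  have fM : ∀ y, f y * M₂ y = ∫⁻ θ in {θ | (θ, y) ∈ S}, ρ θ * M₂ y ∂π := fun y => by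
    rw [lintegral_mul_const _ hρ]
  have f1 : ∀ y, f y ≤ 1 := by
    intro y
    have h1 : f y * M₂ y ≤ 1 * M₂ y := by
      rw [fM, one_mul]
      calc _ ≤ ∫⁻ θ in {θ | (θ, y) ∈ S}, L₂ θ y ∂π :=
            setLIntegral_mono' (mS1 y) fun θ hθ => le_of_lt hθ
        _ ≤ _ := setLIntegral_le_lintegral _ _
    exact (ENNReal.mul_le_mul_iff_left (hpos y) (hfin y)).1 h1
  have mL₁ : ∀ θ, Measurable (L₁ θ) := fun θ => hL₁.comp measurable_prodMk_left
  have mL₂ : ∀ θ, Measurable (L₂ θ) := fun θ => hL₂.comp measurable_prodMk_left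
  have mL₁' : ∀ x, Measurable fun θ => L₁ θ x := fun θ => hL₁.comp measurable_prodMk_right
  have mL₂' : ∀ x, Measurable fun θ => L₂ θ x := fun θ => hL₂.comp measurable_prodMk_right
  -- the total mass of the superlevel set
  have e1 : ∫⁻ θ, B₂.withDensity (L₂ θ) {y | (θ, y) ∈ S} ∂π =
      ∫⁻ y, ∫⁻ θ, (L₂ θ y - ρ θ * M₂ y) ∂π ∂B₂ + ∫⁻ y, f y * M₂ y ∂B₂ := by
    have : ∀ θ, B₂.withDensity (L₂ θ) {y | (θ, y) ∈ S} =
        ∫⁻ y, S.indicator (fun p => L₂ p.1 p.2) (θ, y) ∂B₂ := by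
      intro θ
      rw [withDensity_apply _ (mS2 θ), ← lintegral_indicator (mS2 θ)]
      rfl
    simp_rw [this]
    rw [lintegral_lintegral_swap (f := fun θ y => S.indicator (fun p => L₂ p.1 p.2) (θ, y))
      (hL₂.indicator mS).aemeasurable,
      ← lintegral_add_right _ (show Measurable fun y => f y * M₂ y from mf.mul mM₂)]
    refine lintegral_congr fun y => ?_
    rw [fM]
    rw [← lintegral_indicator (mS1 y), ← lintegral_add_right _ ((hρ.mul_const _).indicator (mS1 y))]
    refine lintegral_congr fun θ => ?_
    by_cases hθ : (θ, y) ∈ S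
    · rw [Set.indicator_of_mem hθ, Set.indicator_of_mem (show θ ∈ {θ | (θ, y) ∈ S} from hθ)]
      exact (tsub_add_cancel_of_le (le_of_lt hθ)).symm
    · rw [Set.indicator_of_notMem hθ, Set.indicator_of_notMem
        (show θ ∉ {θ | (θ, y) ∈ S} from hθ), add_zero]
      exact (tsub_eq_zero_of_le (not_lt.1 hθ)).symm
  have e2 : ∫⁻ θ, (B₁.withDensity (L₁ θ)).bind T {y | (θ, y) ∈ S} ∂π ≤
      ∫⁻ x, ∫⁻ θ, (L₁ θ x - ρ θ * M₁ x) ∂π ∂B₁ + ∫⁻ x, (∫⁻ y, f y ∂(T x)) * M₁ x ∂B₁ := by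
    have mT : Measurable fun p : Ω × Y₁ => T p.2 {y | (p.1, y) ∈ S} :=
      Kernel.measurable_kernel_prodMk_left (κ := Kernel.prodMkLeft Ω T)
        (t := {q : (Ω × Y₁) × Y₂ | (q.1.1, q.2) ∈ S})
        (((measurable_fst.comp measurable_fst).prodMk measurable_snd) mS)
    have b1 : ∀ θ, (B₁.withDensity (L₁ θ)).bind T {y | (θ, y) ∈ S} =
        ∫⁻ x, L₁ θ x * T x {y | (θ, y) ∈ S} ∂B₁ := by
      intro θ
      rw [Measure.bind_apply (mS2 θ) T.aemeasurable,
        lintegral_withDensity_eq_lintegral_mul _ (mL₁ θ) (T.measurable_coe (mS2 θ))]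
      rfl
    simp_rw [b1]
    rw [lintegral_lintegral_swap (hL₁.mul mT).aemeasurable]
    have mI : Measurable fun x => ∫⁻ y, f y ∂(T x) := mf.lintegral_kernel
    rw [← lintegral_add_right _
      (show Measurable fun x => (∫⁻ y, f y ∂(T x)) * M₁ x from mI.mul mM₁)]
    refine lintegral_mono fun x => ?_
    have b2 : ∀ θ, L₁ θ x * T x {y | (θ, y) ∈ S} =
        ∫⁻ y, S.indicator (fun p => L₁ p.1 x) (θ, y) ∂(T x) := by
      intro θ
      rw [← setLIntegral_const, ← lintegral_indicator (mS2 θ)]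
      rfl
    simp_rw [b2]
    rw [lintegral_lintegral_swap (f := fun θ y => S.indicator (fun p => L₁ p.1 x) (θ, y))
      (((mL₁' x).comp measurable_fst).indicator mS).aemeasurable]
    calc ∫⁻ y, ∫⁻ θ, S.indicator (fun p => L₁ p.1 x) (θ, y) ∂π ∂(T x)
        ≤ ∫⁻ y, (∫⁻ θ, (L₁ θ x - ρ θ * M₁ x) ∂π + f y * M₁ x) ∂(T x) := by
          refine lintegral_mono fun y => ?_
          have : f y * M₁ x = ∫⁻ θ in {θ | (θ, y) ∈ S}, ρ θ * M₁ x ∂π := by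
            rw [lintegral_mul_const _ hρ]
          rw [this, ← lintegral_indicator (mS1 y),
            ← lintegral_add_right _ ((hρ.mul_const _).indicator (mS1 y))]
          refine lintegral_mono fun θ => ?_
          by_cases hθ : (θ, y) ∈ S
          · rw [Set.indicator_of_mem hθ,
              Set.indicator_of_mem (show θ ∈ {θ | (θ, y) ∈ S} from hθ)]
            exact le_tsub_add
          · rw [Set.indicator_of_notMem hθ]
            exact zero_le
      _ = _ := by
          rw [lintegral_add_right _ (mf.mul_const _), lintegral_mul_const _ mf]
          simp
  have e3 : ∫⁻ x, (∫⁻ y, f y ∂(T x)) * M₁ x ∂B₁ ≤ ∫⁻ y, f y * M₂ y ∂B₂ + ε * π Set.univ := by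
    have c1 : ∫⁻ x, (∫⁻ y, f y ∂(T x)) * M₁ x ∂B₁ =
        ∫⁻ θ, ∫⁻ y, f y ∂((B₁.withDensity (L₁ θ)).bind T) ∂π := by
      have : ∀ θ, ∫⁻ y, f y ∂((B₁.withDensity (L₁ θ)).bind T) =
          ∫⁻ x, L₁ θ x * ∫⁻ y, f y ∂(T x) ∂B₁ := by
        intro θ
        rw [Measure.lintegral_bind T.aemeasurable mf.aemeasurable,
          lintegral_withDensity_eq_lintegral_mul _ (mL₁ θ) mf.lintegral_kernel]
        rfl
      simp_rw [this]
      rw [lintegral_lintegral_swap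
        (hL₁.mul (mf.lintegral_kernel.comp measurable_snd)).aemeasurable]
      refine lintegral_congr fun x => ?_
      rw [lintegral_mul_const _ (mL₁' x), mul_comm]
    have c2 : ∫⁻ y, f y * M₂ y ∂B₂ = ∫⁻ θ, ∫⁻ y, f y ∂(B₂.withDensity (L₂ θ)) ∂π := by
      have : ∀ θ, ∫⁻ y, f y ∂(B₂.withDensity (L₂ θ)) = ∫⁻ y, L₂ θ y * f y ∂B₂ := by
        intro θ
        rw [lintegral_withDensity_eq_lintegral_mul _ (mL₂ θ) mf]
        rfl
      simp_rw [this]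
      rw [lintegral_lintegral_swap (hL₂.mul (mf.comp measurable_snd)).aemeasurable]
      refine lintegral_congr fun x => ?_
      rw [lintegral_mul_const _ (mL₂' x), mul_comm]
    rw [c1, c2, ← lintegral_const, ← lintegral_add_right _ measurable_const]
    refine lintegral_mono_ae ?_
    filter_upwards [h] with θ hθ
    exact lintegral_le_add_of_measure_le_add (fun A hA => (hθ A hA).2) mf f1
  have e4 : ∫⁻ θ, B₂.withDensity (L₂ θ) {y | (θ, y) ∈ S} ∂π ≤
      ∫⁻ θ, (B₁.withDensity (L₁ θ)).bind T {y | (θ, y) ∈ S} ∂π + ε * π Set.univ := by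
    rw [← lintegral_const, ← lintegral_add_right _ measurable_const]
    refine lintegral_mono_ae ?_
    filter_upwards [h] with θ hθ
    exact (hθ _ (mS2 θ)).1
  have e5 : ∫⁻ y, f y * M₂ y ∂B₂ ≠ ⊤ := by
    have : ∫⁻ y, f y * M₂ y ∂B₂ ≤ ∫⁻ θ, 1 ∂π := by
      refine le_trans (le_trans le_add_self e1.ge) (lintegral_mono_ae ?_)
      filter_upwards [hprob] with θ hθ
      exact prob_le_one
    refine (this.trans_lt ?_).ne
    simp
  rw [e1] at e4
  refine (ENNReal.add_le_add_iff_right e5).1 (e4.trans ?_)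
  refine (add_le_add_left (e2.trans (add_le_add_right e3 _)) _).trans (le_of_eq ?_)
  ring

theorem cosh_sub_one_sub_sq_le_abs (x : ℝ) :
    (Real.cosh x - 1) - (Real.cosh x - 1) ^ 2 / 4 ≤ |x| := by
  rcases le_total |x| 1 with h | h
  · have h1 := Real.cosh_le_exp_half_sq x
    have h2 : x ^ 2 ≤ |x| := by
      rw [← sq_abs]; nlinarith [abs_nonneg x]
    have h3 : |x ^ 2 / 2| ≤ 1 := by
      rw [abs_of_nonneg (by positivity)]; linarith
    have h4 := (abs_le.1 (Real.abs_exp_sub_one_sub_id_le h3)).2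
    have h5 : 0 ≤ x ^ 2 := sq_nonneg x
    nlinarith [sq_nonneg (Real.cosh x - 1)]
  · nlinarith [sq_nonneg (Real.cosh x - 1 - 2)]

theorem neg_part_exp_lower_bound {t w : ℝ} (ht : 0 < t) (hw : 0 < w) (U : ℝ) :
    (1 / 2) * (((3 / 4) * (Real.exp (-(t * U)) + Real.exp (-(-t * U)) - 2) -
      (1 / 16) * (Real.exp (-(2 * t * U)) + Real.exp (-(-(2 * t) * U)) - 2)) / t -
      (Real.exp (-(-w * U)) - 1) / w) ≤ max (-U) 0 := by
  have h1 := cosh_sub_one_sub_sq_le_abs (t * U)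
  have h2 : (Real.exp (-(-w * U)) - 1) / w ≥ U := by
    rw [ge_iff_le, le_div_iff₀ hw]
    have := Real.add_one_le_exp (-(-w * U))
    linarith
  have h3 : Real.exp (-(2 * t * U)) = Real.exp (-(t * U)) ^ 2 := by
    rw [← Real.exp_nat_mul]; congr 1; push_cast; ring
  have h4 : Real.exp (-(-(2 * t) * U)) = Real.exp (t * U) ^ 2 := by
    rw [← Real.exp_nat_mul]; congr 1; push_cast; ring
  have h5 : Real.exp (-(t * U)) * Real.exp (t * U) = 1 := by
    rw [← Real.exp_add]; simp
  rw [Real.cosh_eq] at h1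
  have h6 : ((3 / 4) * (Real.exp (-(t * U)) + Real.exp (-(-t * U)) - 2) -
      (1 / 16) * (Real.exp (-(2 * t * U)) + Real.exp (-(-(2 * t) * U)) - 2)) / t ≤ |U| := by
    rw [div_le_iff₀ ht]
    have : |t * U| = |U| * t := by rw [abs_mul, abs_of_pos ht, mul_comm]
    rw [← this, h3, h4]
    have h7 : Real.exp (-(-t * U)) = Real.exp (t * U) := by congr 1; ring
    rw [h7]
    nlinarith
  have h8 : |U| - U ≤ 2 * max (-U) 0 := by
    rcases le_total 0 U with h | h
    · rw [abs_of_nonneg h]; simp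
    · rw [abs_of_nonpos h]; linarith [le_max_left (-U) 0]
  linarith

theorem exp_mul_rpow_le {d : ℝ} (hd : 0 ≤ d) {t : ℝ} (ht : -(1 / 50) ≤ t) :
    Real.exp (t * d / 2) * (1 + t) ^ (-d / 2) ≤ Real.exp ((50 / 49) * d * t ^ 2 / 2) := by
  have h1 : 0 < 1 + t := by linarith
  rw [Real.rpow_def_of_pos h1, ← Real.exp_add]
  refine Real.exp_le_exp.2 ?_
  have h2 := Real.one_sub_inv_le_log_of_pos h1
  have h3 : t - Real.log (1 + t) ≤ (50 / 49) * t ^ 2 := by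
    have : t - (1 - (1 + t)⁻¹) = t ^ 2 * (1 + t)⁻¹ := by field_simp; ring
    have h4 : (1 + t)⁻¹ ≤ 50 / 49 := by
      rw [inv_le_comm₀ h1 (by norm_num)]; norm_num; linarith
    nlinarith [sq_nonneg t]
  nlinarith

theorem le_exp_mul_rpow_add {d : ℝ} (hd : 0 ≤ d) {t : ℝ} (ht : |t| < 1) :
    2 + d * t ^ 2 / 2 ≤ Real.exp (t * d / 2) * (1 + t) ^ (-d / 2) +
      Real.exp (-t * d / 2) * (1 + -t) ^ (-d / 2) := by
  obtain ⟨ht1, ht2⟩ := abs_lt.1 ht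
  have h1 : 0 < 1 + t := by linarith
  have h2 : 0 < 1 + -t := by linarith
  rw [Real.rpow_def_of_pos h1, Real.rpow_def_of_pos h2, ← Real.exp_add, ← Real.exp_add]
  have h3 := Real.add_one_le_exp (t * d / 2 + Real.log (1 + t) * (-d / 2))
  have h4 := Real.add_one_le_exp (-t * d / 2 + Real.log (1 + -t) * (-d / 2))
  have h5 : Real.log (1 + t) + Real.log (1 + -t) ≤ -t ^ 2 := by
    rw [← Real.log_mul h1.ne' h2.ne']
    have := Real.log_le_sub_one_of_pos (mul_pos h1 h2)
    nlinarith
  nlinarith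

section Gap

variable {E : Type*} [MeasurableSpace E] {μ : Measure E} {Q : E → ℝ} {d : ℕ} {v : ℝ}

theorem hasIntegral_exp_centered
    (hint : ∀ s : ℝ, 0 < s → Integrable (fun u => Real.exp (-(s * Q u / 2))) μ)
    (hval : ∀ s : ℝ, 0 < s → ∫ u, Real.exp (-(s * Q u / 2)) ∂μ = s ^ (-(d : ℝ) / 2) * v)
    {t : ℝ} (ht : -1 < t) :
    Integrable (fun u => Real.exp (-(t * ((Q u - d) / 2))) * Real.exp (-(Q u / 2))) μ ∧
    ∫ u, Real.exp (-(t * ((Q u - d) / 2))) * Real.exp (-(Q u / 2)) ∂μ =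
      Real.exp (t * d / 2) * (1 + t) ^ (-(d : ℝ) / 2) * v := by
  have h1 : ∀ u, Real.exp (-(t * ((Q u - d) / 2))) * Real.exp (-(Q u / 2)) =
      Real.exp (t * d / 2) * Real.exp (-((1 + t) * Q u / 2)) := by
    intro u
    rw [← Real.exp_add, ← Real.exp_add]; congr 1; ring
  simp_rw [h1]
  refine ⟨(hint _ (by linarith)).const_mul _, ?_⟩
  rw [integral_const_mul, hval _ (by linarith), mul_assoc]

theorem integral_second_difference {f₁ f₂ f₃ f₄ f₅ b : E → ℝ} (i₁ : Integrable f₁ μ)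
    (i₂ : Integrable f₂ μ) (i₃ : Integrable f₃ μ) (i₄ : Integrable f₄ μ) (i₅ : Integrable f₅ μ)
    (ib : Integrable b μ) (t w : ℝ) :
    ∫ u, (1 / 2) * (((3 / 4) * (f₁ u + f₂ u - 2 * b u) -
      (1 / 16) * (f₃ u + f₄ u - 2 * b u)) / t - (f₅ u - b u) / w) ∂μ =
    (1 / 2) * (((3 / 4) * (∫ u, f₁ u ∂μ + ∫ u, f₂ u ∂μ - 2 * ∫ u, b u ∂μ) -
      (1 / 16) * (∫ u, f₃ u ∂μ + ∫ u, f₄ u ∂μ - 2 * ∫ u, b u ∂μ)) / t -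
      (∫ u, f₅ u ∂μ - ∫ u, b u ∂μ) / w) := by
  have j2 : Integrable (fun u => 2 * b u) μ := ib.const_mul 2
  have a12 : Integrable (fun u => f₁ u + f₂ u) μ := i₁.add i₂
  have a34 : Integrable (fun u => f₃ u + f₄ u) μ := i₃.add i₄
  have b12 : Integrable (fun u => f₁ u + f₂ u - 2 * b u) μ := a12.sub j2
  have b34 : Integrable (fun u => f₃ u + f₄ u - 2 * b u) μ := a34.sub j2
  have c12 : Integrable (fun u => (3 / 4) * (f₁ u + f₂ u - 2 * b u)) μ := b12.const_mul _
  have c34 : Integrable (fun u => (1 / 16) * (f₃ u + f₄ u - 2 * b u)) μ := b34.const_mul _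
  have d1 : Integrable (fun u => ((3 / 4) * (f₁ u + f₂ u - 2 * b u) -
      (1 / 16) * (f₃ u + f₄ u - 2 * b u)) / t) μ := (c12.sub c34).div_const t
  have d2 : Integrable (fun u => (f₅ u - b u) / w) μ := (i₅.sub ib).div_const w
  rw [integral_const_mul, integral_sub d1 d2, integral_div, integral_div, integral_sub i₅ ib,
    integral_sub c12 c34, integral_const_mul, integral_const_mul, integral_sub a12 j2,
    integral_sub a34 j2, integral_add i₁ i₂, integral_add i₃ i₄, integral_const_mul]

theorem integral_neg_part_lower_bound (hQ : Measurable Q) (hd : 0 < d) (hv : 0 < v)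
    (hint : ∀ s : ℝ, 0 < s → Integrable (fun u => Real.exp (-(s * Q u / 2))) μ)
    (hval : ∀ s : ℝ, 0 < s → ∫ u, Real.exp (-(s * Q u / 2)) ∂μ = s ^ (-(d : ℝ) / 2) * v)
    (hQ0 : ∀ u, 0 ≤ Q u) :
    Integrable (fun u => max (-((Q u - d) / 2)) 0 * Real.exp (-(Q u / 2))) μ ∧
    (1 / 2500) * Real.sqrt d * v ≤
      ∫ u, max (-((Q u - d) / 2)) 0 * Real.exp (-(Q u / 2)) ∂μ := by
  have hint1 : Integrable (fun u => Real.exp (-(Q u / 2))) μ := by simpa using hint 1 one_pos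
  have hd0 : (0 : ℝ) < d := by exact_mod_cast hd
  have hd1 : (1 : ℝ) ≤ d := by exact_mod_cast hd
  have I0 : Integrable (fun u => max (-((Q u - d) / 2)) 0 * Real.exp (-(Q u / 2))) μ := by
    refine (hint1.const_mul ((d : ℝ) / 2)).mono'
      (by fun_prop) (Filter.Eventually.of_forall fun u => ?_)
    rw [Real.norm_of_nonneg (by positivity)]
    refine mul_le_mul_of_nonneg_right (max_le ?_ (by positivity)) (Real.exp_nonneg _)
    linarith [hQ0 u]
  refine ⟨I0, ?_⟩
  set r := Real.sqrt d with hr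
  have hr1 : 1 ≤ r := Real.one_le_sqrt.2 hd1
  have hr2 : r ^ 2 = d := Real.sq_sqrt hd0.le
  have hr0 : 0 < r := by linarith
  set t : ℝ := 1 / (100 * r) with ht
  set w : ℝ := 1 / (2000 * r) with hw
  have ht0 : 0 < t := by positivity
  have hw0 : 0 < w := by positivity
  have ht1 : t ≤ 1 / 100 := by
    rw [ht]; apply one_div_le_one_div_of_le <;> linarith
  have hw1 : w ≤ 1 / 100 := by
    rw [hw]; apply one_div_le_one_div_of_le <;> linarith
  have hdt : (d : ℝ) * t ^ 2 = 1 / 10000 := by rw [← hr2, ht]; field_simp; norm_num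
  have hdw : (d : ℝ) * w ^ 2 = 1 / 4000000 := by rw [← hr2, hw]; field_simp; norm_num
  have H := fun {s : ℝ} (hs : -1 < s) => hasIntegral_exp_centered hint hval hs
  obtain ⟨i1, e1⟩ := H (s := t) (by linarith)
  obtain ⟨i2, e2⟩ := H (s := -t) (by linarith)
  obtain ⟨i3, e3⟩ := H (s := 2 * t) (by linarith)
  obtain ⟨i4, e4⟩ := H (s := -(2 * t)) (by linarith)
  obtain ⟨i5, e5⟩ := H (s := -w) (by linarith)
  have e0 : ∫ u, Real.exp (-(Q u / 2)) ∂μ = v := by simpa using hval 1 one_pos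
  set b := fun u => Real.exp (-(Q u / 2)) with hb
  have e6 : ∫ u, (1 / 2) * (((3 / 4) * (Real.exp (-(t * ((Q u - d) / 2))) * b u
      + Real.exp (-(-t * ((Q u - d) / 2))) * b u - 2 * b u) -
      (1 / 16) * (Real.exp (-(2 * t * ((Q u - d) / 2))) * b u +
      Real.exp (-(-(2 * t) * ((Q u - d) / 2))) * b u - 2 * b u)) / t -
      (Real.exp (-(-w * ((Q u - d) / 2))) * b u - b u) / w) ∂μ ≤
      ∫ u, max (-((Q u - d) / 2)) 0 * b u ∂μ := by
    refine integral_mono ?_ I0 fun u => ?_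
    · exact ((((((i1.add i2).sub (hint1.const_mul 2)).const_mul _).sub
        (((i3.add i4).sub (hint1.const_mul 2)).const_mul _)).div_const t).sub
        ((i5.sub hint1).div_const w)).const_mul _
    · have := mul_le_mul_of_nonneg_right
        (neg_part_exp_lower_bound ht0 hw0 ((Q u - d) / 2)) (Real.exp_nonneg (-(Q u / 2)))
      refine le_trans (le_of_eq ?_) this
      simp only [hb]; ring
  refine le_trans ?_ e6
  rw [integral_second_difference i1 i2 i3 i4 i5 hint1 t w, e0, e1, e2, e3, e4, e5]
  have m1 := le_exp_mul_rpow_add hd0.le (t := t) (by rw [abs_of_pos ht0]; linarith)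
  have m2 := exp_mul_rpow_le hd0.le (t := 2 * t) (by linarith)
  have m3 := exp_mul_rpow_le hd0.le (t := -(2 * t)) (by linarith)
  have m4 := exp_mul_rpow_le hd0.le (t := -w) (by linarith)
  have n1 : Real.exp ((50 / 49) * d * (2 * t) ^ 2 / 2) ≤ 1 + 20413 / 100000000 := by
    have : (50 / 49) * d * (2 * t) ^ 2 / 2 = (1 / 4900 : ℝ) := by
      rw [show (50 / 49) * (d : ℝ) * (2 * t) ^ 2 / 2 = (100 / 49) * (d * t ^ 2) by ring, hdt]
      norm_num
    rw [this]
    have := (abs_le.1 (Real.abs_exp_sub_one_sub_id_le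
      (show |(1 / 4900 : ℝ)| ≤ 1 by rw [abs_of_pos] <;> norm_num))).2
    norm_num at this ⊢
    linarith
  have n2 : Real.exp ((50 / 49) * d * (-w) ^ 2 / 2) ≤ 1 + 13 / 100000000 := by
    have : (50 / 49) * d * (-w) ^ 2 / 2 = (1 / 7840000 : ℝ) := by
      rw [show (50 / 49) * (d : ℝ) * (-w) ^ 2 / 2 = (25 / 49) * (d * w ^ 2) by ring, hdw]
      norm_num
    rw [this]
    have := (abs_le.1 (Real.abs_exp_sub_one_sub_id_le
      (show |(1 / 7840000 : ℝ)| ≤ 1 by rw [abs_of_pos] <;> norm_num))).2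
    norm_num at this ⊢
    linarith
  rw [show (-(2 * t)) ^ 2 = (2 * t) ^ 2 by ring] at m3
  rw [show (d : ℝ) * t ^ 2 / 2 = 1 / 20000 by rw [hdt]; norm_num] at m1
  generalize Real.exp (t * d / 2) * (1 + t) ^ (-(d : ℝ) / 2) = M1 at *
  generalize Real.exp (-t * d / 2) * (1 + -t) ^ (-(d : ℝ) / 2) = M2 at *
  generalize Real.exp (2 * t * d / 2) * (1 + 2 * t) ^ (-(d : ℝ) / 2) = M3 at *
  generalize Real.exp (-(2 * t) * d / 2) * (1 + -(2 * t)) ^ (-(d : ℝ) / 2) = M4 at *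
  generalize Real.exp (-w * d / 2) * (1 + -w) ^ (-(d : ℝ) / 2) = M5 at *
  have q1 : (1 / 2500 : ℝ) ≤ 1 / 2 * ((3 / 4 * (M1 + M2 - 2) - 1 / 16 * (M3 + M4 - 2)) * 100 -
      (M5 - 1) * 2000) := by linarith
  have q2 := mul_le_mul_of_nonneg_right q1 (mul_pos hr0 hv).le
  refine le_trans (by linarith) (q2.trans (le_of_eq ?_))
  rw [ht, hw]
  field_simp

/-- Scaled hockey-stick functional `∫ (e^{-Q/2} - τ)₊ / v`. -/
noncomputable def gaussHockey (μ : Measure E) (Q : E → ℝ) (v τ : ℝ) : ℝ≥0∞ :=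
  ∫⁻ u, ENNReal.ofReal ((Real.exp (-(Q u / 2)) - τ) / v) ∂μ

theorem gaussHockey_antitone (hv : 0 < v) : Antitone (gaussHockey μ Q v) := by
  intro a b h
  refine lintegral_mono fun u => ENNReal.ofReal_le_ofReal ?_
  gcongr

theorem pos_part_pointwise (hd : 0 < d) {δ : ℝ} (hδ : 0 ≤ δ) (q : ℝ) (hv : 0 < v) :
    max ((Real.exp (-(q / 2)) - Real.exp (-(d : ℝ) / 2)) / v) 0 +
      (δ * (max (-((q - d) / 2)) 0 * Real.exp (-(q / 2))) -
        d * δ ^ 2 / 4 * Real.exp (-(q / 2))) / v ≤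
    max (((1 + δ) ^ ((d : ℝ) / 2) * Real.exp (-((1 + δ) * q / 2)) - Real.exp (-(d : ℝ) / 2)) / v)
      0 := by
  have hd0 : (0 : ℝ) < d := by exact_mod_cast hd
  have he : 0 < Real.exp (-(q / 2)) := Real.exp_pos _
  rcases le_total q d with h | h
  · rw [max_eq_left (a := (Real.exp (-(q / 2)) - Real.exp (-(d : ℝ) / 2)) / v)
      (div_nonneg (sub_nonneg.2 (Real.exp_le_exp.2 (by linarith))) hv.le),
      max_eq_left (a := -((q - d) / 2)) (by linarith)]
    refine le_trans ?_ (le_max_left _ _)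
    rw [← add_div]
    refine div_le_div_of_nonneg_right ?_ hv.le
    have h1 : (1 + δ) ^ ((d : ℝ) / 2) * Real.exp (-((1 + δ) * q / 2)) =
        Real.exp (Real.log (1 + δ) * (d / 2) - δ * q / 2) * Real.exp (-(q / 2)) := by
      rw [Real.rpow_def_of_pos (by linarith), ← Real.exp_add, ← Real.exp_add]
      congr 1; ring
    have h2 := Real.add_one_le_exp (Real.log (1 + δ) * (d / 2) - δ * q / 2)
    have h3 : δ - δ ^ 2 / 2 ≤ Real.log (1 + δ) := by
      have := Real.le_log_one_add_of_nonneg hδ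
      refine le_trans ?_ this
      rw [le_div_iff₀ (by linarith)]
      nlinarith [pow_nonneg hδ 3]
    rw [h1]
    have h4 : 1 + (δ * (-((q - d) / 2)) - d * δ ^ 2 / 4) ≤
        Real.exp (Real.log (1 + δ) * (d / 2) - δ * q / 2) := by
      nlinarith
    nlinarith
  · rw [max_eq_right (a := (Real.exp (-(q / 2)) - Real.exp (-(d : ℝ) / 2)) / v)
      (div_nonpos_of_nonpos_of_nonneg (sub_nonpos.2 (Real.exp_le_exp.2 (by linarith))) hv.le),
      max_eq_right (a := -((q - d) / 2)) (by linarith)]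
    refine le_trans ?_ (le_max_right _ _)
    have : 0 ≤ d * δ ^ 2 / 4 * Real.exp (-(q / 2)) := by positivity
    have : (δ * (0 * Real.exp (-(q / 2))) - d * δ ^ 2 / 4 * Real.exp (-(q / 2))) / v ≤ 0 :=
      div_nonpos_of_nonpos_of_nonneg (by linarith) hv.le
    linarith

theorem lintegral_scaled_gap (hQ : Measurable Q) (hd : 0 < d) (hv : 0 < v)
    (hint : ∀ s : ℝ, 0 < s → Integrable (fun u => Real.exp (-(s * Q u / 2))) μ)
    (hval : ∀ s : ℝ, 0 < s → ∫ u, Real.exp (-(s * Q u / 2)) ∂μ = s ^ (-(d : ℝ) / 2) * v)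
    (hQ0 : ∀ u, 0 ≤ Q u) {δ : ℝ} (hδ : 0 ≤ δ)
    (h : 0 ≤ δ * Real.sqrt d / 2500 - d * δ ^ 2 / 4) :
    gaussHockey μ Q v (Real.exp (-(d : ℝ) / 2)) +
      ENNReal.ofReal (δ * Real.sqrt d / 2500 - d * δ ^ 2 / 4) ≤
    ∫⁻ u, ENNReal.ofReal (((1 + δ) ^ ((d : ℝ) / 2) * Real.exp (-((1 + δ) * Q u / 2)) -
      Real.exp (-(d : ℝ) / 2)) / v) ∂μ := by
  obtain ⟨I0, hI0⟩ := integral_neg_part_lower_bound hQ hd hv hint hval hQ0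
  have hint1 : Integrable (fun u => Real.exp (-(Q u / 2))) μ := by simpa using hint 1 one_pos
  have e0 : ∫ u, Real.exp (-(Q u / 2)) ∂μ = v := by simpa using hval 1 one_pos
  have J1 : Integrable
      (fun u => max ((Real.exp (-(Q u / 2)) - Real.exp (-(d : ℝ) / 2)) / v) 0) μ := by
    refine (hint1.div_const v).mono' (by fun_prop) (Filter.Eventually.of_forall fun u => ?_)
    rw [Real.norm_of_nonneg (le_max_right _ _)]
    refine max_le (div_le_div_of_nonneg_right ?_ hv.le) (by positivity)
    linarith [Real.exp_pos (-(d : ℝ) / 2)]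
  have J2 : Integrable (fun u => max (((1 + δ) ^ ((d : ℝ) / 2) *
      Real.exp (-((1 + δ) * Q u / 2)) - Real.exp (-(d : ℝ) / 2)) / v) 0) μ := by
    refine (((hint (1 + δ) (by linarith)).const_mul ((1 + δ) ^ ((d : ℝ) / 2))).div_const v).mono'
      (by fun_prop) (Filter.Eventually.of_forall fun u => ?_)
    rw [Real.norm_of_nonneg (le_max_right _ _)]
    refine max_le (div_le_div_of_nonneg_right ?_ hv.le) (by positivity)
    linarith [Real.exp_pos (-(d : ℝ) / 2)]
  have J3 := ((I0.const_mul δ).sub (hint1.const_mul (d * δ ^ 2 / 4))).div_const v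
  have key := integral_mono (J1.add J3) J2 fun u => pos_part_pointwise hd hδ (Q u) hv
  rw [integral_add' J1 J3] at key
  have e3 : ∫ u, (δ * (max (-((Q u - d) / 2)) 0 * Real.exp (-(Q u / 2))) -
        d * δ ^ 2 / 4 * Real.exp (-(Q u / 2))) / v ∂μ ≥
        δ * Real.sqrt d / 2500 - d * δ ^ 2 / 4 := by
    rw [integral_div, integral_sub (I0.const_mul δ) (hint1.const_mul _), integral_const_mul,
      integral_const_mul, e0, ge_iff_le, le_div_iff₀ hv]
    nlinarith [mul_le_mul_of_nonneg_left hI0 hδ]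
  have mx : ∀ f : E → ℝ, Integrable (fun u => max (f u) 0) μ →
      ∫⁻ u, ENNReal.ofReal (f u) ∂μ = ENNReal.ofReal (∫ u, max (f u) 0 ∂μ) := by
    intro f hf
    rw [ofReal_integral_eq_lintegral_ofReal hf
      (Filter.Eventually.of_forall fun u => le_max_right _ _)]
    refine lintegral_congr fun u => ?_
    rcases le_total (f u) 0 with h | h
    · rw [max_eq_right h, ENNReal.ofReal_of_nonpos h, ENNReal.ofReal_zero]
    · rw [max_eq_left h]
  rw [gaussHockey, mx _ J1, mx _ J2]
  have p1 : 0 ≤ ∫ u, max ((Real.exp (-(Q u / 2)) - Real.exp (-(d : ℝ) / 2)) / v) 0 ∂μ :=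
    integral_nonneg fun u => le_max_right _ _
  have p2 : 0 ≤ ∫ u, max (((1 + δ) ^ ((d : ℝ) / 2) *
      Real.exp (-((1 + δ) * Q u / 2)) - Real.exp (-(d : ℝ) / 2)) / v) 0 ∂μ :=
    integral_nonneg fun u => le_max_right _ _
  rw [← ENNReal.ofReal_add p1 h]
  exact ENNReal.ofReal_le_ofReal ((add_le_add le_rfl e3).trans key)

end Gap

section Scaling

variable {d : ℕ} {Q : (Fin d → ℝ) → ℝ}

theorem lintegral_comp_smul_volume (f : (Fin d → ℝ) → ℝ≥0∞) {r : ℝ} (hr : 0 < r) :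
    ∫⁻ u, f u = ENNReal.ofReal (r ^ d) * ∫⁻ u, f (r • u) := by
  have h1 : ∫⁻ u, f (r • u) = ∫⁻ u, f u ∂(Measure.map (fun u => r • u) volume) :=
    ((Homeomorph.smulOfNeZero r hr.ne').measurableEmbedding.lintegral_map f).symm
  rw [h1, Measure.map_addHaar_smul volume hr.ne', lintegral_smul_measure, smul_eq_mul, ← mul_assoc,
    ← ENNReal.ofReal_mul (by positivity), Module.finrank_fin_fun, abs_of_pos (by positivity),
    mul_inv_cancel₀ (by positivity), ENNReal.ofReal_one, one_mul]

theorem sqrt_pow_eq_rpow {s : ℝ} (hs : 0 < s) (d : ℕ) : Real.sqrt s ^ d = s ^ ((d : ℝ) / 2) := by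
  rw [Real.sqrt_eq_rpow, ← Real.rpow_natCast, ← Real.rpow_mul hs.le]
  congr 1; ring

theorem integrable_exp_scale (hQs : ∀ (s : ℝ) u, Q (s • u) = s ^ 2 * Q u)
    (hint : Integrable fun u => Real.exp (-(Q u / 2))) {s : ℝ} (hs : 0 < s) :
    Integrable fun u => Real.exp (-(s * Q u / 2)) := by
  have := hint.comp_smul (Real.sqrt_pos.2 hs).ne'
  simpa only [hQs, Real.sq_sqrt hs.le] using this

theorem integral_exp_scale (hQs : ∀ (s : ℝ) u, Q (s • u) = s ^ 2 * Q u) {s : ℝ} (hs : 0 < s) :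
    ∫ u, Real.exp (-(s * Q u / 2)) = s ^ (-(d : ℝ) / 2) * ∫ u, Real.exp (-(Q u / 2)) := by
  have := Measure.integral_comp_smul volume (fun u => Real.exp (-(Q u / 2))) (Real.sqrt s)
  simp only [hQs, Real.sq_sqrt hs.le] at this
  rw [this, Module.finrank_fin_fun, sqrt_pow_eq_rpow hs, abs_of_pos (by positivity), neg_div,
    Real.rpow_neg hs.le, smul_eq_mul]

theorem gaussHockey_scale (hQs : ∀ (s : ℝ) u, Q (s • u) = s ^ 2 * Q u) {v : ℝ} {s : ℝ}
    (hs : 0 < s) (τ : ℝ) :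
    gaussHockey volume Q v (s ^ (-(d : ℝ) / 2) * τ) =
      ∫⁻ u, ENNReal.ofReal ((s ^ ((d : ℝ) / 2) * Real.exp (-(s * Q u / 2)) - τ) / v) := by
  rw [gaussHockey, lintegral_comp_smul_volume _ (Real.sqrt_pos.2 hs),
    ← lintegral_const_mul' _ _ ENNReal.ofReal_ne_top]
  refine lintegral_congr fun u => ?_
  rw [← ENNReal.ofReal_mul (by positivity), hQs, Real.sq_sqrt hs.le, sqrt_pow_eq_rpow hs]
  congr 1
  have : s ^ ((d : ℝ) / 2) * s ^ (-(d : ℝ) / 2) = 1 := by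
    rw [← Real.rpow_add hs]; simp [neg_div]
  rw [mul_div_assoc', mul_sub, ← mul_assoc, this, one_mul]

theorem gaussHockey_gap (hQ : Measurable Q) (hd : 0 < d)
    (hQs : ∀ (s : ℝ) u, Q (s • u) = s ^ 2 * Q u)
    (hint : Integrable fun u => Real.exp (-(Q u / 2)))
    (hQ0 : ∀ u, 0 ≤ Q u) (hv : 0 < ∫ u, Real.exp (-(Q u / 2))) {δ : ℝ} (hδ : 0 ≤ δ) :
    gaussHockey volume Q (∫ u, Real.exp (-(Q u / 2))) (Real.exp (-(d : ℝ) / 2)) +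
      ENNReal.ofReal ((1 / 2500) ^ 2 * min (δ * Real.sqrt d) 1) ≤
    gaussHockey volume Q (∫ u, Real.exp (-(Q u / 2)))
      ((1 + δ) ^ (-(d : ℝ) / 2) * Real.exp (-(d : ℝ) / 2)) := by
  have hd0 : (0 : ℝ) < d := by exact_mod_cast hd
  set r := Real.sqrt d with hr
  have hr0 : 0 < r := Real.sqrt_pos.2 hd0
  have hr2 : r ^ 2 = d := Real.sq_sqrt hd0.le
  set δ' := min δ (2 / 2500 / r) with hδ'
  have h1 : 0 ≤ δ' := le_min hδ (by positivity)
  have h2 : δ' * r = min (δ * r) (2 / 2500) := by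
    rw [hδ', min_mul_of_nonneg _ _ hr0.le, div_mul_cancel₀ _ hr0.ne']
  set x := δ' * r with hx
  have h3 : δ' * r / 2500 - d * δ' ^ 2 / 4 = x / 2500 - x ^ 2 / 4 := by
    rw [← hr2, hx]; ring
  have hx0 : 0 ≤ x := by positivity
  have hx1 : x ≤ 2 / 2500 := h2 ▸ min_le_right _ _
  have hx2 : 2 / 2500 * min (δ * r) 1 ≤ x := by
    rw [h2]
    have : 0 ≤ δ * r := by positivity
    refine le_min ?_ ?_
    · nlinarith [min_le_left (δ * r) 1]
    · nlinarith [min_le_right (δ * r) 1]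
  have h4 : (1 / 2500) ^ 2 * min (δ * r) 1 ≤ x / 2500 - x ^ 2 / 4 := by nlinarith
  have h5 : 0 ≤ x / 2500 - x ^ 2 / 4 := by nlinarith
  have key := lintegral_scaled_gap hQ hd hv (fun s hs => integrable_exp_scale hQs hint hs)
    (fun s hs => integral_exp_scale hQs hs) hQ0 h1 (by rw [← hr, h3]; exact h5)
  rw [← hr, h3, ← gaussHockey_scale hQs (by linarith)] at key
  refine (add_le_add le_rfl (ENNReal.ofReal_le_ofReal h4)).trans (key.trans ?_)
  refine gaussHockey_antitone hv ?_
  refine mul_le_mul_of_nonneg_right ?_ (Real.exp_nonneg _)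
  refine Real.rpow_le_rpow_of_nonpos (by linarith) (by linarith [min_le_left δ (2 / 2500 / r)]) ?_
  rw [neg_div]; linarith [div_pos hd0 two_pos]

end Scaling

section Compare

variable {E : Type*} [MeasurableSpace E] {μ : Measure E}

theorem lintegral_posPart_le_of_le_mul {f₁ f₂ r₁ r₂ : E → ℝ} {U : Set E} (hU : MeasurableSet U)
    (hf₂m : Measurable f₂) {α β : ℝ} (hβ1 : β ≤ 1) (hβ0 : 0 ≤ β)
    (hαβ : β ≤ α) (h₁ : ∀ x ∈ U, f₁ x ≤ α * f₂ x) (hr : ∀ x ∈ U, β * r₂ x ≤ r₁ x)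
    (hr₁ : ∀ x, 0 ≤ r₁ x) {η : ℝ≥0∞} (hη : ∫⁻ x in Uᶜ, ENNReal.ofReal (f₁ x) ∂μ ≤ η)
    (hf₂ : ∫⁻ x, ENNReal.ofReal (f₂ x) ∂μ ≤ 1) :
    ∫⁻ x, ENNReal.ofReal (f₁ x - r₁ x) ∂μ ≤
      ∫⁻ x, ENNReal.ofReal (f₂ x - r₂ x) ∂μ + ENNReal.ofReal (α - β) + η := by
  rw [← lintegral_add_compl _ hU]
  refine add_le_add ?_ ((lintegral_mono fun x => ENNReal.ofReal_le_ofReal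
    (by linarith [hr₁ x])).trans hη)
  calc ∫⁻ x in U, ENNReal.ofReal (f₁ x - r₁ x) ∂μ
      ≤ ∫⁻ x in U, (ENNReal.ofReal (f₂ x - r₂ x) +
          ENNReal.ofReal (α - β) * ENNReal.ofReal (f₂ x)) ∂μ := by
        refine setLIntegral_mono' hU fun x hx => ?_
        have e1 : ENNReal.ofReal (f₁ x - r₁ x) ≤
            ENNReal.ofReal (β * (f₂ x - r₂ x) + (α - β) * f₂ x) :=
          ENNReal.ofReal_le_ofReal (by nlinarith [h₁ x hx, hr x hx])
        refine e1.trans (ENNReal.ofReal_add_le.trans (add_le_add ?_ ?_))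
        · rw [ENNReal.ofReal_mul hβ0]
          exact mul_le_of_le_one_left zero_le (ENNReal.ofReal_le_one.2 hβ1)
        · rw [ENNReal.ofReal_mul (by linarith)]
    _ ≤ ∫⁻ x, (ENNReal.ofReal (f₂ x - r₂ x) +
          ENNReal.ofReal (α - β) * ENNReal.ofReal (f₂ x)) ∂μ := setLIntegral_le_lintegral _ _
    _ = ∫⁻ x, ENNReal.ofReal (f₂ x - r₂ x) ∂μ +
          ENNReal.ofReal (α - β) * ∫⁻ x, ENNReal.ofReal (f₂ x) ∂μ := by
        rw [lintegral_add_right _ (by fun_prop), lintegral_const_mul _ (by fun_prop)]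
    _ ≤ _ := by gcongr; exact mul_le_of_le_one_right zero_le hf₂

theorem lintegral_ofReal_div_integral {f : E → ℝ} (hf : Integrable f μ) (hf0 : ∀ x, 0 ≤ f x)
    (hF : 0 < ∫ x, f x ∂μ) : ∫⁻ x, ENNReal.ofReal (f x / ∫ y, f y ∂μ) ∂μ = 1 := by
  rw [← ofReal_integral_eq_lintegral_ofReal (hf.div_const _)
    (Filter.Eventually.of_forall fun x => div_nonneg (hf0 x) hF.le), integral_div,
    div_self hF.ne', ENNReal.ofReal_one]

theorem integral_le_of_le_mul_on {f g : E → ℝ} {U : Set E} (hU : MeasurableSet U)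
    (hf : Integrable f μ) (hg : Integrable g μ) (hg0 : ∀ x, 0 ≤ g x) {a e : ℝ} (ha : 0 ≤ a)
    (h : ∀ x ∈ U, f x ≤ a * g x) (he : ∫ x in Uᶜ, f x ∂μ ≤ e) :
    ∫ x, f x ∂μ ≤ a * ∫ x, g x ∂μ + e := by
  rw [← integral_add_compl hU hf]
  refine add_le_add ?_ he
  calc ∫ x in U, f x ∂μ ≤ ∫ x in U, a * g x ∂μ :=
        setIntegral_mono_on hf.integrableOn (hg.const_mul a).integrableOn hU h
    _ = a * ∫ x in U, g x ∂μ := integral_const_mul _ _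
    _ ≤ _ := mul_le_mul_of_nonneg_left
        (setIntegral_le_integral hg (Filter.Eventually.of_forall hg0)) ha

theorem lintegral_posPart_div_integral_le {f g : E → ℝ} {U : Set E} (hU : MeasurableSet U)
    (hfm : Measurable f) (hgm : Measurable g)
    (hf : Integrable f μ) (hg : Integrable g μ) (hf0 : ∀ x, 0 ≤ f x) (hg0 : ∀ x, 0 ≤ g x)
    (hG : 0 < ∫ x, g x ∂μ) {a b e s : ℝ} (ha : 0 ≤ a) (ha1 : a ≤ 1 / 10)
    (hb : 0 ≤ b) (hb1 : b ≤ 1 / 10) (he : 0 ≤ e) (he1 : e ≤ 1 / 10) (hs : 0 ≤ s)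
    (hfg : ∀ x ∈ U, f x ≤ (1 + a) * g x) (hgf : ∀ x ∈ U, g x ≤ (1 + a) * f x)
    (hfU : ∫ x in Uᶜ, f x ∂μ ≤ e * ∫ x, g x ∂μ) (hgU : ∫ x in Uᶜ, g x ∂μ ≤ e * ∫ x, g x ∂μ)
    {r : E → ℝ} (hr0 : ∀ x, 0 ≤ r x) (hr1 : ∀ x ∈ U, (1 - b) * s ≤ r x)
    (hr2 : ∀ x ∈ U, (1 - b) * r x ≤ s) :
    ∫⁻ x, ENNReal.ofReal (f x / (∫ y, f y ∂μ) - r x) ∂μ ≤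
      ∫⁻ x, ENNReal.ofReal (g x / (∫ y, g y ∂μ) - s) ∂μ + ENNReal.ofReal (10 * (a + b + e)) ∧
    ∫⁻ x, ENNReal.ofReal (g x / (∫ y, g y ∂μ) - s) ∂μ ≤
      ∫⁻ x, ENNReal.ofReal (f x / (∫ y, f y ∂μ) - r x) ∂μ +
        ENNReal.ofReal (10 * (a + b + e)) := by
  have k1 := integral_le_of_le_mul_on hU hf hg hg0 (by linarith) hfg hfU
  have k2 := integral_le_of_le_mul_on hU hg hf hf0 (by linarith) hgf hgU
  have nf := lintegral_ofReal_div_integral hf hf0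
  have ng := lintegral_ofReal_div_integral hg hg0 hG
  set F := ∫ x, f x ∂μ
  set G := ∫ x, g x ∂μ
  have hF : 0 < F := by nlinarith
  have k3 : G ≤ (1 + 2 * a + 2 * e) * F := by
    nlinarith [mul_nonneg ha hF.le, mul_nonneg he hF.le, mul_nonneg (mul_nonneg ha he) hF.le,
      mul_nonneg (mul_nonneg he he) hF.le]
  have k4 : F ≤ (1 + a + e) * G := by linarith
  have tail : ∀ {u : E → ℝ} {D c : ℝ}, Integrable u μ → (∀ x, 0 ≤ u x) → 0 < D →
      ∫ x in Uᶜ, u x ∂μ ≤ c * D → ∫⁻ x in Uᶜ, ENNReal.ofReal (u x / D) ∂μ ≤ ENNReal.ofReal c := by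
    intro u D c hu hu0 hD h
    rw [← ofReal_integral_eq_lintegral_ofReal (hu.integrableOn.div_const _)
      (Filter.Eventually.of_forall fun x => div_nonneg (hu0 x) hD.le), integral_div]
    exact ENNReal.ofReal_le_ofReal ((div_le_iff₀ hD).2 h)
  constructor
  · have t1 : ∫⁻ x in Uᶜ, ENNReal.ofReal (f x / F) ∂μ ≤ ENNReal.ofReal (2 * e) := by
      refine tail hf hf0 hF (hfU.trans ?_)
      nlinarith [mul_le_mul_of_nonneg_left k3 he, mul_nonneg he hF.le,
        mul_nonneg (mul_nonneg he ha) hF.le, mul_nonneg (mul_nonneg he he) hF.le]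
    refine (lintegral_posPart_le_of_le_mul (f₂ := fun x => g x / G) (r₂ := fun _ => s)
      (α := (1 + a) * (1 + 2 * a + 2 * e)) (β := 1 - b) hU (by fun_prop)
      (by linarith) (by linarith) (by nlinarith)
      (fun x hx => ?_) hr1 hr0 t1 ng.le).trans ?_
    · rw [div_le_iff₀ hF]
      calc f x ≤ (1 + a) * g x := hfg x hx
        _ = (1 + a) * (g x / G) * G := by field_simp
        _ ≤ (1 + a) * (g x / G) * ((1 + 2 * a + 2 * e) * F) :=
          mul_le_mul_of_nonneg_left k3 (mul_nonneg (by linarith) (div_nonneg (hg0 x) hG.le))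
        _ = _ := by ring
    · rw [add_assoc, ← ENNReal.ofReal_add (by nlinarith) (by linarith)]
      gcongr
      nlinarith
  · have t1 : ∫⁻ x in Uᶜ, ENNReal.ofReal (g x / G) ∂μ ≤ ENNReal.ofReal e := tail hg hg0 hG hgU
    refine (lintegral_posPart_le_of_le_mul (f₂ := fun x => f x / F) (r₂ := r) (r₁ := fun _ => s)
      (α := (1 + a) * (1 + a + e)) (β := 1 - b) hU (by fun_prop)
      (by linarith) (by linarith) (by nlinarith)
      (fun x hx => ?_) hr2 (fun _ => hs) t1 (nf hF).le).trans ?_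
    · rw [div_le_iff₀ hG]
      calc g x ≤ (1 + a) * f x := hgf x hx
        _ = (1 + a) * (f x / F) * F := by field_simp
        _ ≤ (1 + a) * (f x / F) * ((1 + a + e) * G) :=
          mul_le_mul_of_nonneg_left k4 (mul_nonneg (by linarith) (div_nonneg (hf0 x) hF.le))
        _ = _ := by ring
    · rw [add_assoc, ← ENNReal.ofReal_add (by nlinarith) he]
      gcongr
      nlinarith

end Compare

section Quad

variable {d : ℕ}

/-- The quadratic form `h ↦ hᵀ M h`. -/
def quad (M : Matrix (Fin d) (Fin d) ℝ) (h : Fin d → ℝ) : ℝ := h ⬝ᵥ M.mulVec h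

/-- The Gaussian normalisation `∫ exp(-hᵀMh/2) dh`. -/
noncomputable def gaussMass (M : Matrix (Fin d) (Fin d) ℝ) : ℝ := ∫ h, Real.exp (-(quad M h / 2))

theorem quad_smul (M : Matrix (Fin d) (Fin d) ℝ) (s : ℝ) (h : Fin d → ℝ) :
    quad M (s • h) = s ^ 2 * quad M h := by
  simp only [quad, Matrix.mulVec_smul, dotProduct_smul, smul_dotProduct, smul_eq_mul]; ring

theorem quad_neg (M : Matrix (Fin d) (Fin d) ℝ) (h : Fin d → ℝ) : quad M (-h) = quad M h := by
  simp [quad, Matrix.mulVec_neg]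

theorem continuous_quad (M : Matrix (Fin d) (Fin d) ℝ) : Continuous (quad M) := by
  unfold quad; fun_prop

theorem abs_dotProduct_le (a b : Fin d → ℝ) : |a ⬝ᵥ b| ≤ d * ‖a‖ * ‖b‖ := by
  calc |∑ i, a i * b i| ≤ ∑ i, |a i * b i| := Finset.abs_sum_le_sum_abs _ _
    _ ≤ ∑ _i : Fin d, ‖a‖ * ‖b‖ := Finset.sum_le_sum fun i _ => by
        rw [abs_mul]
        exact mul_le_mul (norm_le_pi_norm a i) (norm_le_pi_norm b i) (abs_nonneg _) (norm_nonneg _)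
    _ = _ := by simp [mul_assoc]

theorem quad_sub_of_symm {M : Matrix (Fin d) (Fin d) ℝ} (hM : M.IsSymm) (h z : Fin d → ℝ) :
    quad M (h - z) = quad M h - 2 * (h ⬝ᵥ M.mulVec z) + quad M z := by
  have : z ⬝ᵥ M.mulVec h = h ⬝ᵥ M.mulVec z := by
    rw [Matrix.dotProduct_mulVec, ← Matrix.mulVec_transpose, hM.eq, dotProduct_comm]
  simp only [quad, Matrix.mulVec_sub, dotProduct_sub, sub_dotProduct, this]; ring

theorem integrable_exp_neg_norm_sq {c : ℝ} (hc : 0 < c) :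
    Integrable fun h : Fin d → ℝ => Real.exp (-(c * ‖h‖ ^ 2)) := by
  have h1 : Integrable fun h : Fin d → ℝ => ∏ i, Real.exp (-(c / (d + 1)) * h i ^ 2) :=
    Integrable.fintype_prod (f := fun _ x => Real.exp (-(c / (d + 1)) * x ^ 2))
      fun i => integrable_exp_neg_mul_sq (by positivity)
  refine h1.mono' (by fun_prop) (Filter.Eventually.of_forall fun h => ?_)
  rw [Real.norm_of_nonneg (Real.exp_nonneg _), ← Real.exp_sum]
  refine Real.exp_le_exp.2 ?_
  rw [← Finset.mul_sum]
  have h2 : ∑ i, h i ^ 2 ≤ (d + 1) * ‖h‖ ^ 2 := by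
    calc ∑ i, h i ^ 2 ≤ ∑ _i : Fin d, ‖h‖ ^ 2 := Finset.sum_le_sum fun i _ => by
          rw [← sq_abs]; exact pow_le_pow_left₀ (abs_nonneg _) (norm_le_pi_norm h i) 2
      _ = d * ‖h‖ ^ 2 := by simp
      _ ≤ _ := by nlinarith [sq_nonneg ‖h‖]
  have h3 : c / (d + 1) * ∑ i, h i ^ 2 ≤ c * ‖h‖ ^ 2 := by
    calc c / (d + 1) * ∑ i, h i ^ 2 ≤ c / (d + 1) * ((d + 1) * ‖h‖ ^ 2) := by gcongr
      _ = _ := by field_simp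
  linarith

theorem integrable_exp_quad {M : Matrix (Fin d) (Fin d) ℝ} {κ : ℝ} (hκ : 0 < κ)
    (hM : ∀ h, κ * ‖h‖ ^ 2 ≤ quad M h) : Integrable fun h => Real.exp (-(quad M h / 2)) := by
  refine (integrable_exp_neg_norm_sq (d := d) (half_pos hκ)).mono'
    ((continuous_quad M).measurable.div_const 2).neg.exp.aestronglyMeasurable
    (Filter.Eventually.of_forall fun h => ?_)
  rw [Real.norm_of_nonneg (Real.exp_nonneg _)]
  exact Real.exp_le_exp.2 (by linarith [hM h])

theorem gaussMass_pos {M : Matrix (Fin d) (Fin d) ℝ} {κ : ℝ} (hκ : 0 < κ)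
    (hM : ∀ h, κ * ‖h‖ ^ 2 ≤ quad M h) : 0 < gaussMass M :=
  integral_exp_pos (integrable_exp_quad hκ hM)

theorem gaussMass_ge {M : Matrix (Fin d) (Fin d) ℝ} {κ K : ℝ} (hκ : 0 < κ) (hK : 0 < K)
    (hM : ∀ h, κ * ‖h‖ ^ 2 ≤ quad M h) (hM' : ∀ h, quad M h ≤ K * ‖h‖ ^ 2) :
    ∫ h : Fin d → ℝ, Real.exp (-((K / 2) * ‖h‖ ^ 2)) ≤ gaussMass M :=
  integral_mono (integrable_exp_neg_norm_sq (half_pos hK)) (integrable_exp_quad hκ hM)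
    fun h => Real.exp_le_exp.2 (by linarith [hM' h])

theorem gaussMass_lipschitz {M M' : Matrix (Fin d) (Fin d) ℝ} {κ s : ℝ} (hκ : 0 < κ)
    (hM : ∀ h, κ * ‖h‖ ^ 2 ≤ quad M h) (hM' : ∀ h, κ * ‖h‖ ^ 2 ≤ quad M' h) (hs : 0 ≤ s)
    (h : ∀ h, quad M' h ≤ quad M h + s * (κ * ‖h‖ ^ 2)) :
    (1 - d * s / 2) * gaussMass M ≤ gaussMass M' := by
  have hint := integrable_exp_quad hκ hM
  have e1 := integral_exp_scale (quad_smul M) (show 0 < 1 + s by linarith)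
  have e2 : (1 - d * s / 2) ≤ (1 + s) ^ (-(d : ℝ) / 2) := by
    rw [Real.rpow_def_of_pos (by linarith)]
    have := Real.add_one_le_exp (Real.log (1 + s) * (-(d : ℝ) / 2))
    have h2 := Real.log_le_sub_one_of_pos (show 0 < 1 + s by linarith)
    have : (d : ℝ) * Real.log (1 + s) ≤ d * s :=
      mul_le_mul_of_nonneg_left (by linarith) (Nat.cast_nonneg d)
    linarith
  calc (1 - d * s / 2) * gaussMass M ≤ (1 + s) ^ (-(d : ℝ) / 2) * gaussMass M :=
        mul_le_mul_of_nonneg_right e2 (gaussMass_pos hκ hM).le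
    _ = ∫ u, Real.exp (-((1 + s) * quad M u / 2)) := e1.symm
    _ ≤ gaussMass M' := by
        refine integral_mono (integrable_exp_scale (quad_smul M) hint (by linarith))
          (integrable_exp_quad hκ hM') fun u => Real.exp_le_exp.2 ?_
        nlinarith [h u, mul_le_mul_of_nonneg_left (hM u) hs]

theorem exists_mulVec_eq {M : Matrix (Fin d) (Fin d) ℝ} {κ : ℝ} (hκ : 0 < κ)
    (hM : ∀ h, κ * ‖h‖ ^ 2 ≤ quad M h) (b : Fin d → ℝ) :
    ∃ z, M.mulVec z = b ∧ κ * ‖z‖ ≤ d * ‖b‖ := by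
  have inj : Function.Injective M.mulVec := by
    intro x y hxy
    have h1 := hM (x - y)
    have hxy' : M.mulVec x = M.mulVec y := hxy
    rw [quad, Matrix.mulVec_sub, hxy', sub_self, dotProduct_zero] at h1
    have : ‖x - y‖ ^ 2 ≤ 0 := by nlinarith [sq_nonneg ‖x - y‖]
    have : ‖x - y‖ = 0 := by nlinarith [norm_nonneg (x - y)]
    exact sub_eq_zero.1 (norm_eq_zero.1 this)
  obtain ⟨z, hz⟩ := (Matrix.mulVec_surjective_iff_isUnit.2
    (Matrix.mulVec_injective_iff_isUnit.1 inj)) b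
  refine ⟨z, hz, ?_⟩
  have h1 := hM z
  have hz' : M.mulVec z = b := hz
  rw [quad, hz'] at h1
  have h2 := (le_abs_self _).trans (abs_dotProduct_le z b)
  rcases eq_or_lt_of_le (norm_nonneg z) with h0 | h0
  · rw [← h0]; simp; positivity
  · nlinarith

section Shifted

variable {M : Matrix (Fin d) (Fin d) ℝ} {κ N : ℝ}

theorem integrable_exp_quad_shift (hκ : 0 < κ) (hM : ∀ h, κ * ‖h‖ ^ 2 ≤ quad M h) (hN : 0 < N)
    (z : Fin d → ℝ) : Integrable fun h => Real.exp (-(N * quad M (h - z) / 2)) :=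
  (integrable_exp_scale (quad_smul M) (integrable_exp_quad hκ hM) hN).comp_sub_right z

theorem integral_exp_quad_shift (hN : 0 < N) (z : Fin d → ℝ) :
    ∫ h, Real.exp (-(N * quad M (h - z) / 2)) = N ^ (-(d : ℝ) / 2) * gaussMass M := by
  rw [integral_sub_right_eq_self (fun h => Real.exp (-(N * quad M h / 2))) z,
    integral_exp_scale (quad_smul M) hN, gaussMass]

theorem setIntegral_exp_quad_shift_le (hκ : 0 < κ) (hM : ∀ h, κ * ‖h‖ ^ 2 ≤ quad M h)
    (hN : 0 < N) {z : Fin d → ℝ} {R : ℝ} (hz : ‖z‖ ≤ R / 2) :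
    ∫ h in (Metric.closedBall (0 : Fin d → ℝ) R)ᶜ, Real.exp (-(N * quad M (h - z) / 2)) ≤
      (2 ^ ((d : ℝ) / 2) * Real.exp (-(N * κ * R ^ 2 / 16))) *
        (N ^ (-(d : ℝ) / 2) * gaussMass M) := by
  have hR : 0 ≤ R := by linarith [norm_nonneg z]
  have i2 := (integrable_exp_quad_shift hκ hM (half_pos hN) z).const_mul
    (Real.exp (-(N * κ * R ^ 2 / 16)))
  calc ∫ h in (Metric.closedBall (0 : Fin d → ℝ) R)ᶜ, Real.exp (-(N * quad M (h - z) / 2))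
      ≤ ∫ h in (Metric.closedBall (0 : Fin d → ℝ) R)ᶜ, Real.exp (-(N * κ * R ^ 2 / 16)) *
          Real.exp (-(N / 2 * quad M (h - z) / 2)) := by
        refine setIntegral_mono_on (integrable_exp_quad_shift hκ hM hN z).integrableOn
          i2.integrableOn Metric.isClosed_closedBall.measurableSet.compl fun h hh => ?_
        rw [← Real.exp_add]
        refine Real.exp_le_exp.2 ?_
        have h1 : R < ‖h‖ := by simpa using hh
        have h2 : R / 2 ≤ ‖h - z‖ := by linarith [norm_sub_norm_le h z]
        have h3 := pow_le_pow_left₀ (by linarith) h2 2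
        have h4 := mul_le_mul_of_nonneg_left (hM (h - z)) hN.le
        have h5 := mul_le_mul_of_nonneg_left h3 (mul_pos hN hκ).le
        nlinarith
    _ ≤ ∫ h, Real.exp (-(N * κ * R ^ 2 / 16)) * Real.exp (-(N / 2 * quad M (h - z) / 2)) :=
        setIntegral_le_integral i2 (Filter.Eventually.of_forall fun h => by positivity)
    _ = _ := by
        rw [integral_const_mul, integral_exp_quad_shift (half_pos hN),
          Real.div_rpow hN.le two_pos.le, neg_div, Real.rpow_neg (two_pos.le),
          div_inv_eq_mul]
        ring

theorem lintegral_hockey_shift (hN : 0 < N) (z : Fin d → ℝ) (lam : ℝ) :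
    ∫⁻ h, ENNReal.ofReal (Real.exp (-(N * quad M (h - z) / 2)) /
        (N ^ (-(d : ℝ) / 2) * gaussMass M) - lam / gaussMass M) =
      gaussHockey volume (quad M) (gaussMass M) (N ^ (-(d : ℝ) / 2) * lam) := by
  rw [gaussHockey_scale (quad_smul M) hN, lintegral_sub_right_eq_self (fun h => ENNReal.ofReal
    (Real.exp (-(N * quad M h / 2)) / (N ^ (-(d : ℝ) / 2) * gaussMass M) - lam / gaussMass M)) z]
  refine lintegral_congr fun u => ?_
  congr 1
  rw [neg_div, Real.rpow_neg hN.le, sub_div, ← div_div, div_inv_eq_mul, mul_comm]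

end Shifted

end Quad

section Laplace

variable {d : ℕ}

/-- Uniform second-order expansion of `Λ` on the ball of radius `ρ`, with gradient `ℓ` and
uniformly nondegenerate, Lipschitz Hessian `M`. -/
structure QuadApprox (ρ κ K C : ℝ) (Λ : (Fin d → ℝ) → ℝ) (ℓ : (Fin d → ℝ) → Fin d → ℝ)
    (M : (Fin d → ℝ) → Matrix (Fin d) (Fin d) ℝ) : Prop where
  rho_pos : 0 < ρ
  kappa_pos : 0 < κ
  K_pos : 0 < K
  C_nonneg : 0 ≤ C
  small : 8 * C * ρ ≤ κ
  meas : Measurable Λ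
  symm : ∀ θ, (M θ).IsSymm
  lower : ∀ θ, ‖θ‖ ≤ ρ → ∀ h, κ * ‖h‖ ^ 2 ≤ quad (M θ) h
  upper : ∀ θ, ‖θ‖ ≤ ρ → ∀ h, quad (M θ) h ≤ K * ‖h‖ ^ 2
  lip : ∀ θ θ', ‖θ‖ ≤ ρ → ‖θ'‖ ≤ ρ → ∀ h,
    quad (M θ') h ≤ quad (M θ) h + C * ‖θ' - θ‖ * ‖h‖ ^ 2
  taylor : ∀ θ h, ‖θ‖ ≤ ρ → ‖θ + h‖ ≤ ρ →
    |Λ (θ + h) - Λ θ - ℓ θ ⬝ᵥ h - quad (M θ) h / 2| ≤ C * ‖h‖ ^ 3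

variable {ρ κ K C : ℝ} {Λ : (Fin d → ℝ) → ℝ} {ℓ : (Fin d → ℝ) → Fin d → ℝ}
  {M : (Fin d → ℝ) → Matrix (Fin d) (Fin d) ℝ}

theorem QuadApprox.convex (H : QuadApprox ρ κ K C Λ ℓ M) {θ h : Fin d → ℝ} (hθ : ‖θ‖ ≤ ρ)
    (hh : ‖θ + h‖ ≤ ρ) : κ / 4 * ‖h‖ ^ 2 ≤ Λ (θ + h) - Λ θ - ℓ θ ⬝ᵥ h := by
  have h1 := (abs_le.1 (H.taylor θ h hθ hh)).1
  have h2 := H.lower θ hθ h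
  have h3 : ‖h‖ ≤ 2 * ρ := by
    have := norm_sub_le (θ + h) θ
    rw [add_sub_cancel_left] at this; linarith
  have h4 : C * ‖h‖ ^ 3 ≤ κ / 4 * ‖h‖ ^ 2 := by
    have := mul_le_mul_of_nonneg_left h3 H.C_nonneg
    have h5 : C * ‖h‖ ≤ κ / 4 := by linarith [H.small]
    calc C * ‖h‖ ^ 3 = (C * ‖h‖) * ‖h‖ ^ 2 := by ring
      _ ≤ _ := by gcongr
  linarith

/-- The recentred likelihood around `θ`, restricted to the ball of radius `ρ`. -/
noncomputable def localLik (ρ : ℝ) (Λ : (Fin d → ℝ) → ℝ) (N : ℝ) (t θ : Fin d → ℝ) (κ₀ : ℝ) :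
    (Fin d → ℝ) → ℝ :=
  (Metric.closedBall (-θ) ρ).indicator fun h => Real.exp (N * (t ⬝ᵥ h - (Λ (θ + h) - Λ θ) - κ₀))

theorem localLik_nonneg (N : ℝ) (t θ : Fin d → ℝ) (κ₀ : ℝ) (h : Fin d → ℝ) :
    0 ≤ localLik ρ Λ N t θ κ₀ h :=
  Set.indicator_nonneg (fun _ _ => (Real.exp_nonneg _)) _

theorem mem_closedBall_neg_iff {θ h : Fin d → ℝ} :
    h ∈ Metric.closedBall (-θ) ρ ↔ ‖θ + h‖ ≤ ρ := by
  rw [mem_closedBall_iff_norm, sub_neg_eq_add, add_comm]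

theorem measurable_localLik (hΛ : Measurable Λ) (N : ℝ) (t θ : Fin d → ℝ) (κ₀ : ℝ) :
    Measurable (localLik ρ Λ N t θ κ₀) := by
  refine Measurable.indicator ?_ Metric.isClosed_closedBall.measurableSet
  have : Measurable fun h : Fin d → ℝ => t ⬝ᵥ h := by
    refine Continuous.measurable ?_
    fun_prop
  fun_prop

theorem QuadApprox.localLik_le (H : QuadApprox ρ κ K C Λ ℓ M) {N : ℝ} (hN : 0 < N)
    {t θ : Fin d → ℝ} (hθ : ‖θ‖ ≤ ρ) {κ₀ : ℝ} (hκ₀ : 0 ≤ κ₀) (h : Fin d → ℝ) :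
    localLik ρ Λ N t θ κ₀ h ≤
      (Metric.closedBall (-θ) ρ).indicator
        (fun h => Real.exp (N * (d * ‖t - ℓ θ‖ * ‖h‖ - κ / 4 * ‖h‖ ^ 2))) h := by
  unfold localLik
  by_cases hh : h ∈ Metric.closedBall (-θ) ρ
  · rw [Set.indicator_of_mem hh, Set.indicator_of_mem hh]
    have h1 := H.convex hθ (mem_closedBall_neg_iff.1 hh)
    have h2 := (le_abs_self _).trans (abs_dotProduct_le (t - ℓ θ) h)
    rw [sub_dotProduct] at h2
    refine Real.exp_le_exp.2 (mul_le_mul_of_nonneg_left ?_ hN.le)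
    linarith
  · rw [Set.indicator_of_notMem hh, Set.indicator_of_notMem hh]

theorem QuadApprox.integrable_localLik (H : QuadApprox ρ κ K C Λ ℓ M) {N : ℝ} (hN : 0 < N)
    {t θ : Fin d → ℝ} (hθ : ‖θ‖ ≤ ρ) {κ₀ : ℝ} (hκ₀ : 0 ≤ κ₀) :
    Integrable (localLik ρ Λ N t θ κ₀) := by
  have i1 : Integrable ((Metric.closedBall (-θ) ρ).indicator
      (fun h : Fin d → ℝ => Real.exp (N * (d * ‖t - ℓ θ‖ * ‖h‖ - κ / 4 * ‖h‖ ^ 2)))) := by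
    refine IntegrableOn.integrable_indicator ?_ Metric.isClosed_closedBall.measurableSet
    refine ContinuousOn.integrableOn_compact (isCompact_closedBall _ _) ?_
    fun_prop
  refine i1.mono' (measurable_localLik H.meas N t θ κ₀).aestronglyMeasurable
    (Filter.Eventually.of_forall fun h => ?_)
  rw [Real.norm_of_nonneg (localLik_nonneg _ _ _ _ _)]
  exact H.localLik_le hN hθ hκ₀ h

theorem QuadApprox.setIntegral_localLik_le (H : QuadApprox ρ κ K C Λ ℓ M) {N R : ℝ} (hN : 0 < N)
    (hR : 0 < R) {t θ : Fin d → ℝ} (hθ : ‖θ‖ ≤ ρ) {κ₀ : ℝ} (hκ₀ : 0 ≤ κ₀)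
    (ht : d * ‖t - ℓ θ‖ ≤ κ * R / 8) :
    ∫ h in (Metric.closedBall (0 : Fin d → ℝ) R)ᶜ, localLik ρ Λ N t θ κ₀ h ≤
      (2 * ρ) ^ d * Real.exp (-(N * κ * R ^ 2 / 16)) := by
  set e := Real.exp (-(N * κ * R ^ 2 / 16)) with he
  have hB : MeasurableSet (Metric.closedBall (-θ) ρ) := Metric.isClosed_closedBall.measurableSet
  have hvol : volume.real (Metric.closedBall (-θ) ρ) = (2 * ρ) ^ d := by
    rw [measureReal_def, Real.volume_pi_closedBall _ H.rho_pos.le, Fintype.card_fin,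
      ENNReal.toReal_ofReal (by have := H.rho_pos; positivity)]
  have i1 : Integrable ((Metric.closedBall (-θ) ρ).indicator fun _ => e) :=
    (integrableOn_const (measure_closedBall_lt_top.ne)).integrable_indicator hB
  calc ∫ h in (Metric.closedBall (0 : Fin d → ℝ) R)ᶜ, localLik ρ Λ N t θ κ₀ h
      ≤ ∫ h in (Metric.closedBall (0 : Fin d → ℝ) R)ᶜ,
          (Metric.closedBall (-θ) ρ).indicator (fun _ => e) h := by
        refine setIntegral_mono_on (H.integrable_localLik hN hθ hκ₀).integrableOn
          i1.integrableOn Metric.isClosed_closedBall.measurableSet.compl fun h hh => ?_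
        refine (H.localLik_le hN hθ hκ₀ h).trans (Set.indicator_le_indicator ?_)
        have h1 : R < ‖h‖ := by simpa using hh
        refine Real.exp_le_exp.2 ?_
        have h2 : d * ‖t - ℓ θ‖ * ‖h‖ ≤ κ / 8 * ‖h‖ ^ 2 := by
          have := H.kappa_pos
          calc d * ‖t - ℓ θ‖ * ‖h‖ ≤ (κ * R / 8) * ‖h‖ := by gcongr
            _ ≤ (κ * ‖h‖ / 8) * ‖h‖ := by gcongr
            _ = _ := by ring
        have h3 : κ * R ^ 2 ≤ κ * ‖h‖ ^ 2 :=
          mul_le_mul_of_nonneg_left (pow_le_pow_left₀ hR.le h1.le 2) H.kappa_pos.le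
        have h4 : 0 ≤ κ * R ^ 2 := mul_nonneg H.kappa_pos.le (sq_nonneg R)
        rw [show -(N * κ * R ^ 2 / 16) = N * (-(κ * R ^ 2 / 16)) by ring]
        refine mul_le_mul_of_nonneg_left ?_ hN.le
        linarith
    _ ≤ ∫ h, (Metric.closedBall (-θ) ρ).indicator (fun _ => e) h :=
        setIntegral_le_integral i1 (Filter.Eventually.of_forall fun h =>
          Set.indicator_nonneg (fun _ _ => (Real.exp_nonneg _)) _)
    _ = _ := by rw [integral_indicator hB, setIntegral_const, hvol, smul_eq_mul]

/-- Deterministic lower bound for the Gaussian mass when `M ≤ K`. -/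
noncomputable def gaussMassMin (d : ℕ) (K : ℝ) : ℝ :=
  ∫ h : Fin d → ℝ, Real.exp (-((K / 2) * ‖h‖ ^ 2))

theorem gaussMassMin_pos (hK : 0 < K) : 0 < gaussMassMin d K :=
  integral_exp_pos (integrable_exp_neg_norm_sq (half_pos hK))

theorem exp_le_one_add_two_mul {x : ℝ} (hx0 : 0 ≤ x) (hx : x ≤ 1 / 2) :
    Real.exp x ≤ 1 + 2 * x := by
  have := (abs_le.1 (Real.abs_exp_sub_one_sub_id_le (x := x) (by rw [abs_of_nonneg hx0]; linarith))).2
  nlinarith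

theorem QuadApprox.posPart_compare (H : QuadApprox ρ κ K C Λ ℓ M) {N R a b e lam : ℝ}
    (hN : 0 < N) (hR : 0 < R) (hlam : 0 ≤ lam) {t θ : Fin d → ℝ} (hθ : ‖θ‖ + R ≤ ρ)
    (ht : d * ‖t - ℓ θ‖ ≤ κ * R / 8) (ha : a = 2 * (N * C * R ^ 3)) (ha1 : a ≤ 1 / 10)
    (hb : b = d * (C * R / κ) / 2) (hb1 : b ≤ 1 / 10)
    (he : e = ((2 * ρ) ^ d / gaussMassMin d K * N ^ ((d : ℝ) / 2) + 2 ^ ((d : ℝ) / 2)) *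
      Real.exp (-(N * κ * R ^ 2 / 16))) (he1 : e ≤ 1 / 10) :
    ∃ κ₀ : ℝ, 0 ≤ κ₀ ∧ 0 < ∫ h, localLik ρ Λ N t θ κ₀ h ∧
    ∫⁻ h, ENNReal.ofReal (localLik ρ Λ N t θ κ₀ h / (∫ h, localLik ρ Λ N t θ κ₀ h) -
        lam / (if ‖θ + h‖ ≤ ρ then gaussMass (M (θ + h)) else 1)) ≤
      gaussHockey volume (quad (M θ)) (gaussMass (M θ)) (N ^ (-(d : ℝ) / 2) * lam) +
        ENNReal.ofReal (10 * (a + b + e)) ∧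
    gaussHockey volume (quad (M θ)) (gaussMass (M θ)) (N ^ (-(d : ℝ) / 2) * lam) ≤
      (∫⁻ h, ENNReal.ofReal (localLik ρ Λ N t θ κ₀ h / (∫ h, localLik ρ Λ N t θ κ₀ h) -
        lam / (if ‖θ + h‖ ≤ ρ then gaussMass (M (θ + h)) else 1))) +
        ENNReal.ofReal (10 * (a + b + e)) := by
  have hκ := H.kappa_pos
  have hθρ : ‖θ‖ ≤ ρ := by linarith
  have hlow := H.lower θ hθρ
  have hv := gaussMass_pos hκ hlow
  have hvm := gaussMassMin_pos (d := d) H.K_pos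
  have hvm' : gaussMassMin d K ≤ gaussMass (M θ) := gaussMass_ge hκ H.K_pos hlow (H.upper θ hθρ)
  have hρ := H.rho_pos
  have hC := H.C_nonneg
  obtain ⟨z, hz, hz'⟩ := exists_mulVec_eq hκ hlow (t - ℓ θ)
  have hzR : ‖z‖ ≤ R / 2 := by
    have : κ * ‖z‖ ≤ κ * (R / 8) := by linarith
    have := le_of_mul_le_mul_left this hκ
    linarith
  set κ₀ := quad (M θ) z / 2 with hκ₀
  have hκ₀0 : 0 ≤ κ₀ := by
    have := hlow z
    have : 0 ≤ κ * ‖z‖ ^ 2 := by positivity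
    rw [hκ₀]; linarith
  set g := fun h => Real.exp (-(N * quad (M θ) (h - z) / 2)) with hg
  set G := N ^ (-(d : ℝ) / 2) * gaussMass (M θ) with hGdef
  have hG : ∫ h, g h = G := integral_exp_quad_shift hN z
  have hG0 : 0 < G := by positivity
  have hgm : Measurable g := by
    have := (continuous_quad (M θ)).measurable
    fun_prop
  have ex : ∀ h, ‖h‖ ≤ R → ∃ x : ℝ, |x| ≤ N * C * R ^ 3 ∧
      localLik ρ Λ N t θ κ₀ h = Real.exp x * g h := by
    intro h hh
    have h1 : ‖θ + h‖ ≤ ρ := (norm_add_le θ h).trans (by linarith)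
    refine ⟨-(N * (Λ (θ + h) - Λ θ - ℓ θ ⬝ᵥ h - quad (M θ) h / 2)), ?_, ?_⟩
    · rw [abs_neg, abs_mul, abs_of_pos hN, mul_assoc]
      refine mul_le_mul_of_nonneg_left ((H.taylor θ h hθρ h1).trans ?_) hN.le
      gcongr
    · rw [localLik, Set.indicator_of_mem (mem_closedBall_neg_iff.2 h1), hg, ← Real.exp_add]
      congr 1
      rw [quad_sub_of_symm (H.symm θ), hz, dotProduct_comm h, sub_dotProduct, hκ₀]
      ring
  have hNCR : 0 ≤ N * C * R ^ 3 := by positivity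
  have ha0 : 0 ≤ a := by rw [ha]; positivity
  have expa : ∀ x : ℝ, x ≤ N * C * R ^ 3 → Real.exp x ≤ 1 + a := fun x hx =>
    (Real.exp_le_exp.2 hx).trans ((exp_le_one_add_two_mul hNCR (by linarith)).trans
      (by rw [ha]))
  have hgL : ∀ h ∈ Metric.closedBall (0 : Fin d → ℝ) R,
      g h ≤ (1 + a) * localLik ρ Λ N t θ κ₀ h := by
    intro h hh
    obtain ⟨x, hx, hx'⟩ := ex h (by simpa using hh)
    rw [hx', ← mul_assoc]
    have : 1 ≤ (1 + a) * Real.exp x := by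
      calc (1 : ℝ) = Real.exp (-x) * Real.exp x := by rw [← Real.exp_add]; simp
        _ ≤ _ := mul_le_mul_of_nonneg_right (expa _ (by linarith [(abs_le.1 hx).1]))
          (Real.exp_nonneg _)
    exact le_mul_of_one_le_left (Real.exp_nonneg _) this
  have hLg : ∀ h ∈ Metric.closedBall (0 : Fin d → ℝ) R,
      localLik ρ Λ N t θ κ₀ h ≤ (1 + a) * g h := by
    intro h hh
    obtain ⟨x, hx, hx'⟩ := ex h (by simpa using hh)
    rw [hx']
    exact mul_le_mul_of_nonneg_right (expa _ (abs_le.1 hx).2) (Real.exp_nonneg _)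
  have hB : MeasurableSet (Metric.closedBall (0 : Fin d → ℝ) R) :=
    Metric.isClosed_closedBall.measurableSet
  have intL := H.integrable_localLik (t := t) hN hθρ hκ₀0
  have intg := integrable_exp_quad_shift hκ hlow hN z
  have hexp0 := Real.exp_pos (-(N * κ * R ^ 2 / 16))
  have he0 : 0 ≤ e := by rw [he]; positivity
  have tailL : ∫ h in (Metric.closedBall (0 : Fin d → ℝ) R)ᶜ, localLik ρ Λ N t θ κ₀ h ≤ e * G := by
    refine (H.setIntegral_localLik_le hN hR hθρ hκ₀0 ht).trans ?_
    have h1 : (2 * ρ) ^ d ≤ (2 * ρ) ^ d / gaussMassMin d K * N ^ ((d : ℝ) / 2) * G := by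
      have : N ^ ((d : ℝ) / 2) * N ^ (-(d : ℝ) / 2) = 1 := by
        rw [← Real.rpow_add hN, neg_div, add_neg_cancel, Real.rpow_zero]
      rw [hGdef, mul_assoc, ← mul_assoc (N ^ ((d : ℝ) / 2)), this, one_mul, div_mul_eq_mul_div,
        le_div_iff₀ hvm]
      gcongr
    rw [he]
    have : 0 ≤ (2 : ℝ) ^ ((d : ℝ) / 2) * Real.exp (-(N * κ * R ^ 2 / 16)) * G := by positivity
    have h2 := mul_le_mul_of_nonneg_right h1 hexp0.le
    linarith
  have tailg : ∫ h in (Metric.closedBall (0 : Fin d → ℝ) R)ᶜ, g h ≤ e * G := by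
    refine (setIntegral_exp_quad_shift_le hκ hlow hN hzR).trans ?_
    refine mul_le_mul_of_nonneg_right ?_ hG0.le
    rw [he]
    refine mul_le_mul_of_nonneg_right ?_ hexp0.le
    have : 0 ≤ (2 * ρ) ^ d / gaussMassMin d K * N ^ ((d : ℝ) / 2) := by positivity
    linarith
  have hF : 0 < ∫ h, localLik ρ Λ N t θ κ₀ h := by
    have := integral_le_of_le_mul_on hB intg intL (localLik_nonneg N t θ κ₀) (by linarith) hgL
      tailg
    rw [hG] at this
    by_contra hcon
    nlinarith
  have hs0 : 0 ≤ C * R / κ := by positivity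
  have hb0 : 0 ≤ b := by rw [hb]; positivity
  have vlip : ∀ h, ‖h‖ ≤ R → ‖θ + h‖ ≤ ρ ∧ (1 - b) * gaussMass (M θ) ≤ gaussMass (M (θ + h)) ∧
      (1 - b) * gaussMass (M (θ + h)) ≤ gaussMass (M θ) := by
    intro h hh
    have h1 : ‖θ + h‖ ≤ ρ := (norm_add_le θ h).trans (by linarith)
    have key : ∀ u : Fin d → ℝ, C * ‖h‖ * ‖u‖ ^ 2 ≤ C * R / κ * (κ * ‖u‖ ^ 2) := by
      intro u
      rw [← mul_assoc, div_mul_cancel₀ _ hκ.ne']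
      gcongr
    refine ⟨h1, ?_, ?_⟩
    · rw [hb]
      refine gaussMass_lipschitz hκ hlow (H.lower _ h1) hs0 fun u => ?_
      have := H.lip θ (θ + h) hθρ h1 u
      rw [add_sub_cancel_left] at this
      linarith [key u]
    · rw [hb]
      refine gaussMass_lipschitz hκ (H.lower _ h1) hlow hs0 fun u => ?_
      have := H.lip (θ + h) θ h1 hθρ u
      rw [sub_add_cancel_left, norm_neg] at this
      linarith [key u]
  have hvpos : ∀ h, 0 < if ‖θ + h‖ ≤ ρ then gaussMass (M (θ + h)) else 1 := by
    intro h
    split_ifs with h1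
    · exact gaussMass_pos hκ (H.lower _ h1)
    · exact one_pos
  have main := lintegral_posPart_div_integral_le (μ := volume)
    (f := localLik ρ Λ N t θ κ₀) (g := g) (s := lam / gaussMass (M θ))
    (r := fun h => lam / (if ‖θ + h‖ ≤ ρ then gaussMass (M (θ + h)) else 1)) hB
    (measurable_localLik H.meas N t θ κ₀) hgm intL intg (localLik_nonneg N t θ κ₀)
    (fun h => Real.exp_nonneg _) (by rw [hG]; exact hG0) ha0 ha1 hb0 hb1 he0 he1 (by positivity)
    hLg hgL (by rw [hG]; exact tailL) (by rw [hG]; exact tailg)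
    (fun h => div_nonneg hlam (hvpos h).le)
    (fun h hh => by
      obtain ⟨h1, h2, h3⟩ := vlip h (by simpa using hh)
      have hp := hvpos h
      rw [if_pos h1] at hp ⊢
      rw [mul_div_assoc', div_le_div_iff₀ hv hp]
      nlinarith [mul_le_mul_of_nonneg_left h3 hlam])
    (fun h hh => by
      obtain ⟨h1, h2, h3⟩ := vlip h (by simpa using hh)
      have hp := hvpos h
      simp only [if_pos h1] at hp ⊢
      rw [mul_div_assoc', div_le_div_iff₀ hp hv]
      nlinarith [mul_le_mul_of_nonneg_left h2 hlam])
  rw [hG, hGdef, hg, lintegral_hockey_shift hN z lam] at main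
  exact ⟨κ₀, hκ₀0, hF, main⟩

end Laplace

section Posterior

variable {d : ℕ} {ρ κ K C : ℝ} {Λ : (Fin d → ℝ) → ℝ} {ℓ : (Fin d → ℝ) → Fin d → ℝ}
  {M : (Fin d → ℝ) → Matrix (Fin d) (Fin d) ℝ}

/-- Likelihood of the parameter `θ` for sample size `N` and empirical mean `t`. -/
noncomputable def lik (Λ : (Fin d → ℝ) → ℝ) (N : ℝ) (t θ : Fin d → ℝ) : ℝ≥0∞ :=
  ENNReal.ofReal (Real.exp (N * (t ⬝ᵥ θ - Λ θ)))

/-- Hockey-stick functional of the posterior density on the ball of radius `ρ`. -/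
noncomputable def postHockey (ρ : ℝ) (Λ : (Fin d → ℝ) → ℝ)
    (M : (Fin d → ℝ) → Matrix (Fin d) (Fin d) ℝ) (N lam : ℝ) (t : Fin d → ℝ) : ℝ≥0∞ :=
  ∫⁻ θ in Metric.closedBall 0 ρ, (lik Λ N t θ / (∫⁻ φ in Metric.closedBall 0 ρ, lik Λ N t φ) -
    ENNReal.ofReal (lam / gaussMass (M θ)))

theorem measurable_lik (hΛ : Measurable Λ) (N : ℝ) (t : Fin d → ℝ) : Measurable (lik Λ N t) := by
  have : Measurable fun h : Fin d → ℝ => t ⬝ᵥ h := by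
    refine Continuous.measurable ?_
    fun_prop
  unfold lik; fun_prop

theorem lik_add_indicator (N : ℝ) (t θ h : Fin d → ℝ) (κ₀ : ℝ) :
    (Metric.closedBall (0 : Fin d → ℝ) ρ).indicator (lik Λ N t) (θ + h) =
      ENNReal.ofReal (Real.exp (N * (t ⬝ᵥ θ - Λ θ + κ₀))) *
        ENNReal.ofReal (localLik ρ Λ N t θ κ₀ h) := by
  rw [← ENNReal.ofReal_mul (Real.exp_nonneg _), localLik]
  by_cases hh : ‖θ + h‖ ≤ ρ
  · rw [Set.indicator_of_mem (by simpa using hh), Set.indicator_of_mem (mem_closedBall_neg_iff.2 hh),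
      lik, ← Real.exp_add, dotProduct_add]
    congr 2
    ring
  · rw [Set.indicator_of_notMem (by simpa using hh),
      Set.indicator_of_notMem (fun hc => hh (mem_closedBall_neg_iff.1 hc))]
    simp

theorem postHockey_le_one (hΛ : Measurable Λ) (N lam : ℝ) (t : Fin d → ℝ) :
    postHockey ρ Λ M N lam t ≤ 1 := by
  refine (lintegral_mono fun θ => tsub_le_self).trans ?_
  simp_rw [div_eq_mul_inv]
  rw [lintegral_mul_const _ (measurable_lik hΛ N t)]
  exact ENNReal.mul_inv_le_one _

theorem gaussHockey_le_one {Q : (Fin d → ℝ) → ℝ}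
    (hint : Integrable fun u => Real.exp (-(Q u / 2)))
    (hv : 0 < ∫ u, Real.exp (-(Q u / 2))) {τ : ℝ} (hτ : 0 ≤ τ) :
    gaussHockey volume Q (∫ u, Real.exp (-(Q u / 2))) τ ≤ 1 := by
  rw [← lintegral_ofReal_div_integral hint (fun _ => Real.exp_nonneg _) hv]
  refine lintegral_mono fun u => ENNReal.ofReal_le_ofReal ?_
  exact div_le_div_of_nonneg_right (by linarith) hv.le

theorem QuadApprox.postHockey_eq (H : QuadApprox ρ κ K C Λ ℓ M) {N : ℝ} (hN : 0 < N)
    {t θ : Fin d → ℝ} (hθ : ‖θ‖ ≤ ρ) {κ₀ lam : ℝ} (hκ₀ : 0 ≤ κ₀) (hlam : 0 ≤ lam)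
    (hF : 0 < ∫ h, localLik ρ Λ N t θ κ₀ h) :
    postHockey ρ Λ M N lam t =
      ∫⁻ h, ENNReal.ofReal (localLik ρ Λ N t θ κ₀ h / (∫ h, localLik ρ Λ N t θ κ₀ h) -
        lam / (if ‖θ + h‖ ≤ ρ then gaussMass (M (θ + h)) else 1)) := by
  have hB : MeasurableSet (Metric.closedBall (0 : Fin d → ℝ) ρ) :=
    Metric.isClosed_closedBall.measurableSet
  set c := Real.exp (N * (t ⬝ᵥ θ - Λ θ + κ₀)) with hc
  have hc0 : 0 < c := Real.exp_pos _
  set F := ∫ h, localLik ρ Λ N t θ κ₀ h with hFdef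
  have hL : ∫⁻ φ in Metric.closedBall (0 : Fin d → ℝ) ρ, lik Λ N t φ =
      ENNReal.ofReal c * ENNReal.ofReal F := by
    rw [← lintegral_indicator hB, ← lintegral_add_left_eq_self _ θ]
    simp_rw [lik_add_indicator N t θ _ κ₀]
    rw [lintegral_const_mul _ (measurable_localLik H.meas N t θ κ₀).ennreal_ofReal, hFdef,
      ofReal_integral_eq_lintegral_ofReal (H.integrable_localLik hN hθ hκ₀)
        (Filter.Eventually.of_forall (localLik_nonneg N t θ κ₀))]
  rw [postHockey, hL, ← lintegral_indicator hB, ← lintegral_add_left_eq_self _ θ]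
  refine lintegral_congr fun h => ?_
  have e1 := lik_add_indicator (ρ := ρ) (Λ := Λ) N t θ h κ₀
  by_cases hh : ‖θ + h‖ ≤ ρ
  · have hm : θ + h ∈ Metric.closedBall (0 : Fin d → ℝ) ρ := by simpa using hh
    rw [Set.indicator_of_mem hm] at e1 ⊢
    have hv := gaussMass_pos H.kappa_pos (H.lower _ hh)
    rw [e1, if_pos hh, ENNReal.ofReal_sub _ (by positivity), ENNReal.ofReal_div_of_pos hF,
      ENNReal.mul_div_mul_left _ _ (by simpa using hc0) ENNReal.ofReal_ne_top]
  · have hm : θ + h ∉ Metric.closedBall (0 : Fin d → ℝ) ρ := by simpa using hh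
    have hm' : h ∉ Metric.closedBall (-θ) ρ := fun hc => hh (mem_closedBall_neg_iff.1 hc)
    rw [Set.indicator_of_notMem hm, if_neg hh, localLik, Set.indicator_of_notMem hm', zero_div,
      ENNReal.ofReal_of_nonpos (by linarith)]

theorem rpow_mul_exp_neg_le {c : ℝ} (hc : 0 < c) (k : ℕ) :
    ∃ A : ℝ, 0 ≤ A ∧ ∀ y : ℝ, 0 ≤ y → y ^ k * Real.exp (-(c * y)) ≤ A := by
  refine ⟨(k.factorial : ℝ) / c ^ k, by positivity, fun y hy => ?_⟩
  have := Real.pow_div_factorial_le_exp (c * y) (by positivity) k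
  rw [div_le_iff₀ (by positivity), mul_pow] at this
  rw [le_div_iff₀ (by positivity), Real.exp_neg]
  have h2 := Real.exp_pos (c * y)
  calc y ^ k * (Real.exp (c * y))⁻¹ * c ^ k = (c ^ k * y ^ k) * (Real.exp (c * y))⁻¹ := by ring
    _ ≤ (Real.exp (c * y) * k.factorial) * (Real.exp (c * y))⁻¹ := by gcongr
    _ = _ := by field_simp

/-- Localisation radius. -/
noncomputable def locRadius (N : ℝ) : ℝ := N ^ (-(4 : ℝ) / 9)

theorem locRadius_pos {N : ℝ} (hN : 0 < N) : 0 < locRadius N := Real.rpow_pos_of_pos hN _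

theorem mul_locRadius_cube {N : ℝ} (hN : 0 < N) : N * locRadius N ^ 3 = N ^ (-(1 : ℝ) / 3) := by
  rw [locRadius, ← Real.rpow_natCast, ← Real.rpow_mul hN.le]
  nth_rewrite 1 [← Real.rpow_one N]
  rw [← Real.rpow_add hN]; norm_num

theorem mul_locRadius_sq {N : ℝ} (hN : 0 < N) : N * locRadius N ^ 2 = N ^ ((1 : ℝ) / 9) := by
  rw [locRadius, ← Real.rpow_natCast, ← Real.rpow_mul hN.le]
  nth_rewrite 1 [← Real.rpow_one N]
  rw [← Real.rpow_add hN]; norm_num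

theorem locRadius_le {N : ℝ} (hN : 1 ≤ N) : locRadius N ≤ N ^ (-(1 : ℝ) / 3) :=
  Real.rpow_le_rpow_of_exponent_le hN (by norm_num)

theorem exists_rpow_mul_exp_locRadius_le {c : ℝ} (hc : 0 < c) (d : ℕ) :
    ∃ A : ℝ, 0 ≤ A ∧ ∀ N : ℝ, 1 ≤ N →
      N ^ ((d : ℝ) / 2) * Real.exp (-(c * (N * locRadius N ^ 2))) ≤ A * N ^ (-(1 : ℝ) / 3) := by
  obtain ⟨A, hA, h⟩ := rpow_mul_exp_neg_le hc (9 * d + 3)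
  refine ⟨A, hA, fun N hN => ?_⟩
  have hN0 : 0 < N := by linarith
  have h1 := h (N ^ ((1 : ℝ) / 9)) (by positivity)
  rw [mul_locRadius_sq hN0]
  have h2 : N ^ ((d : ℝ) / 2) ≤ (N ^ ((1 : ℝ) / 9)) ^ (9 * d + 3) * N ^ (-(1 : ℝ) / 3) := by
    rw [← Real.rpow_natCast, ← Real.rpow_mul hN0.le, ← Real.rpow_add hN0]
    refine Real.rpow_le_rpow_of_exponent_le hN ?_
    push_cast
    have : (0 : ℝ) ≤ d := Nat.cast_nonneg d
    linarith
  calc _ ≤ ((N ^ ((1 : ℝ) / 9)) ^ (9 * d + 3) * N ^ (-(1 : ℝ) / 3)) *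
        Real.exp (-(c * N ^ ((1 : ℝ) / 9))) := by gcongr
    _ = ((N ^ ((1 : ℝ) / 9)) ^ (9 * d + 3) * Real.exp (-(c * N ^ ((1 : ℝ) / 9)))) *
        N ^ (-(1 : ℝ) / 3) := by ring
    _ ≤ _ := by gcongr

theorem QuadApprox.postHockey_approx (H : QuadApprox ρ κ K C Λ ℓ M) :
    ∃ A : ℝ, 0 ≤ A ∧ ∀ N : ℝ, 1 ≤ N → ∀ lam : ℝ, 0 ≤ lam → ∀ t θ : Fin d → ℝ,
      ‖θ‖ + locRadius N ≤ ρ → d * ‖t - ℓ θ‖ ≤ κ * locRadius N / 8 →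
      postHockey ρ Λ M N lam t ≤
        gaussHockey volume (quad (M θ)) (gaussMass (M θ)) (N ^ (-(d : ℝ) / 2) * lam) +
          ENNReal.ofReal (A * N ^ (-(1 : ℝ) / 3)) ∧
      gaussHockey volume (quad (M θ)) (gaussMass (M θ)) (N ^ (-(d : ℝ) / 2) * lam) ≤
        postHockey ρ Λ M N lam t + ENNReal.ofReal (A * N ^ (-(1 : ℝ) / 3)) := by
  have hκ := H.kappa_pos
  have hρ := H.rho_pos
  have hC := H.C_nonneg
  have hvm := gaussMassMin_pos (d := d) H.K_pos
  obtain ⟨A₀, hA₀, hA₀'⟩ := exists_rpow_mul_exp_locRadius_le (c := κ / 16) (by positivity) d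
  set D := (2 * ρ) ^ d / gaussMassMin d K with hD
  have hD0 : 0 ≤ D := by positivity
  set A₃ := (D + 2 ^ ((d : ℝ) / 2)) * A₀ with hA₃
  have hA₃0 : 0 ≤ A₃ := by positivity
  set A₂ := d * C / κ / 2 with hA₂
  have hA₂0 : 0 ≤ A₂ := by positivity
  refine ⟨10 * (2 * C + A₂ + A₃), by positivity, fun N hN lam hlam t θ hθ ht => ?_⟩
  have hN0 : 0 < N := by linarith
  have hR := locRadius_pos hN0
  have hθρ : ‖θ‖ ≤ ρ := by linarith
  have hlow := H.lower θ hθρ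
  set w := N ^ (-(1 : ℝ) / 3) with hw
  have hw0 : 0 < w := by positivity
  rcases le_total 1 (10 * (2 * C + A₂ + A₃) * w) with hbig | hsmall
  · have h1 : (1 : ℝ≥0∞) ≤ ENNReal.ofReal (10 * (2 * C + A₂ + A₃) * w) :=
      ENNReal.one_le_ofReal.2 hbig
    exact ⟨((postHockey_le_one H.meas N lam t).trans h1).trans le_add_self,
      ((gaussHockey_le_one (integrable_exp_quad hκ hlow) (gaussMass_pos hκ hlow)
        (by positivity)).trans h1).trans le_add_self⟩
  · set a := 2 * (N * C * locRadius N ^ 3) with ha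
    set b := d * (C * locRadius N / κ) / 2 with hb
    set e := (D * N ^ ((d : ℝ) / 2) + 2 ^ ((d : ℝ) / 2)) *
      Real.exp (-(N * κ * locRadius N ^ 2 / 16)) with he
    have ha' : a = 2 * C * w := by rw [ha, hw, ← mul_locRadius_cube hN0]; ring
    have hb' : b ≤ A₂ * w := by
      have : b = A₂ * locRadius N := by rw [hb, hA₂]; ring
      rw [this]
      exact mul_le_mul_of_nonneg_left (locRadius_le hN) hA₂0
    have he' : e ≤ A₃ * w := by
      have h1 : (1 : ℝ) ≤ N ^ ((d : ℝ) / 2) := Real.one_le_rpow hN (by positivity)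
      have h2 := hA₀' N hN
      rw [show κ / 16 * (N * locRadius N ^ 2) = N * κ * locRadius N ^ 2 / 16 by ring] at h2
      have h3 := Real.exp_pos (-(N * κ * locRadius N ^ 2 / 16))
      calc e ≤ (D * N ^ ((d : ℝ) / 2) + 2 ^ ((d : ℝ) / 2) * N ^ ((d : ℝ) / 2)) *
            Real.exp (-(N * κ * locRadius N ^ 2 / 16)) := by
              rw [he]; gcongr; exact le_mul_of_one_le_right (by positivity) h1
        _ = (D + 2 ^ ((d : ℝ) / 2)) * (N ^ ((d : ℝ) / 2) *
            Real.exp (-(N * κ * locRadius N ^ 2 / 16))) := by ring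
        _ ≤ (D + 2 ^ ((d : ℝ) / 2)) * (A₀ * w) := by gcongr
        _ = _ := by rw [hA₃]; ring
    have p1 : 0 ≤ 2 * C * w := by positivity
    have p2 : 0 ≤ A₂ * w := by positivity
    have p3 : 0 ≤ A₃ * w := by positivity
    obtain ⟨κ₀, hκ₀, hF, m1, m2⟩ := H.posPart_compare hN0 hR hlam hθ ht ha (by linarith) hb
      (by linarith) he (by linarith)
    rw [← H.postHockey_eq hN0 hθρ hκ₀ hlam hF] at m1 m2
    have hle : ENNReal.ofReal (10 * (a + b + e)) ≤
        ENNReal.ofReal (10 * (2 * C + A₂ + A₃) * w) := ENNReal.ofReal_le_ofReal (by linarith)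
    exact ⟨m1.trans (by gcongr), m2.trans (by gcongr)⟩

end Posterior

section LogMgf

variable {X : Type*} [MeasurableSpace X]

theorem abs_exp_sub_quadratic_le (x : ℝ) :
    |Real.exp x - 1 - x - x ^ 2 / 2| ≤ |x| ^ 3 * Real.exp |x| := by
  have := Complex.norm_exp_sub_sum_le_norm_mul_exp (x : ℂ) 3
  simp only [Finset.sum_range_succ, Finset.sum_range_zero, Nat.factorial] at this
  rw [← Complex.ofReal_exp] at this
  norm_cast at this
  rw [Real.norm_eq_abs, Real.norm_eq_abs] at this
  refine le_trans (le_of_eq ?_) this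
  congr 1
  push_cast
  ring

theorem abs_log_one_add_sub_le {x : ℝ} (hx : |x| ≤ 1 / 2) : |Real.log (1 + x) - x| ≤ 2 * x ^ 2 := by
  have := Real.abs_log_sub_add_sum_range_le (x := -x) (by rw [abs_neg]; linarith) 1
  simp only [Finset.sum_range_one, sub_neg_eq_add, abs_neg] at this
  norm_num at this
  rw [show Real.log (1 + x) - x = -x + Real.log (1 + x) by ring]
  refine this.trans ?_
  rw [div_le_iff₀ (by linarith)]
  nlinarith [sq_nonneg x, abs_nonneg x]

/-- Constant comparing cubic and quadratic moments to an exponential one. -/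
noncomputable def momentConst (b : ℝ) : ℝ := 6 / b ^ 3 + 2 / b ^ 2

theorem momentConst_pos {b : ℝ} (hb : 0 < b) : 0 < momentConst b := by
  unfold momentConst; positivity

theorem pow_two_le_momentConst {b y : ℝ} (hb : 0 < b) (hy : 0 ≤ y) :
    y ^ 2 ≤ momentConst b * Real.exp (2 * b * y) := by
  have h1 := Real.pow_div_factorial_le_exp (b * y) (by positivity) 2
  have h2 : Real.exp (b * y) ≤ Real.exp (2 * b * y) := Real.exp_le_exp.2 (by nlinarith)
  have h3 : y ^ 2 = 2 / b ^ 2 * ((b * y) ^ 2 / (Nat.factorial 2 : ℕ)) := by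
    simp only [Nat.factorial]; push_cast; field_simp
  rw [h3]
  refine mul_le_mul ?_ (h1.trans h2) (by positivity) (momentConst_pos hb).le
  unfold momentConst
  have : 0 ≤ 6 / b ^ 3 := by positivity
  linarith

theorem pow_three_mul_exp_le_momentConst {b y : ℝ} (hb : 0 < b) (hy : 0 ≤ y) :
    y ^ 3 * Real.exp (b * y) ≤ momentConst b * Real.exp (2 * b * y) := by
  have h1 := Real.pow_div_factorial_le_exp (b * y) (by positivity) 3
  have h3 : y ^ 3 = 6 / b ^ 3 * ((b * y) ^ 3 / (Nat.factorial 3 : ℕ)) := by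
    simp only [Nat.factorial]; push_cast; field_simp
  rw [h3, show 2 * b * y = b * y + b * y by ring, Real.exp_add, mul_assoc]
  refine mul_le_mul ?_ ?_ (by positivity) (momentConst_pos hb).le
  · unfold momentConst
    have : 0 ≤ 2 / b ^ 2 := by positivity
    linarith
  · gcongr

variable {P : Measure X} {W Y : X → ℝ} {b B s : ℝ}

theorem integral_sq_le_of_exp_moment (hW : Measurable W) (hb : 0 < b)
    (hY : ∀ x, 0 ≤ Y x) (hWY : ∀ x, |W x| ≤ s * Y x)
    (hint : Integrable (fun x => Real.exp (2 * b * Y x)) P)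
    (hB : ∫ x, Real.exp (2 * b * Y x) ∂P ≤ B) :
    Integrable (fun x => W x ^ 2) P ∧ ∫ x, W x ^ 2 ∂P ≤ s ^ 2 * (momentConst b * B) := by
  have i1 := (hint.const_mul (momentConst b)).const_mul (s ^ 2)
  have h1 : ∀ x, W x ^ 2 ≤ s ^ 2 * (momentConst b * Real.exp (2 * b * Y x)) := by
    intro x
    rw [← sq_abs]
    refine (pow_le_pow_left₀ (abs_nonneg _) (hWY x) 2).trans ?_
    rw [mul_pow]
    exact mul_le_mul_of_nonneg_left (pow_two_le_momentConst hb (hY x)) (sq_nonneg s)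
  have i2 : Integrable (fun x => W x ^ 2) P := by
    refine i1.mono' (by fun_prop) (Filter.Eventually.of_forall fun x => ?_)
    rw [Real.norm_of_nonneg (sq_nonneg _)]
    exact h1 x
  refine ⟨i2, (integral_mono i2 i1 h1).trans ?_⟩
  rw [integral_const_mul, integral_const_mul]
  have := (momentConst_pos hb).le
  gcongr

theorem abs_log_mgf_sub_le [IsProbabilityMeasure P] (hW : Measurable W) (hb : 0 < b) (hs : 0 ≤ s) (hsb : s ≤ b)
    (hs1 : s ≤ 1) (hY : ∀ x, 0 ≤ Y x) (hWY : ∀ x, |W x| ≤ s * Y x)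
    (hint : Integrable (fun x => Real.exp (2 * b * Y x)) P)
    (hB : ∫ x, Real.exp (2 * b * Y x) ∂P ≤ B) (hsB : 3 * (momentConst b * B) * s ^ 2 ≤ 1)
    (hWi : Integrable W P) (hW0 : ∫ x, W x ∂P = 0) :
    |Real.log (∫ x, Real.exp (W x) ∂P) - (∫ x, W x ^ 2 ∂P) / 2| ≤
      (momentConst b * B + 5 * (momentConst b * B) ^ 2) * s ^ 3 := by
  obtain ⟨iW2, hW2⟩ := integral_sq_le_of_exp_moment hW hb hY hWY hint hB
  have hc := momentConst_pos hb
  have hpt : ∀ x, |Real.exp (W x) - 1 - W x - W x ^ 2 / 2| ≤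
      s ^ 3 * (momentConst b * Real.exp (2 * b * Y x)) := by
    intro x
    refine (abs_exp_sub_quadratic_le _).trans ?_
    have h1 := hWY x
    have h0 := hY x
    have h2 : |W x| ≤ b * Y x := h1.trans (mul_le_mul_of_nonneg_right hsb (hY x))
    calc |W x| ^ 3 * Real.exp |W x| ≤ (s * Y x) ^ 3 * Real.exp (b * Y x) := by gcongr
      _ = s ^ 3 * (Y x ^ 3 * Real.exp (b * Y x)) := by ring
      _ ≤ _ := mul_le_mul_of_nonneg_left (pow_three_mul_exp_le_momentConst hb (hY x))
          (by positivity)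
  have i1 := (hint.const_mul (momentConst b)).const_mul (s ^ 3)
  have i3 : Integrable (fun x => Real.exp (W x) - 1 - W x - W x ^ 2 / 2) P :=
    i1.mono' (by fun_prop) (Filter.Eventually.of_forall fun x => by
      rw [Real.norm_eq_abs]; exact hpt x)
  have i4 : Integrable (fun x => W x + W x ^ 2 / 2) P := hWi.add (iW2.div_const 2)
  have i5 : Integrable (fun x => 1 + (W x + W x ^ 2 / 2)) P := (integrable_const 1).add i4
  have e1 : ∫ x, Real.exp (W x) ∂P = 1 + (∫ x, W x ^ 2 ∂P) / 2 +
      ∫ x, (Real.exp (W x) - 1 - W x - W x ^ 2 / 2) ∂P := by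
    have : ∫ x, Real.exp (W x) ∂P = ∫ x, ((1 + (W x + W x ^ 2 / 2)) +
        (Real.exp (W x) - 1 - W x - W x ^ 2 / 2)) ∂P := by
      congr 1; ext x; ring
    rw [this, integral_add i5 i3, integral_add (integrable_const 1) i4,
      integral_add hWi (iW2.div_const 2), integral_div, hW0]
    simp
  set m := ∫ x, W x ^ 2 ∂P with hm
  have hm0 : 0 ≤ m := integral_nonneg fun x => sq_nonneg _
  set q := ∫ x, (Real.exp (W x) - 1 - W x - W x ^ 2 / 2) ∂P with hq
  have hqb : |q| ≤ s ^ 3 * (momentConst b * B) := by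
    refine (norm_integral_le_of_norm_le i1 (Filter.Eventually.of_forall fun x => by
      rw [Real.norm_eq_abs]; exact hpt x)).trans ?_
    rw [integral_const_mul, integral_const_mul]
    gcongr
  set D := momentConst b * B with hD
  have hD0 : 0 ≤ D := by
    have : 0 ≤ B := (integral_nonneg fun x => (Real.exp_nonneg _)).trans hB
    positivity
  have hs3 : s ^ 3 * D ≤ s ^ 2 * D := by
    refine mul_le_mul_of_nonneg_right ?_ hD0
    calc s ^ 3 = s ^ 2 * s := by ring
      _ ≤ s ^ 2 * 1 := by gcongr
      _ = _ := mul_one _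
  have hx : |m / 2 + q| ≤ 3 / 2 * (s ^ 2 * D) := by
    refine (abs_add_le _ _).trans ?_
    rw [abs_of_nonneg (by positivity)]
    linarith
  have hx2 : |m / 2 + q| ≤ 1 / 2 := by nlinarith
  have h5 := abs_log_one_add_sub_le hx2
  rw [e1, add_assoc]
  have h6 : (m / 2 + q) ^ 2 ≤ (3 / 2 * (s ^ 2 * D)) ^ 2 := by
    rw [← sq_abs (m / 2 + q)]
    exact pow_le_pow_left₀ (abs_nonneg _) hx 2
  have h7 : (s ^ 2 * D) ^ 2 ≤ D ^ 2 * s ^ 3 := by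
    calc (s ^ 2 * D) ^ 2 = D ^ 2 * (s ^ 3 * s) := by ring
      _ ≤ D ^ 2 * (s ^ 3 * 1) := by gcongr
      _ = _ := by ring
  calc |Real.log (1 + (m / 2 + q)) - m / 2| = |(Real.log (1 + (m / 2 + q)) - (m / 2 + q)) + q| := by
        congr 1; ring
    _ ≤ 2 * (m / 2 + q) ^ 2 + s ^ 3 * D := (abs_add_le _ _).trans (add_le_add h5 hqb)
    _ ≤ _ := by nlinarith [mul_nonneg (sq_nonneg D) (pow_nonneg hs 3)]

end LogMgf

section SecondDifference

variable {d : ℕ} {r C : ℝ} {Λ : (Fin d → ℝ) → ℝ} {ℓ : (Fin d → ℝ) → Fin d → ℝ}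
  {M : (Fin d → ℝ) → Matrix (Fin d) (Fin d) ℝ}

theorem quad_add_add_quad_sub (A : Matrix (Fin d) (Fin d) ℝ) (x y : Fin d → ℝ) :
    quad A (x + y) + quad A (x - y) = 2 * quad A x + 2 * quad A y := by
  simp only [quad, Matrix.mulVec_sub, Matrix.mulVec_add, dotProduct_sub, sub_dotProduct,
    dotProduct_add, add_dotProduct]
  ring

theorem quad_lipschitz_of_taylor (hC : 0 ≤ C)
    (taylor : ∀ θ h, ‖θ‖ ≤ r → ‖θ + h‖ ≤ r →
      |Λ (θ + h) - Λ θ - ℓ θ ⬝ᵥ h - quad (M θ) h / 2| ≤ C * ‖h‖ ^ 3)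
    {θ θ' : Fin d → ℝ} (hθ : ‖θ‖ ≤ r / 3) (hθ' : ‖θ'‖ ≤ r / 3) (h : Fin d → ℝ) :
    quad (M θ') h ≤ quad (M θ) h + 20 * C * ‖θ' - θ‖ * ‖h‖ ^ 2 := by
  have hr : 0 ≤ r := by linarith [norm_nonneg θ]
  have key : ∀ u : Fin d → ℝ, ‖u‖ = ‖θ' - θ‖ →
      quad (M θ') u ≤ quad (M θ) u + 20 * C * ‖θ' - θ‖ ^ 3 := by
    intro u hu
    set v := θ' - θ with hv
    have hv1 : ‖v‖ ≤ 2 * r / 3 := (norm_sub_le _ _).trans (by linarith)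
    have n1 : ‖θ' + u‖ ≤ r := (norm_add_le _ _).trans (by linarith)
    have n2 : ‖θ' + -u‖ ≤ r := (norm_add_le _ _).trans (by rw [norm_neg]; linarith)
    have a1 : θ + (v + u) = θ' + u := by rw [hv]; abel
    have a2 : θ + (v - u) = θ' + -u := by rw [hv]; abel
    have a3 : θ + v = θ' := by rw [hv]; abel
    have t1 := taylor θ' u (by linarith) n1
    have t2 := taylor θ' (-u) (by linarith) n2
    have t3 := taylor θ (v + u) (by linarith) (by rw [a1]; exact n1)
    have t4 := taylor θ (v - u) (by linarith) (by rw [a2]; exact n2)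
    have t5 := taylor θ v (by linarith) (by rw [a3]; linarith)
    rw [a1, dotProduct_add] at t3
    rw [a2, dotProduct_sub] at t4
    rw [a3] at t5
    rw [quad_neg, norm_neg, dotProduct_neg] at t2
    have q := quad_add_add_quad_sub (M θ) v u
    have c1 : C * ‖v + u‖ ^ 3 ≤ C * (8 * ‖v‖ ^ 3) := by
      have : ‖v + u‖ ≤ 2 * ‖v‖ := (norm_add_le _ _).trans (by linarith)
      calc C * ‖v + u‖ ^ 3 ≤ C * (2 * ‖v‖) ^ 3 := by gcongr
        _ = _ := by ring
    have c2 : C * ‖v - u‖ ^ 3 ≤ C * (8 * ‖v‖ ^ 3) := by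
      have : ‖v - u‖ ≤ 2 * ‖v‖ := (norm_sub_le _ _).trans (by linarith)
      calc C * ‖v - u‖ ^ 3 ≤ C * (2 * ‖v‖) ^ 3 := by gcongr
        _ = _ := by ring
    rw [hu] at t1 t2
    rw [abs_le] at t1 t2 t3 t4 t5
    linarith [t1.1, t1.2, t2.1, t2.2, t3.1, t3.2, t4.1, t4.2, t5.1, t5.2]
  rcases eq_or_ne h 0 with rfl | hh
  · simp [quad]
  rcases eq_or_ne θ' θ with rfl | hne
  · simp
  have hh0 : 0 < ‖h‖ := norm_pos_iff.2 hh
  have hv0 : 0 < ‖θ' - θ‖ := norm_pos_iff.2 (sub_ne_zero.2 hne)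
  have := key ((‖θ' - θ‖ / ‖h‖) • h) (by
    rw [norm_smul, Real.norm_of_nonneg (by positivity), div_mul_cancel₀ _ hh0.ne'])
  rw [quad_smul, quad_smul] at this
  have h2 := mul_le_mul_of_nonneg_left this (show 0 ≤ (‖h‖ / ‖θ' - θ‖) ^ 2 by positivity)
  have e1 : (‖h‖ / ‖θ' - θ‖) ^ 2 * (‖θ' - θ‖ / ‖h‖) ^ 2 = 1 := by field_simp
  rw [mul_add, ← mul_assoc, ← mul_assoc, e1, one_mul, one_mul] at h2
  refine h2.trans (le_of_eq ?_)
  field_simp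

theorem exists_quad_lower_bound (A : Matrix (Fin d) (Fin d) ℝ) (hA : ∀ h, h ≠ 0 → 0 < quad A h) :
    ∃ κ : ℝ, 0 < κ ∧ ∀ h, κ * ‖h‖ ^ 2 ≤ quad A h := by
  rcases (Metric.sphere (0 : Fin d → ℝ) 1).eq_empty_or_nonempty with he | hne
  · refine ⟨1, one_pos, fun h => ?_⟩
    have : h = 0 := by
      by_contra hh
      have : (‖h‖⁻¹ • h) ∈ Metric.sphere (0 : Fin d → ℝ) 1 := by
        rw [mem_sphere_zero_iff_norm, norm_smul, norm_inv, norm_norm,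
          inv_mul_cancel₀ (norm_ne_zero_iff.2 hh)]
      rw [he] at this
      exact this
    simp [this, quad]
  obtain ⟨u, hu, hmin⟩ := (isCompact_sphere (0 : Fin d → ℝ) 1).exists_isMinOn hne
    (continuous_quad A).continuousOn
  refine ⟨quad A u, hA u (fun h => by simp [h] at hu), fun h => ?_⟩
  rcases eq_or_ne h 0 with rfl | hh
  · simp [quad]
  have hn : ‖h‖ ≠ 0 := norm_ne_zero_iff.2 hh
  have h1 : quad A u ≤ quad A (‖h‖⁻¹ • h) := hmin (by
    rw [mem_sphere_zero_iff_norm, norm_smul, norm_inv, norm_norm, inv_mul_cancel₀ hn])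
  rw [quad_smul, inv_pow] at h1
  have := mul_le_mul_of_nonneg_right h1 (sq_nonneg ‖h‖)
  rwa [mul_comm _ (quad A h), mul_assoc, inv_mul_cancel₀ (pow_ne_zero 2 hn), mul_one] at this

end SecondDifference

section Tilting

variable {X : Type*} [MeasurableSpace X] {d : ℕ}

/-- Cumulant generating function of the statistic `T`. -/
noncomputable def logMgf (P : Measure X) (T : X → Fin d → ℝ) (η : Fin d → ℝ) : ℝ :=
  Real.log (∫ x, Real.exp (η ⬝ᵥ T x) ∂P)

/-- Mean of `T` under the exponential tilting of `P`. -/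
noncomputable def tiltMean (P : Measure X) (T : X → Fin d → ℝ) (η : Fin d → ℝ) : Fin d → ℝ :=
  fun i => ∫ x, T x i ∂(P.tilted fun x => η ⬝ᵥ T x)

/-- Covariance of `T` under the exponential tilting of `P`. -/
noncomputable def tiltCov (P : Measure X) (T : X → Fin d → ℝ) (η : Fin d → ℝ) :
    Matrix (Fin d) (Fin d) ℝ :=
  Matrix.of fun i j => ∫ x, (T x i - tiltMean P T η i) * (T x j - tiltMean P T η j)
    ∂(P.tilted fun x => η ⬝ᵥ T x)

variable {P : Measure X} {T : X → Fin d → ℝ} {a : ℝ}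

theorem measurable_dotProduct (hT : Measurable T) (η : Fin d → ℝ) :
    Measurable fun x => η ⬝ᵥ T x := by
  unfold dotProduct
  exact Finset.measurable_sum _ fun i _ => ((measurable_pi_apply i).comp hT).const_mul _

theorem integrable_exp_dotProduct (hT : Measurable T)
    (hint : Integrable (fun x => Real.exp (a * ‖T x‖)) P) {η : Fin d → ℝ} (hη : d * ‖η‖ ≤ a) :
    Integrable (fun x => Real.exp (η ⬝ᵥ T x)) P := by
  refine hint.mono' (measurable_dotProduct hT η).exp.aestronglyMeasurable
    (Filter.Eventually.of_forall fun x => ?_)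
  rw [Real.norm_of_nonneg (Real.exp_nonneg _), Real.exp_le_exp]
  refine (le_abs_self _).trans ((abs_dotProduct_le _ _).trans ?_)
  exact mul_le_mul_of_nonneg_right hη (norm_nonneg _)

theorem exists_tilted_exp_moment_bound [IsProbabilityMeasure P] (hT : Measurable T) (ha : 0 < a)
    (hint : Integrable (fun x => Real.exp (a * ‖T x‖)) P) :
    ∃ B : ℝ, 0 ≤ B ∧ ∀ η : Fin d → ℝ, d * ‖η‖ ≤ a / 2 →
      Integrable (fun x => Real.exp (a / 2 * ‖T x‖)) (P.tilted fun x => η ⬝ᵥ T x) ∧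
      ∫ x, Real.exp (a / 2 * ‖T x‖) ∂(P.tilted fun x => η ⬝ᵥ T x) ≤ B := by
  have hlow : Integrable (fun x => Real.exp (-(a / 2 * ‖T x‖))) P := by
    refine (integrable_const (1 : ℝ)).mono' (by fun_prop) (Filter.Eventually.of_forall fun x => ?_)
    rw [Real.norm_of_nonneg (Real.exp_nonneg _), Real.exp_le_one_iff]
    have := norm_nonneg (T x)
    nlinarith
  have hpos := integral_exp_pos hlow
  refine ⟨(∫ x, Real.exp (-(a / 2 * ‖T x‖)) ∂P)⁻¹ * ∫ x, Real.exp (a * ‖T x‖) ∂P,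
    mul_nonneg (inv_nonneg.2 hpos.le) (integral_nonneg fun _ => Real.exp_nonneg _), fun η hη => ?_⟩
  have hη2 : ∀ x, |η ⬝ᵥ T x| ≤ a / 2 * ‖T x‖ := fun x =>
    (abs_dotProduct_le _ _).trans (mul_le_mul_of_nonneg_right hη (norm_nonneg _))
  have i0 := integrable_exp_dotProduct hT hint (hη.trans (by linarith : a / 2 ≤ a))
  have hle : ∫ x, Real.exp (-(a / 2 * ‖T x‖)) ∂P ≤ ∫ x, Real.exp (η ⬝ᵥ T x) ∂P :=
    integral_mono hlow i0 fun x => Real.exp_le_exp.2 (neg_le_of_abs_le (hη2 x))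
  have hpt : ∀ x, Real.exp (η ⬝ᵥ T x) * Real.exp (a / 2 * ‖T x‖) ≤ Real.exp (a * ‖T x‖) := by
    intro x
    rw [← Real.exp_add, Real.exp_le_exp]
    have := le_of_abs_le (hη2 x)
    linarith
  have i1 : Integrable (fun x => Real.exp (η ⬝ᵥ T x) * Real.exp (a / 2 * ‖T x‖)) P := by
    refine hint.mono' ((measurable_dotProduct hT η).exp.mul (by fun_prop)).aestronglyMeasurable
      (Filter.Eventually.of_forall fun x => ?_)
    rw [Real.norm_of_nonneg (by positivity)]
    exact hpt x
  constructor
  · exact (integrable_tilted_iff i0 _).2 i1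
  · rw [integral_tilted]
    simp only [smul_eq_mul]
    calc ∫ x, Real.exp (η ⬝ᵥ T x) / (∫ x, Real.exp (η ⬝ᵥ T x) ∂P) * Real.exp (a / 2 * ‖T x‖) ∂P
        = (∫ x, Real.exp (η ⬝ᵥ T x) ∂P)⁻¹ *
          ∫ x, Real.exp (η ⬝ᵥ T x) * Real.exp (a / 2 * ‖T x‖) ∂P := by
          rw [← integral_const_mul]
          congr 1; ext x; ring
      _ ≤ _ := by
          exact mul_le_mul (inv_anti₀ hpos hle) (integral_mono i1 hint hpt)
            (integral_nonneg fun _ => by positivity) (inv_nonneg.2 hpos.le)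

theorem quad_tiltCov {η : Fin d → ℝ}
    (hi : ∀ i j, Integrable (fun x => (T x i - tiltMean P T η i) * (T x j - tiltMean P T η j))
      (P.tilted fun x => η ⬝ᵥ T x)) (h : Fin d → ℝ) :
    quad (tiltCov P T η) h =
      ∫ x, (h ⬝ᵥ (T x - tiltMean P T η)) ^ 2 ∂(P.tilted fun x => η ⬝ᵥ T x) := by
  have e : ∀ x, (h ⬝ᵥ (T x - tiltMean P T η)) ^ 2 = ∑ i, ∑ j, h i * h j *
      ((T x i - tiltMean P T η i) * (T x j - tiltMean P T η j)) := by
    intro x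
    rw [sq, dotProduct, Finset.sum_mul_sum]
    refine Finset.sum_congr rfl fun i _ => Finset.sum_congr rfl fun j _ => ?_
    simp only [Pi.sub_apply]; ring
  simp_rw [e]
  rw [integral_finsetSum _ fun i _ => integrable_finsetSum _ fun j _ => (hi i j).const_mul _]
  rw [quad, dotProduct]
  refine Finset.sum_congr rfl fun i _ => ?_
  rw [Matrix.mulVec, dotProduct, integral_finsetSum _ fun j _ => (hi i j).const_mul _, Finset.mul_sum]
  refine Finset.sum_congr rfl fun j _ => ?_
  rw [integral_const_mul, tiltCov, Matrix.of_apply]; ring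

theorem measurable_logMgf [SFinite P] (hT : Measurable T) : Measurable (logMgf P T) := by
  refine Real.measurable_log.comp (StronglyMeasurable.measurable ?_)
  refine StronglyMeasurable.integral_prod_right
    (f := fun (η : Fin d → ℝ) x => Real.exp (η ⬝ᵥ T x)) (Measurable.stronglyMeasurable ?_)
  refine Real.measurable_exp.comp ?_
  unfold dotProduct
  refine Finset.measurable_sum _ fun i _ => Measurable.mul ?_ ?_
  · exact (measurable_pi_apply i).comp measurable_fst
  · exact (measurable_pi_apply i).comp (hT.comp measurable_snd)

theorem tiltCov_isSymm (P : Measure X) (T : X → Fin d → ℝ) (η : Fin d → ℝ) :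
    (tiltCov P T η).IsSymm := by
  ext i j
  simp only [tiltCov, Matrix.transpose_apply, Matrix.of_apply]
  congr 1; ext x; ring

theorem exists_logMgf_taylor [IsProbabilityMeasure P] (hT : Measurable T) (ha : 0 < a)
    (hint : Integrable (fun x => Real.exp (a * ‖T x‖)) P) :
    ∃ r C D : ℝ, 0 < r ∧ 0 ≤ C ∧ d * r ≤ a ∧
      (∀ η, ‖η‖ ≤ r → ∀ h, Integrable (fun x => (h ⬝ᵥ (T x - tiltMean P T η)) ^ 2)
        (P.tilted fun x => η ⬝ᵥ T x) ∧ quad (tiltCov P T η) h =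
        ∫ x, (h ⬝ᵥ (T x - tiltMean P T η)) ^ 2 ∂(P.tilted fun x => η ⬝ᵥ T x)) ∧
      (∀ η, ‖η‖ ≤ r → ∀ h, quad (tiltCov P T η) h ≤ D * ‖h‖ ^ 2) ∧
      ∀ η h, ‖η‖ ≤ r → ‖η + h‖ ≤ r →
        |logMgf P T (η + h) - logMgf P T η - tiltMean P T η ⬝ᵥ h - quad (tiltCov P T η) h / 2| ≤
          C * ‖h‖ ^ 3 := by
  obtain ⟨B, hB0, hB⟩ := exists_tilted_exp_moment_bound hT ha hint
  set b := a / 4 with hb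
  have hb0 : 0 < b := by positivity
  have h2b : a / 2 = 2 * b := by rw [hb]; ring
  rw [h2b] at hB
  set L := B / (2 * b) with hL
  have hL0 : 0 ≤ L := by positivity
  set B' := Real.exp (2 * b * L) * B with hB'
  have hB'0 : 0 ≤ B' := by positivity
  have hmc := momentConst_pos hb0
  set D := momentConst b * B' with hD
  have hD0 : 0 ≤ D := by positivity
  set r0 := min b (1 / (1 + 3 * D)) with hr0
  have hr00 : 0 < r0 := lt_min hb0 (by positivity)
  have hr01 : r0 ≤ 1 := (min_le_right _ _).trans (by
    rw [div_le_one (by positivity)]; linarith)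
  have hr0b : r0 ≤ b := min_le_left _ _
  have hr0D : 3 * D * r0 ≤ 1 := by
    have : r0 ≤ 1 / (1 + 3 * D) := min_le_right _ _
    rw [le_div_iff₀ (by positivity)] at this
    nlinarith
  set r := r0 / (2 * (d + 1)) with hr
  have hr_pos : 0 < r := by positivity
  have hdr : d * (2 * r) ≤ r0 := by
    rw [hr, show (d : ℝ) * (2 * (r0 / (2 * (d + 1)))) = d / (d + 1) * r0 by field_simp]
    have : (d : ℝ) / (d + 1) ≤ 1 := by rw [div_le_one (by positivity)]; linarith
    nlinarith
  have main : ∀ η, ‖η‖ ≤ r → IsProbabilityMeasure (P.tilted fun x => η ⬝ᵥ T x) ∧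
      (∀ h : Fin d → ℝ, ∀ x, |h ⬝ᵥ (T x - tiltMean P T η)| ≤ d * ‖h‖ * (‖T x‖ + L)) ∧
      Integrable (fun x => Real.exp (2 * b * (‖T x‖ + L))) (P.tilted fun x => η ⬝ᵥ T x) ∧
      ∫ x, Real.exp (2 * b * (‖T x‖ + L)) ∂(P.tilted fun x => η ⬝ᵥ T x) ≤ B' ∧
      ∀ i, Integrable (fun x => T x i) (P.tilted fun x => η ⬝ᵥ T x) := by
    intro η hη
    have hdη : d * ‖η‖ ≤ r0 / 2 := by
      have : (d : ℝ) * ‖η‖ ≤ d * r := by gcongr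
      linarith
    obtain ⟨i1, hi1⟩ := hB η (by linarith)
    have i0 := integrable_exp_dotProduct hT hint (η := η) (by linarith)
    have := isProbabilityMeasure_tilted i0
    have hTb : ∀ x, ‖T x‖ ≤ Real.exp (2 * b * ‖T x‖) / (2 * b) := by
      intro x
      rw [le_div_iff₀ (by positivity)]
      have := Real.add_one_le_exp (2 * b * ‖T x‖)
      linarith
    have iT : Integrable (fun x => ‖T x‖) (P.tilted fun x => η ⬝ᵥ T x) := by
      refine (i1.div_const (2 * b)).mono' (by fun_prop) (Filter.Eventually.of_forall fun x => ?_)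
      rw [norm_norm]
      exact hTb x
    have iTi : ∀ i, Integrable (fun x => T x i) (P.tilted fun x => η ⬝ᵥ T x) := fun i =>
      iT.mono' (by fun_prop) (Filter.Eventually.of_forall fun x => norm_le_pi_norm (T x) i)
    have hmean : ‖tiltMean P T η‖ ≤ L := by
      rw [pi_norm_le_iff_of_nonneg hL0]
      intro i
      refine (norm_integral_le_of_norm_le iT
        (Filter.Eventually.of_forall fun x => norm_le_pi_norm (T x) i)).trans ?_
      refine (integral_mono iT (i1.div_const (2 * b)) hTb).trans ?_
      rw [integral_div]
      exact div_le_div_of_nonneg_right hi1 (by positivity)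
    refine ⟨this, fun h x => ?_, ?_, ?_, iTi⟩
    · refine (abs_dotProduct_le _ _).trans ?_
      gcongr
      exact (norm_sub_le _ _).trans (by linarith)
    · simp_rw [mul_add, Real.exp_add]
      exact i1.mul_const _
    · simp_rw [mul_add, Real.exp_add]
      rw [integral_mul_const, mul_comm]
      exact mul_le_mul_of_nonneg_left hi1 (Real.exp_nonneg _)
  have hquad : ∀ η, ‖η‖ ≤ r → ∀ h, quad (tiltCov P T η) h =
        ∫ x, (h ⬝ᵥ (T x - tiltMean P T η)) ^ 2 ∂(P.tilted fun x => η ⬝ᵥ T x) := by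
    intro η hη h
    obtain ⟨_, m2, m3, m4, _⟩ := main η hη
    refine quad_tiltCov (fun i j => ?_) h
    have hsq : ∀ i, Integrable (fun x => (T x i - tiltMean P T η i) ^ 2)
        (P.tilted fun x => η ⬝ᵥ T x) := by
      intro i
      have := (integral_sq_le_of_exp_moment (s := d * ‖(Pi.single i 1 : Fin d → ℝ)‖)
        (W := fun x => Pi.single i 1 ⬝ᵥ (T x - tiltMean P T η))
        (measurable_dotProduct (hT.sub_const _) _) hb0
        (fun x => by positivity) (m2 _) m3 m4).1
      simpa using this
    refine ((hsq i).add (hsq j)).mono' (by fun_prop) (Filter.Eventually.of_forall fun x => ?_)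
    rw [Real.norm_eq_abs, abs_le, Pi.add_apply]
    constructor <;> nlinarith [sq_nonneg ((T x i - tiltMean P T η i) + (T x j - tiltMean P T η j)),
      sq_nonneg ((T x i - tiltMean P T η i) - (T x j - tiltMean P T η j))]
  refine ⟨r, (D + 5 * D ^ 2) * d ^ 3, d ^ 2 * D, hr_pos, by positivity, by linarith,
    fun η hη h => ⟨?_, hquad η hη h⟩, fun η hη h => ?_, fun η h hη hηh => ?_⟩
  · obtain ⟨_, m2, m3, m4, _⟩ := main η hη
    exact (integral_sq_le_of_exp_moment (measurable_dotProduct (hT.sub_const _) _) hb0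
        (fun x => by positivity) (m2 _) m3 m4).1
  · obtain ⟨_, m2, m3, m4, _⟩ := main η hη
    rw [hquad η hη]
    refine (integral_sq_le_of_exp_moment (measurable_dotProduct (hT.sub_const _) _) hb0
        (fun x => by positivity) (m2 _) m3 m4).2.trans (le_of_eq ?_)
    rw [← hD]; ring
  · obtain ⟨m1, m2, m3, m4, m5⟩ := main η hη
    have hh : ‖h‖ ≤ 2 * r := by
      have : h = (η + h) - η := by abel
      rw [this]
      exact (norm_sub_le _ _).trans (by linarith)
    have hs : d * ‖h‖ ≤ r0 := by
      have : (d : ℝ) * ‖h‖ ≤ d * (2 * r) := by gcongr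
      linarith
    have hs0 : 0 ≤ d * ‖h‖ := by positivity
    have iη := integrable_exp_dotProduct hT hint (η := η) (by
      have : (d : ℝ) * ‖η‖ ≤ d * r := by gcongr
      linarith)
    have iηh := integrable_exp_dotProduct hT hint (η := η + h) (by
      have : (d : ℝ) * ‖η + h‖ ≤ d * r := by gcongr
      linarith)
    have hci : ∀ i, Integrable (fun x => h i * (T x i - tiltMean P T η i))
        (P.tilted fun x => η ⬝ᵥ T x) :=
      fun i => ((m5 i).sub (integrable_const _)).const_mul _
    have hdot : ∀ x, h ⬝ᵥ (T x - tiltMean P T η) = ∑ i, h i * (T x i - tiltMean P T η i) :=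
      fun x => rfl
    have hWi : Integrable (fun x => h ⬝ᵥ (T x - tiltMean P T η))
        (P.tilted fun x => η ⬝ᵥ T x) := by
      simp_rw [hdot]
      exact integrable_finsetSum _ fun i _ => hci i
    have hW0 : ∫ x, h ⬝ᵥ (T x - tiltMean P T η) ∂(P.tilted fun x => η ⬝ᵥ T x) = 0 := by
      simp_rw [hdot]
      rw [integral_finsetSum _ fun i _ => hci i]
      refine Finset.sum_eq_zero fun i _ => ?_
      rw [integral_const_mul, integral_sub (m5 i) (integrable_const _)]
      simp [tiltMean]
    have key := abs_log_mgf_sub_le (measurable_dotProduct (hT.sub_const _) h) hb0 hs0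
      (hs.trans hr0b) (hs.trans hr01) (fun x => by positivity) (m2 h) m3 m4
      (by nlinarith) hWi hW0
    have e1 : Real.log (∫ x, Real.exp (h ⬝ᵥ (T x - tiltMean P T η))
        ∂(P.tilted fun x => η ⬝ᵥ T x)) =
        logMgf P T (η + h) - logMgf P T η - tiltMean P T η ⬝ᵥ h := by
      simp_rw [dotProduct_sub, Real.exp_sub]
      rw [integral_div, integral_exp_tilted, Real.log_div, Real.log_div, Real.log_exp,
        dotProduct_comm h]
      · unfold logMgf
        simp_rw [add_dotProduct]
        rfl
      · have := (integral_exp_pos iηh).ne'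
        simp_rw [add_dotProduct] at this
        exact this
      · exact (integral_exp_pos iη).ne'
      · have := integral_exp_pos iη
        have h2 := integral_exp_pos iηh
        simp_rw [add_dotProduct] at h2
        exact (div_pos h2 this).ne'
      · exact Real.exp_ne_zero _
    rw [e1, ← hquad η hη] at key
    refine key.trans (le_of_eq ?_)
    rw [← hD]; ring

theorem exists_quadApprox [IsProbabilityMeasure P] (hT : Measurable T) (ha : 0 < a)
    (hint : Integrable (fun x => Real.exp (a * ‖T x‖)) P)
    (hnd : ∀ h : Fin d → ℝ, h ≠ 0 → ∀ c : ℝ, ¬ ∀ᵐ x ∂P, h ⬝ᵥ T x = c) {ρ₀ : ℝ} (hρ₀ : 0 < ρ₀) :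
    ∃ ρ κ K C : ℝ, ρ ≤ ρ₀ ∧ d * ρ ≤ a ∧
      QuadApprox ρ κ K C (logMgf P T) (tiltMean P T) (tiltCov P T) := by
  obtain ⟨r, C, D, hr, hC, hdr, hquad, hup, htay⟩ := exists_logMgf_taylor hT ha hint
  have ht0 : (P.tilted fun x => (0 : Fin d → ℝ) ⬝ᵥ T x) = P := by simp
  have hpos : ∀ h, h ≠ 0 → 0 < quad (tiltCov P T 0) h := by
    intro h hh
    obtain ⟨hi, h0⟩ := hquad 0 (by simpa using hr.le) h
    rw [ht0] at hi h0
    have hnn : 0 ≤ quad (tiltCov P T 0) h := by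
      rw [h0]; exact integral_nonneg fun x => sq_nonneg _
    refine lt_of_le_of_ne hnn fun he => ?_
    refine hnd h hh (h ⬝ᵥ tiltMean P T 0) ?_
    rw [h0, eq_comm, integral_eq_zero_iff_of_nonneg (fun x => sq_nonneg _) hi] at he
    filter_upwards [he] with x hx
    simpa [dotProduct_sub, sub_eq_zero] using hx
  obtain ⟨κ, hκ, hlow⟩ := exists_quad_lower_bound _ hpos
  set ρ := min (min ρ₀ (r / 3)) (κ / (320 * (C + 1))) with hρ
  have hρ0 : 0 < ρ := lt_min (lt_min hρ₀ (by positivity)) (by positivity)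
  have hρ1 : ρ ≤ ρ₀ := (min_le_left _ _).trans (min_le_left _ _)
  have hρ2 : ρ ≤ r / 3 := (min_le_left _ _).trans (min_le_right _ _)
  have hρ3 : 320 * (C + 1) * ρ ≤ κ := by
    have : ρ ≤ κ / (320 * (C + 1)) := min_le_right _ _
    rw [le_div_iff₀ (by positivity)] at this
    linarith
  refine ⟨ρ, κ / 2, max D 1, 20 * C, hρ1, ?_, ?_⟩
  · have : (d : ℝ) * ρ ≤ d * r := by gcongr; linarith
    linarith
  have hlip : ∀ θ θ', ‖θ‖ ≤ ρ → ‖θ'‖ ≤ ρ → ∀ h, quad (tiltCov P T θ') h ≤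
      quad (tiltCov P T θ) h + 20 * C * ‖θ' - θ‖ * ‖h‖ ^ 2 := fun θ θ' hθ hθ' h =>
    quad_lipschitz_of_taylor hC htay (hθ.trans hρ2) (hθ'.trans hρ2) h
  refine ⟨hρ0, by positivity, by positivity, by positivity, by nlinarith, measurable_logMgf hT,
    tiltCov_isSymm P T, fun θ hθ h => ?_, fun θ hθ h => ?_, hlip, fun θ h hθ hθ' => ?_⟩
  · have h1 := hlip θ 0 hθ (by simpa using hρ0.le) h
    rw [zero_sub, norm_neg] at h1
    have h2 := hlow h
    have h3 : 20 * C * ‖θ‖ * ‖h‖ ^ 2 ≤ κ / 2 * ‖h‖ ^ 2 := by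
      have : C * ‖θ‖ ≤ C * ρ := by gcongr
      have : 20 * C * ‖θ‖ ≤ κ / 2 := by nlinarith
      gcongr
    linarith
  · refine (hup θ (by linarith) h).trans ?_
    gcongr
    exact le_max_left _ _
  · refine (htay θ h (by linarith) (by linarith)).trans ?_
    gcongr
    linarith

end Tilting

section Concentration

variable {d : ℕ} {ρ κ K C : ℝ} {Λ : (Fin d → ℝ) → ℝ} {ℓ : (Fin d → ℝ) → Fin d → ℝ}
  {M : (Fin d → ℝ) → Matrix (Fin d) (Fin d) ℝ} {Y : Type*} [MeasurableSpace Y]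

theorem measurable_uncurry_lik (hΛ : Measurable Λ) (N : ℝ) {t : Y → Fin d → ℝ}
    (ht : Measurable t) : Measurable (Function.uncurry fun θ y => lik Λ N (t y) θ) := by
  have h1 : Measurable fun p : (Fin d → ℝ) × Y => t p.2 ⬝ᵥ p.1 := by
    unfold dotProduct
    refine Finset.measurable_sum _ fun i _ => Measurable.mul ?_ ?_
    · exact (measurable_pi_apply i).comp (ht.comp measurable_snd)
    · exact (measurable_pi_apply i).comp measurable_fst
  unfold lik
  exact ((h1.sub (hΛ.comp measurable_fst)).const_mul N).exp.ennreal_ofReal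

theorem QuadApprox.chernoff (H : QuadApprox ρ κ K C Λ ℓ M) {N s y₀ : ℝ} (hN : 0 < N)
    {B : Measure Y} {t : Y → Fin d → ℝ} (ht : Measurable t) {θ e : Fin d → ℝ} (he : ‖e‖ ≤ 1)
    (hs : 0 ≤ s) (hθ : ‖θ‖ + s ≤ ρ)
    (hB : IsProbabilityMeasure (B.withDensity fun y => lik Λ N (t y) (θ + s • e))) :
    (B.withDensity fun y => lik Λ N (t y) θ) {y | y₀ ≤ (t y - ℓ θ) ⬝ᵥ e} ≤
      ENNReal.ofReal (Real.exp (N * ((K + κ) / 2 * s ^ 2 - s * y₀))) := by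
  have hse : ‖s • e‖ ≤ s := by
    rw [norm_smul, Real.norm_of_nonneg hs]
    exact mul_le_of_le_one_right hs he
  have n1 : ‖θ + s • e‖ ≤ ρ := (norm_add_le _ _).trans (by linarith)
  have h1 := (abs_le.1 (H.taylor θ (s • e) (by linarith) n1)).2
  have h2 := H.upper θ (by linarith) (s • e)
  have hK := H.K_pos
  have hC := H.C_nonneg
  have hκ := H.kappa_pos
  have hsρ : s ≤ ρ := by linarith [norm_nonneg θ]
  have h3 : K * ‖s • e‖ ^ 2 ≤ K * s ^ 2 := by gcongr
  have h4 : C * ‖s • e‖ ^ 3 ≤ κ / 2 * s ^ 2 := by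
    calc C * ‖s • e‖ ^ 3 ≤ C * s ^ 3 := by gcongr
      _ = C * s * s ^ 2 := by ring
      _ ≤ κ / 2 * s ^ 2 := by
        have : C * s ≤ C * ρ := by gcongr
        have := H.small
        gcongr
        linarith
  have mS : MeasurableSet {y | y₀ ≤ (t y - ℓ θ) ⬝ᵥ e} := by
    refine measurableSet_le measurable_const ?_
    simp_rw [dotProduct_comm _ e]
    exact measurable_dotProduct (ht.sub_const _) e
  rw [withDensity_apply _ mS]
  have hpt : ∀ y ∈ {y | y₀ ≤ (t y - ℓ θ) ⬝ᵥ e}, lik Λ N (t y) θ ≤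
      ENNReal.ofReal (Real.exp (N * ((K + κ) / 2 * s ^ 2 - s * y₀))) *
        lik Λ N (t y) (θ + s • e) := by
    intro y hy
    rw [Set.mem_ofPred_eq, sub_dotProduct] at hy
    unfold lik
    rw [← ENNReal.ofReal_mul (Real.exp_nonneg _), ← Real.exp_add]
    refine ENNReal.ofReal_le_ofReal (Real.exp_le_exp.2 ?_)
    rw [← mul_add]
    refine mul_le_mul_of_nonneg_left ?_ hN.le
    rw [dotProduct_smul, smul_eq_mul] at h1
    rw [dotProduct_add, dotProduct_smul, smul_eq_mul]
    nlinarith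
  refine (setLIntegral_mono' mS hpt).trans ?_
  have mL : Measurable fun y => lik Λ N (t y) (θ + s • e) :=
    (measurable_uncurry_lik H.meas N ht).of_uncurry_left
  rw [lintegral_const_mul _ mL]
  refine mul_le_of_le_one_right' ?_
  refine (setLIntegral_le_lintegral _ _).trans ?_
  rw [← setLIntegral_univ, ← withDensity_apply _ MeasurableSet.univ]
  exact prob_le_one

theorem QuadApprox.concentration (H : QuadApprox ρ κ K C Λ ℓ M) :
    ∃ A : ℝ, 0 ≤ A ∧ ∀ N : ℝ, 1 ≤ N → ∀ (Y : Type*) [MeasurableSpace Y]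
      (B : Measure Y) (t : Y → Fin d → ℝ), Measurable t →
      (∀ θ, ‖θ‖ ≤ ρ → IsProbabilityMeasure (B.withDensity fun y => lik Λ N (t y) θ)) →
      ∀ θ, ‖θ‖ + locRadius N ≤ ρ →
      (B.withDensity fun y => lik Λ N (t y) θ) {y | κ * locRadius N / 8 < d * ‖t y - ℓ θ‖} ≤
        ENNReal.ofReal (A * N ^ (-(1 : ℝ) / 3)) := by
  have hK := H.K_pos
  have hκ := H.kappa_pos
  rcases Nat.eq_zero_or_pos d with rfl | hd
  · refine ⟨0, le_rfl, fun N hN Y _ B t _ _ θ _ => ?_⟩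
    have hR := locRadius_pos (zero_lt_one.trans_le hN)
    have : {y | κ * locRadius N / 8 < (0 : ℕ) * ‖t y - ℓ θ‖} = ∅ := by
      ext y
      have : 0 < κ * locRadius N / 8 := by positivity
      simp [this.le]
    rw [this, measure_empty]
    exact zero_le
  have hd1 : (1 : ℝ) ≤ d := by exact_mod_cast hd
  obtain ⟨A, hA, hAN⟩ := exists_rpow_mul_exp_locRadius_le
    (c := κ ^ 2 / (128 * d ^ 2 * (K + κ))) (by positivity) 0
  refine ⟨d * (A + A), by positivity, fun N hN Y _ B t ht hB θ hθ => ?_⟩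
  have hN0 : 0 < N := by linarith
  have hR := locRadius_pos hN0
  set R := locRadius N with hRdef
  set y₀ := κ * R / (8 * d) with hy₀
  have hy₀0 : 0 < y₀ := by positivity
  have hAN' : ENNReal.ofReal (Real.exp (-(κ ^ 2 / (128 * d ^ 2 * (K + κ)) * (N * R ^ 2)))) ≤
      ENNReal.ofReal (A * N ^ (-(1 : ℝ) / 3)) := by
    refine ENNReal.ofReal_le_ofReal ?_
    have := hAN N hN
    simpa using this
  have hone : ∀ e : Fin d → ℝ, ‖e‖ ≤ 1 →
      (B.withDensity fun y => lik Λ N (t y) θ) {y | y₀ ≤ (t y - ℓ θ) ⬝ᵥ e} ≤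
        ENNReal.ofReal (A * N ^ (-(1 : ℝ) / 3)) := by
    intro e he
    have hsR : y₀ / (K + κ) ≤ R := by
      rw [div_le_iff₀ (by positivity), hy₀, div_le_iff₀ (by positivity)]
      have : 0 ≤ R * K := by positivity
      have : 0 ≤ R * κ := by positivity
      nlinarith
    have hs0 : 0 ≤ y₀ / (K + κ) := by positivity
    refine (H.chernoff hN0 ht he hs0 (y₀ := y₀) (by linarith) (hB _ ?_)).trans
      (le_trans (le_of_eq ?_) hAN')
    · refine (norm_add_le _ _).trans ?_
      rw [norm_smul, Real.norm_of_nonneg hs0]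
      have : y₀ / (K + κ) * ‖e‖ ≤ y₀ / (K + κ) := mul_le_of_le_one_right hs0 he
      linarith
    · congr 2
      rw [hy₀]; field_simp; ring
  have hsub : {y | κ * R / 8 < d * ‖t y - ℓ θ‖} ⊆ ⋃ i : Fin d,
      ({y | y₀ ≤ (t y - ℓ θ) ⬝ᵥ Pi.single i 1} ∪ {y | y₀ ≤ (t y - ℓ θ) ⬝ᵥ -Pi.single i 1}) := by
    intro y hy
    rw [Set.mem_ofPred_eq] at hy
    have h1 : y₀ < ‖t y - ℓ θ‖ := by
      rw [hy₀, div_lt_iff₀ (by positivity)]; linarith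
    have : ∃ i, y₀ ≤ |(t y - ℓ θ) i| := by
      by_contra! hcon
      exact absurd ((pi_norm_le_iff_of_nonneg hy₀0.le).2 fun i => (hcon i).le) (not_le.2 h1)
    obtain ⟨i, hi⟩ := this
    refine Set.mem_iUnion.2 ⟨i, ?_⟩
    simp only [Set.mem_union, Set.mem_ofPred_eq, dotProduct_neg, dotProduct_single_one]
    exact le_abs.1 hi
  refine (measure_mono hsub).trans ((measure_iUnion_fintype_le _ _).trans ?_)
  have hsum : ∀ i ∈ (Finset.univ : Finset (Fin d)), (B.withDensity fun y => lik Λ N (t y) θ)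
      ({y | y₀ ≤ (t y - ℓ θ) ⬝ᵥ Pi.single i 1} ∪ {y | y₀ ≤ (t y - ℓ θ) ⬝ᵥ -Pi.single i 1}) ≤
      ENNReal.ofReal (A * N ^ (-(1 : ℝ) / 3)) + ENNReal.ofReal (A * N ^ (-(1 : ℝ) / 3)) := by
    intro i _
    have hn : ‖(Pi.single i 1 : Fin d → ℝ)‖ ≤ 1 := by rw [Pi.norm_single, norm_one]
    exact (measure_union_le _ _).trans (add_le_add (hone _ hn) (hone _ (by rwa [norm_neg])))
  refine (Finset.sum_le_sum hsum).trans ?_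
  rw [Finset.sum_const, Finset.card_univ, Fintype.card_fin, nsmul_eq_mul,
    ← ENNReal.ofReal_add (by positivity) (by positivity), ← ENNReal.ofReal_natCast,
    ← ENNReal.ofReal_mul (by positivity)]
  refine ENNReal.ofReal_le_ofReal (le_of_eq (by ring))

end Concentration

section Hockey

variable {d : ℕ} {ρ κ K C : ℝ} {Λ : (Fin d → ℝ) → ℝ} {ℓ : (Fin d → ℝ) → Fin d → ℝ}
  {M : (Fin d → ℝ) → Matrix (Fin d) (Fin d) ℝ} {Y : Type*} [MeasurableSpace Y]

/-- Mean posterior hockey-stick functional conditionally on the parameter `θ`. -/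
noncomputable def condHockey (ρ : ℝ) (Λ : (Fin d → ℝ) → ℝ)
    (M : (Fin d → ℝ) → Matrix (Fin d) (Fin d) ℝ) (N lam : ℝ) (B : Measure Y) (t : Y → Fin d → ℝ)
    (θ : Fin d → ℝ) : ℝ≥0∞ :=
  ∫⁻ y, lik Λ N (t y) θ * postHockey ρ Λ M N lam (t y) ∂B

theorem measurable_postHockey (hΛ : Measurable Λ) (hM : Measurable fun θ => gaussMass (M θ))
    (N lam : ℝ) : Measurable (postHockey ρ Λ M N lam) := by
  have h := measurable_uncurry_lik hΛ N (t := fun t : Fin d → ℝ => t) measurable_id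
  have h1 : Measurable fun t : Fin d → ℝ => ∫⁻ φ in Metric.closedBall 0 ρ, lik Λ N t φ :=
    h.lintegral_prod_left'
  refine Measurable.lintegral_prod_left' (f := fun p : (Fin d → ℝ) × (Fin d → ℝ) =>
    lik Λ N p.2 p.1 / (∫⁻ φ in Metric.closedBall 0 ρ, lik Λ N p.2 φ) -
    ENNReal.ofReal (lam / gaussMass (M p.1))) ?_
  refine (Measurable.div h (h1.comp measurable_snd)).sub ?_
  exact ((hM.comp measurable_fst).const_div lam).ennreal_ofReal

theorem condHockey_le_one (hΛ : Measurable Λ) (N lam : ℝ) (B : Measure Y) (t : Y → Fin d → ℝ)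
    {θ : Fin d → ℝ} (hB : IsProbabilityMeasure (B.withDensity fun y => lik Λ N (t y) θ)) :
    condHockey ρ Λ M N lam B t θ ≤ 1 := by
  have h1 : ∫⁻ y, lik Λ N (t y) θ ∂B ≤ 1 := by
    rw [← setLIntegral_univ, ← withDensity_apply _ MeasurableSet.univ]
    exact prob_le_one
  refine le_trans (lintegral_mono fun y => ?_) h1
  exact mul_le_of_le_one_right' (postHockey_le_one hΛ N lam _)

theorem QuadApprox.lintegral_lik_ne_zero (H : QuadApprox ρ κ K C Λ ℓ M) (N : ℝ)
    (t : Fin d → ℝ) : ∫⁻ φ in Metric.closedBall 0 ρ, lik Λ N t φ ≠ 0 := by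
  intro h
  rw [lintegral_eq_zero_iff (measurable_lik H.meas N t)] at h
  have h2 : ∀ᵐ φ ∂(volume.restrict (Metric.closedBall (0 : Fin d → ℝ) ρ)), False := by
    filter_upwards [h] with φ hφ
    simp only [lik, Pi.zero_apply, ENNReal.ofReal_eq_zero] at hφ
    exact absurd (Real.exp_pos _) (not_lt.2 hφ)
  rw [Filter.eventually_false_iff_eq_bot, ae_eq_bot, Measure.restrict_eq_zero] at h2
  exact (Metric.measure_closedBall_pos volume (0 : Fin d → ℝ) H.rho_pos).ne' h2

theorem QuadApprox.lintegral_lik_ne_top (H : QuadApprox ρ κ K C Λ ℓ M) {N : ℝ} (hN : 0 ≤ N)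
    (t : Fin d → ℝ) : ∫⁻ φ in Metric.closedBall 0 ρ, lik Λ N t φ ≠ ⊤ := by
  have hρ := H.rho_pos
  have hb : ∀ φ ∈ Metric.closedBall (0 : Fin d → ℝ) ρ, lik Λ N t φ ≤ ENNReal.ofReal (Real.exp
      (N * (d * ‖t‖ * ρ - Λ 0 + d * ‖ℓ 0‖ * ρ))) := by
    intro φ hφ
    rw [mem_closedBall_zero_iff] at hφ
    refine ENNReal.ofReal_le_ofReal (Real.exp_le_exp.2 (mul_le_mul_of_nonneg_left ?_ hN))
    have h1 := H.convex (θ := 0) (h := φ) (by simpa using hρ.le) (by simpa using hφ)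
    rw [zero_add] at h1
    have h2 : 0 ≤ κ / 4 * ‖φ‖ ^ 2 := by have := H.kappa_pos; positivity
    have h3 := (abs_le.1 (abs_dotProduct_le t φ)).2
    have h4 := (abs_le.1 (abs_dotProduct_le (ℓ 0) φ)).1
    have h5 : d * ‖t‖ * ‖φ‖ ≤ d * ‖t‖ * ρ := by gcongr
    have h6 : d * ‖ℓ 0‖ * ‖φ‖ ≤ d * ‖ℓ 0‖ * ρ := by gcongr
    linarith
  refine ((setLIntegral_mono' Metric.isClosed_closedBall.measurableSet hb).trans_lt ?_).ne
  rw [setLIntegral_const]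
  exact ENNReal.mul_lt_top ENNReal.ofReal_lt_top
    (isCompact_closedBall (0 : Fin d → ℝ) ρ).measure_lt_top

theorem QuadApprox.lintegral_hockey_eq (H : QuadApprox ρ κ K C Λ ℓ M)
    (hM : Measurable fun θ => gaussMass (M θ)) {N lam : ℝ} (hN : 0 ≤ N)
    (B : Measure Y) [SFinite B] {t : Y → Fin d → ℝ} (ht : Measurable t) :
    ∫⁻ y, (∫⁻ θ in Metric.closedBall 0 ρ, (lik Λ N (t y) θ -
      ENNReal.ofReal (lam / gaussMass (M θ)) *
      ∫⁻ φ in Metric.closedBall 0 ρ, lik Λ N (t y) φ)) ∂B =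
    ∫⁻ θ in Metric.closedBall 0 ρ, condHockey ρ Λ M N lam B t θ := by
  have hL := measurable_uncurry_lik H.meas N ht
  have hP := (measurable_postHockey (ρ := ρ) H.meas hM N lam).comp ht
  unfold condHockey
  rw [← lintegral_lintegral_swap (f := fun y θ => lik Λ N (t y) θ * postHockey ρ Λ M N lam (t y))
    ((hL.comp measurable_swap).mul (hP.comp measurable_fst)).aemeasurable]
  refine lintegral_congr fun y => ?_
  rw [lintegral_mul_const _ (measurable_lik H.meas N (t y))]
  have h0 := H.lintegral_lik_ne_zero N (t y)
  have h1 := H.lintegral_lik_ne_top hN (t y)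
  rw [postHockey, ← lintegral_const_mul' _ _ h1]
  refine lintegral_congr fun θ => ?_
  rw [ENNReal.mul_sub (fun _ _ => h1), ENNReal.mul_div_cancel h0 h1, mul_comm (ENNReal.ofReal _)]

theorem QuadApprox.condHockey_approx (H : QuadApprox ρ κ K C Λ ℓ M)
    (hM : Measurable fun θ => gaussMass (M θ)) :
    ∃ A : ℝ, 0 ≤ A ∧ ∀ N : ℝ, 1 ≤ N → ∀ lam : ℝ, 0 ≤ lam → ∀ (Y : Type*) [MeasurableSpace Y]
      (B : Measure Y) (t : Y → Fin d → ℝ), Measurable t →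
      (∀ θ, ‖θ‖ ≤ ρ → IsProbabilityMeasure (B.withDensity fun y => lik Λ N (t y) θ)) →
      ∀ θ, ‖θ‖ + locRadius N ≤ ρ →
      condHockey ρ Λ M N lam B t θ ≤
        gaussHockey volume (quad (M θ)) (gaussMass (M θ)) (N ^ (-(d : ℝ) / 2) * lam) +
          ENNReal.ofReal (A * N ^ (-(1 : ℝ) / 3)) ∧
      gaussHockey volume (quad (M θ)) (gaussMass (M θ)) (N ^ (-(d : ℝ) / 2) * lam) ≤
        condHockey ρ Λ M N lam B t θ + ENNReal.ofReal (A * N ^ (-(1 : ℝ) / 3)) := by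
  obtain ⟨A₁, hA₁, h₁⟩ := H.postHockey_approx
  obtain ⟨A₂, hA₂, h₂⟩ := H.concentration
  refine ⟨A₁ + A₂, by positivity, fun N hN lam hlam Y _ B t ht hB θ hθ => ?_⟩
  have hN0 : 0 < N := by linarith
  have hR := locRadius_pos hN0
  have hθρ : ‖θ‖ ≤ ρ := by linarith
  have hprob := hB θ hθρ
  have hlow := H.lower θ hθρ
  set k := gaussHockey volume (quad (M θ)) (gaussMass (M θ)) (N ^ (-(d : ℝ) / 2) * lam) with hk
  have hk1 : k ≤ 1 := gaussHockey_le_one (integrable_exp_quad H.kappa_pos hlow)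
    (gaussMass_pos H.kappa_pos hlow) (by positivity)
  set S := {y | κ * locRadius N / 8 < d * ‖t y - ℓ θ‖} with hS
  have mS : MeasurableSet S := measurableSet_lt measurable_const (by fun_prop)
  have mL : Measurable fun y => lik Λ N (t y) θ :=
    (measurable_uncurry_lik H.meas N ht).of_uncurry_left
  have mP : Measurable fun y => postHockey ρ Λ M N lam (t y) :=
    (measurable_postHockey (ρ := ρ) H.meas hM N lam).comp ht
  set μ := B.withDensity fun y => lik Λ N (t y) θ with hμ
  have hcond : condHockey ρ Λ M N lam B t θ = ∫⁻ y, postHockey ρ Λ M N lam (t y) ∂μ := by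
    rw [hμ, lintegral_withDensity_eq_lintegral_mul _ mL mP]
    rfl
  have hS2 : μ S ≤ ENNReal.ofReal (A₂ * N ^ (-(1 : ℝ) / 3)) := h₂ N hN Y B t ht hB θ hθ
  have hA : ENNReal.ofReal ((A₁ + A₂) * N ^ (-(1 : ℝ) / 3)) =
      ENNReal.ofReal (A₁ * N ^ (-(1 : ℝ) / 3)) + ENNReal.ofReal (A₂ * N ^ (-(1 : ℝ) / 3)) := by
    rw [add_mul, ENNReal.ofReal_add (by positivity) (by positivity)]
  have hind : ∫⁻ y, S.indicator 1 y ∂μ = μ S := by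
    rw [lintegral_indicator_one mS]
  have mI : Measurable (S.indicator (1 : Y → ℝ≥0∞)) := measurable_one.indicator mS
  rw [hA, hcond]
  set η := ENNReal.ofReal (A₁ * N ^ (-(1 : ℝ) / 3)) with hη
  constructor
  · have hpt : ∀ y, postHockey ρ Λ M N lam (t y) ≤ (k + η) + S.indicator 1 y := by
      intro y
      by_cases hy : y ∈ S
      · rw [Set.indicator_of_mem hy]
        exact (postHockey_le_one H.meas N lam (t y)).trans le_add_self
      · rw [Set.indicator_of_notMem hy, add_zero]
        exact (h₁ N hN lam hlam (t y) θ hθ (not_lt.1 hy)).1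
    refine (lintegral_mono hpt).trans ?_
    rw [lintegral_add_right _ mI, hind, lintegral_const, measure_univ, mul_one, ← add_assoc]
    gcongr
  · have hpt : ∀ y, k ≤ postHockey ρ Λ M N lam (t y) + (η + S.indicator 1 y) := by
      intro y
      by_cases hy : y ∈ S
      · rw [Set.indicator_of_mem hy]
        exact hk1.trans (le_add_left le_add_self)
      · rw [Set.indicator_of_notMem hy, add_zero]
        exact (h₁ N hN lam hlam (t y) θ hθ (not_lt.1 hy)).2
    have := lintegral_mono (μ := μ) hpt
    rw [lintegral_const, measure_univ, mul_one, lintegral_add_left mP,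
      lintegral_add_right _ mI, hind, lintegral_const, measure_univ, mul_one] at this
    refine this.trans ?_
    gcongr

end Hockey

section AmplificationBound

universe u

variable {d : ℕ} {ρ κ K C : ℝ} {Λ : (Fin d → ℝ) → ℝ} {ℓ : (Fin d → ℝ) → Fin d → ℝ}
  {M : (Fin d → ℝ) → Matrix (Fin d) (Fin d) ℝ}

theorem volume_closedBall_pi_zero {r : ℝ} (hr : 0 ≤ r) :
    volume (Metric.closedBall (0 : Fin d → ℝ) r) = ENNReal.ofReal ((2 * r) ^ d) := by
  rw [Real.volume_pi_closedBall _ hr, Fintype.card_fin]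

theorem locRadius_antitone {n N : ℝ} (hn : 0 < n) (hN : n ≤ N) : locRadius N ≤ locRadius n :=
  Real.rpow_le_rpow_of_nonpos hn hN (by norm_num)

theorem QuadApprox.gaussHockey_gap_quad (H : QuadApprox ρ κ K C Λ ℓ M) (hd : 0 < d) {n N : ℝ}
    (hn : 1 ≤ n) (hN : n ≤ N) {θ : Fin d → ℝ} (hθ : ‖θ‖ ≤ ρ) :
    gaussHockey volume (quad (M θ)) (gaussMass (M θ))
        (n ^ (-(d : ℝ) / 2) * (n ^ ((d : ℝ) / 2) * Real.exp (-(d : ℝ) / 2))) +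
      ENNReal.ofReal ((1 / 2500) ^ 2 * min ((N - n) / n * Real.sqrt d) 1) ≤
    gaussHockey volume (quad (M θ)) (gaussMass (M θ))
        (N ^ (-(d : ℝ) / 2) * (n ^ ((d : ℝ) / 2) * Real.exp (-(d : ℝ) / 2))) := by
  have hn0 : 0 < n := by linarith
  have hN0 : 0 < N := by linarith
  have hlow := H.lower θ hθ
  have e1 : n ^ (-(d : ℝ) / 2) * (n ^ ((d : ℝ) / 2) * Real.exp (-(d : ℝ) / 2)) =
      Real.exp (-(d : ℝ) / 2) := by
    rw [← mul_assoc, ← Real.rpow_add hn0, neg_div, neg_add_cancel, Real.rpow_zero, one_mul]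
  have e2 : N ^ (-(d : ℝ) / 2) * (n ^ ((d : ℝ) / 2) * Real.exp (-(d : ℝ) / 2)) =
      (1 + (N - n) / n) ^ (-(d : ℝ) / 2) * Real.exp (-(d : ℝ) / 2) := by
    have : 1 + (N - n) / n = N / n := by field_simp; ring
    rw [this, Real.div_rpow hN0.le hn0.le, ← mul_assoc, neg_div, Real.rpow_neg hn0.le, div_inv_eq_mul]
  rw [e1, e2]
  exact gaussHockey_gap (continuous_quad _).measurable hd (quad_smul _)
    (integrable_exp_quad H.kappa_pos hlow)
    (fun h => le_trans (by have := H.kappa_pos; positivity) (hlow h))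
    (gaussMass_pos H.kappa_pos hlow) (div_nonneg (by linarith) hn0.le)

theorem QuadApprox.amplification_lower_bound (H : QuadApprox ρ κ K C Λ ℓ M)
    (hM : Measurable fun θ => gaussMass (M θ)) (hd : 0 < d) :
    ∃ A : ℝ, 0 ≤ A ∧ ∀ n N : ℝ, 1 ≤ n → n ≤ N → ∀ (Y₁ Y₂ : Type u) [MeasurableSpace Y₁]
      [MeasurableSpace Y₂] (B₁ : Measure Y₁) (B₂ : Measure Y₂) [SFinite B₁] [SFinite B₂]
      (t₁ : Y₁ → Fin d → ℝ) (t₂ : Y₂ → Fin d → ℝ), Measurable t₁ → Measurable t₂ →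
      (∀ θ, ‖θ‖ ≤ ρ → IsProbabilityMeasure (B₁.withDensity fun y => lik Λ n (t₁ y) θ)) →
      (∀ θ, ‖θ‖ ≤ ρ → IsProbabilityMeasure (B₂.withDensity fun y => lik Λ N (t₂ y) θ)) →
      ∀ (T : Kernel Y₁ Y₂) [IsMarkovKernel T] (ε : ℝ), 0 ≤ ε →
      (∀ θ, ‖θ‖ ≤ ρ → ∀ S, MeasurableSet S →
        (B₂.withDensity fun y => lik Λ N (t₂ y) θ) S ≤
          ((B₁.withDensity fun y => lik Λ n (t₁ y) θ).bind T) S + ENNReal.ofReal ε ∧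
        ((B₁.withDensity fun y => lik Λ n (t₁ y) θ).bind T) S ≤
          (B₂.withDensity fun y => lik Λ N (t₂ y) θ) S + ENNReal.ofReal ε) →
      (1 / 2500) ^ 2 * min ((N - n) / n * Real.sqrt d) 1 ≤ 2 * ε + A * n ^ (-(1 : ℝ) / 3) := by
  obtain ⟨A, hA, hAN⟩ := H.condHockey_approx.{u} hM
  have hρ := H.rho_pos
  refine ⟨2 * A + (2 * d + 1) / ρ, by positivity, fun n N hn hN Y₁ Y₂ _ _ B₁ B₂ _ _ t₁ t₂ ht₁ ht₂
    hB₁ hB₂ T _ ε hε h => ?_⟩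
  have hn0 : 0 < n := by linarith
  have hN1 : 1 ≤ N := by linarith
  set g := (1 / 2500) ^ 2 * min ((N - n) / n * Real.sqrt d) 1 with hg
  have hg0 : 0 ≤ g := by
    have : 0 ≤ (N - n) / n * Real.sqrt d :=
      mul_nonneg (div_nonneg (by linarith) hn0.le) (Real.sqrt_nonneg _)
    positivity
  have hg1 : g ≤ 1 := by
    have : min ((N - n) / n * Real.sqrt d) 1 ≤ 1 := min_le_right _ _
    rw [hg]; linarith
  set R := locRadius n with hR
  have hR0 : 0 < R := locRadius_pos hn0
  set x := n ^ (-(1 : ℝ) / 3) with hx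
  have hRx : R ≤ x := locRadius_le hn
  have hx0 : 0 < x := by positivity
  rcases lt_or_ge ρ R with hρR | hρR
  · have : 1 ≤ 1 / ρ * x := by rw [one_div, ← div_eq_inv_mul, one_le_div hρ]; linarith
    have h2 : 0 ≤ 2 * A * x + 2 * d / ρ * x := by positivity
    rw [add_mul, add_div, add_mul]
    linarith
  set lam := n ^ ((d : ℝ) / 2) * Real.exp (-(d : ℝ) / 2) with hlam
  have hlam0 : 0 ≤ lam := by positivity
  set k : ℝ → (Fin d → ℝ) → ℝ≥0∞ := fun N θ =>
    gaussHockey volume (quad (M θ)) (gaussMass (M θ)) (N ^ (-(d : ℝ) / 2) * lam) with hk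
  set ball := Metric.closedBall (0 : Fin d → ℝ) ρ with hball
  set inn := Metric.closedBall (0 : Fin d → ℝ) (ρ - R) with hinn
  have mball : MeasurableSet ball := Metric.isClosed_closedBall.measurableSet
  have minn : MeasurableSet inn := Metric.isClosed_closedBall.measurableSet
  have hsub : inn ⊆ ball := Metric.closedBall_subset_closedBall (by linarith)
  have memball : ∀ θ, θ ∈ ball ↔ ‖θ‖ ≤ ρ := fun θ => mem_closedBall_zero_iff
  have meminn : ∀ θ ∈ inn, ‖θ‖ + R ≤ ρ := fun θ hθ => by
    have := mem_closedBall_zero_iff.1 hθ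
    linarith
  set I₁ := condHockey ρ Λ M n lam B₁ t₁ with hI₁
  set I₂ := condHockey ρ Λ M N lam B₂ t₂ with hI₂
  set w := (2 * ρ) ^ d with hw
  set w' := (2 * (ρ - R)) ^ d with hw'
  have hw0 : 0 < w := by positivity
  have hw'0 : 0 ≤ w' := by
    have : 0 ≤ ρ - R := by linarith
    positivity
  have hvol : volume ball = ENNReal.ofReal w := volume_closedBall_pi_zero hρ.le
  have hvol' : volume inn = ENNReal.ofReal w' := volume_closedBall_pi_zero (by linarith)
  have hamp : ∫⁻ θ in ball, I₂ θ ≤ (∫⁻ θ in ball, I₁ θ) +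
      2 * (ENNReal.ofReal ε * ENNReal.ofReal w) := by
    have : IsFiniteMeasure (volume.restrict ball) :=
      ⟨by rw [Measure.restrict_apply_univ, hvol]; exact ENNReal.ofReal_lt_top⟩
    have key := hockeyStick_le_add_of_amplification (volume.restrict ball) B₁ B₂
      (fun θ y => lik Λ n (t₁ y) θ) (fun θ y => lik Λ N (t₂ y) θ)
      (measurable_uncurry_lik H.meas n ht₁) (measurable_uncurry_lik H.meas N ht₂)
      (fun θ => ENNReal.ofReal (lam / gaussMass (M θ))) (hM.const_div lam).ennreal_ofReal
      (fun y => H.lintegral_lik_ne_zero N (t₂ y))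
      (fun y => H.lintegral_lik_ne_top (by linarith) (t₂ y))
      ((ae_restrict_mem mball).mono fun θ hθ => hB₂ θ ((memball θ).1 hθ)) T
      (ε := ENNReal.ofReal ε)
      ((ae_restrict_mem mball).mono fun θ hθ => h θ ((memball θ).1 hθ))
    rw [H.lintegral_hockey_eq hM (by linarith) B₂ ht₂,
      H.lintegral_hockey_eq hM hn0.le B₁ ht₁, Measure.restrict_apply_univ, hvol] at key
    exact key
  have hinner : ∀ θ ∈ inn, k n θ + ENNReal.ofReal g ≤ I₂ θ + ENNReal.ofReal (A * x) := by
    intro θ hθ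
    have hθ' := meminn θ hθ
    have := locRadius_antitone hn0 hN
    refine (H.gaussHockey_gap_quad hd hn hN (by linarith)).trans ?_
    refine ((hAN N hN1 lam hlam0 Y₂ B₂ t₂ ht₂ hB₂ θ (by linarith)).2).trans ?_
    gcongr
    exact Real.rpow_le_rpow_of_nonpos hn0 hN (by norm_num)
  have hlow : (∫⁻ θ in inn, k n θ) + ENNReal.ofReal g * ENNReal.ofReal w' ≤
      (∫⁻ θ in ball, I₂ θ) + ENNReal.ofReal (A * x) * ENNReal.ofReal w := by
    have := setLIntegral_mono' (μ := volume) minn hinner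
    rw [lintegral_add_right _ measurable_const, lintegral_add_right _ measurable_const,
      setLIntegral_const, setLIntegral_const, hvol'] at this
    refine this.trans (add_le_add (lintegral_mono_set hsub) ?_)
    rw [← hvol, ← hvol']
    gcongr
  have hup : ∫⁻ θ in ball, I₁ θ ≤ (∫⁻ θ in inn, k n θ) + ENNReal.ofReal (A * x) * ENNReal.ofReal w +
      ENNReal.ofReal (w - w') := by
    have e1 : ∫⁻ θ in ball, I₁ θ ≤ (∫⁻ θ in inn, I₁ θ) + ∫⁻ θ in ball \ inn, I₁ θ := by
      refine le_trans (le_of_eq ?_) (lintegral_union_le I₁ inn (ball \ inn))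
      rw [Set.union_sdiff_cancel hsub]
    refine e1.trans (add_le_add ?_ ?_)
    · have := setLIntegral_mono' (μ := volume) minn fun θ hθ =>
        (hAN n hn lam hlam0 Y₁ B₁ t₁ ht₁ hB₁ θ (meminn θ hθ)).1
      rw [lintegral_add_right _ measurable_const, setLIntegral_const] at this
      refine this.trans (add_le_add le_rfl ?_)
      rw [← hvol]
      gcongr
    · have : ∀ θ ∈ ball \ inn, I₁ θ ≤ 1 := fun θ hθ =>
        condHockey_le_one H.meas n lam B₁ t₁ (hB₁ θ ((memball θ).1 hθ.1))
      refine (setLIntegral_mono' (mball.diff minn) this).trans ?_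
      rw [setLIntegral_const, one_mul, measure_sdiff hsub minn.nullMeasurableSet
        (by rw [hvol']; exact ENNReal.ofReal_ne_top), hvol, hvol', ENNReal.ofReal_sub _ hw'0]
  have hkfin : ∫⁻ θ in inn, k n θ ≠ ⊤ := by
    have : ∀ θ ∈ inn, k n θ ≤ 1 := fun θ hθ => by
      have hl := H.lower θ (by linarith [meminn θ hθ])
      exact gaussHockey_le_one (integrable_exp_quad H.kappa_pos hl) (gaussMass_pos H.kappa_pos hl)
        (by positivity)
    refine ((setLIntegral_mono' minn this).trans_lt ?_).ne
    rw [setLIntegral_const, one_mul, hvol']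
    exact ENNReal.ofReal_lt_top
  have hw'w : w' ≤ w := by
    have : 0 ≤ 2 * (ρ - R) := by linarith
    rw [hw, hw']
    gcongr
    linarith
  have hfin : g * w' ≤ 2 * (A * x) * w + (w - w') + 2 * ε * w := by
    have h1 := hlow.trans (add_le_add (hamp.trans (add_le_add hup le_rfl)) le_rfl)
    rw [show ∀ a b c e f : ℝ≥0∞, a + b + c + e + f = a + (b + c + e + f) by intros; ring,
      ENNReal.add_le_add_iff_left hkfin] at h1
    rw [show (2 : ℝ≥0∞) = ENNReal.ofReal 2 by simp, ← ENNReal.ofReal_mul hg0,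
      ← ENNReal.ofReal_mul (by positivity), ← ENNReal.ofReal_mul hε,
      ← ENNReal.ofReal_mul (by positivity), ← ENNReal.ofReal_add (by positivity) (by linarith),
      ← ENNReal.ofReal_add (by have := mul_nonneg (mul_nonneg hA hx0.le) hw0.le; linarith)
        (by positivity),
      ← ENNReal.ofReal_add (by
          have := mul_nonneg (mul_nonneg hA hx0.le) hw0.le
          have := mul_nonneg hε hw0.le
          linarith)
        (by positivity)] at h1
    have h2 : 0 ≤ A * x * w + (w - w') + 2 * (ε * w) + A * x * w := by
      have := mul_nonneg (mul_nonneg hA hx0.le) hw0.le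
      have := mul_nonneg hε hw0.le
      linarith
    rw [ENNReal.ofReal_le_ofReal_iff h2] at h1
    linarith
  have hbern : w * (1 - d * (R / ρ)) ≤ w' := by
    have h1 : R / ρ ≤ 1 := by rw [div_le_one hρ]; exact hρR
    have h2 := one_add_mul_le_pow (a := -(R / ρ)) (by linarith) d
    have h3 : w' = w * (1 + -(R / ρ)) ^ d := by
      rw [hw, hw', ← mul_pow]; congr 1; field_simp; ring
    rw [h3]
    refine mul_le_mul_of_nonneg_left ?_ hw0.le
    linarith
  have hdiv : g * (1 - d * (R / ρ)) ≤ 2 * (A * x) + d * (R / ρ) + 2 * ε := by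
    refine le_of_mul_le_mul_right ?_ hw0
    have := mul_le_mul_of_nonneg_left hbern hg0
    nlinarith
  have hb : d * (R / ρ) ≤ d / ρ * x := by
    rw [mul_div_assoc', div_mul_eq_mul_div]
    gcongr
  have hgd : g * (d * (R / ρ)) ≤ d * (R / ρ) := mul_le_of_le_one_left (by positivity) hg1
  have h2 : 0 ≤ 1 / ρ * x := by positivity
  have e : (2 * A + (2 * d + 1) / ρ) * x = 2 * (A * x) + 2 * (d / ρ * x) + 1 / ρ * x := by ring
  rw [e]
  linarith

end AmplificationBound

section Measurability

variable {X : Type*} [MeasurableSpace X] {d : ℕ} {P : Measure X} [SFinite P] {T : X → Fin d → ℝ}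

theorem measurable_uncurry_dotProduct (hT : Measurable T) :
    Measurable fun p : (Fin d → ℝ) × X => p.1 ⬝ᵥ T p.2 := by
  unfold dotProduct
  fun_prop

theorem measurable_integral_tilted (hT : Measurable T) {f : (Fin d → ℝ) → X → ℝ}
    (hf : Measurable (Function.uncurry f)) :
    Measurable fun η => ∫ x, f η x ∂(P.tilted fun x => η ⬝ᵥ T x) := by
  simp_rw [integral_tilted]
  have h1 : Measurable fun p : (Fin d → ℝ) × X => Real.exp (p.1 ⬝ᵥ T p.2) :=
    (measurable_uncurry_dotProduct hT).exp
  have h2 : Measurable fun η : Fin d → ℝ => ∫ x, Real.exp (η ⬝ᵥ T x) ∂P :=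
    (h1.stronglyMeasurable.integral_prod_right (ν := P)).measurable
  have h3 : Measurable fun p : (Fin d → ℝ) × X =>
      (Real.exp (p.1 ⬝ᵥ T p.2) / ∫ x, Real.exp (p.1 ⬝ᵥ T x) ∂P) • f p.1 p.2 :=
    (h1.div (h2.comp measurable_fst)).smul hf
  exact (h3.stronglyMeasurable.integral_prod_right (ν := P)).measurable

theorem measurable_tiltMean (hT : Measurable T) (i : Fin d) :
    Measurable fun η => tiltMean P T η i :=
  measurable_integral_tilted hT (f := fun _ x => T x i)
    (((measurable_pi_apply i).comp hT).comp measurable_snd)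

theorem measurable_tiltCov (hT : Measurable T) (i j : Fin d) :
    Measurable fun η => tiltCov P T η i j := by
  have hi : ∀ i, Measurable fun p : (Fin d → ℝ) × X => T p.2 i - tiltMean P T p.1 i := fun i =>
    (((measurable_pi_apply i).comp hT).comp measurable_snd).sub
      ((measurable_tiltMean hT i).comp measurable_fst)
  exact measurable_integral_tilted hT
    (f := fun η x => (T x i - tiltMean P T η i) * (T x j - tiltMean P T η j)) ((hi i).mul (hi j))

theorem measurable_gaussMass_tiltCov (hT : Measurable T) :
    Measurable fun η => gaussMass (tiltCov P T η) := by
  have h : Measurable fun p : (Fin d → ℝ) × (Fin d → ℝ) =>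
      Real.exp (-(quad (tiltCov P T p.1) p.2 / 2)) := by
    have hM := fun i j => (measurable_tiltCov (P := P) hT i j).comp
      (measurable_fst : Measurable (Prod.fst : (Fin d → ℝ) × (Fin d → ℝ) → _))
    have : Measurable fun p : (Fin d → ℝ) × (Fin d → ℝ) => quad (tiltCov P T p.1) p.2 := by
      unfold quad dotProduct Matrix.mulVec dotProduct
      simp only [Function.comp_def] at hM
      fun_prop
    fun_prop
  exact (h.stronglyMeasurable.integral_prod_right (ν := volume)).measurable

end Measurability

section ProductDensity

variable {X : Type*} [MeasurableSpace X]

theorem lintegral_pi_prod (P : Measure X) [SigmaFinite P] (n : ℕ) (f : Fin n → X → ℝ≥0∞)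
    (hf : ∀ i, Measurable (f i)) :
    ∫⁻ x : Fin n → X, ∏ i, f i (x i) ∂(Measure.pi fun _ => P) = ∏ i, ∫⁻ x, f i x ∂P := by
  induction n with
  | zero => simp
  | succ n ih =>
    calc
      _ = ∫⁻ x : X × (Fin n → X), f 0 x.1 * ∏ i : Fin n, f i.succ (x.2 i)
          ∂(P.prod (Measure.pi fun _ => P)) := by
        have hm : Measurable fun x : Fin (n + 1) → X => ∏ i, f i (x i) :=
          Finset.measurable_prod _ fun i _ => (hf i).comp (measurable_pi_apply i)
        rw [← (measurePreserving_piFinSuccAbove (fun _ : Fin (n + 1) => P) 0).symm.lintegral_comp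
          hm]
        simp_rw [MeasurableEquiv.piFinSuccAbove_symm_apply, Fin.insertNthEquiv,
          Fin.prod_univ_succ, Fin.insertNth_zero, Equiv.coe_fn_mk, Fin.cons_succ,
          Fin.cons_zero]
        rfl
      _ = (∫⁻ x, f 0 x ∂P) * ∏ i : Fin n, ∫⁻ x, f i.succ x ∂P := by
        rw [← ih _ fun i => hf i.succ, ← lintegral_prod_mul (hf 0).aemeasurable
          (Finset.measurable_prod _ fun i _ =>
            (hf i.succ).comp (measurable_pi_apply i)).aemeasurable]
      _ = _ := by rw [Fin.prod_univ_succ]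

theorem pi_withDensity (P : Measure X) [SigmaFinite P] (n : ℕ) {f : X → ℝ≥0∞}
    (hf : Measurable f) [SigmaFinite (P.withDensity f)] :
    (Measure.pi fun _ : Fin n => P.withDensity f) =
      (Measure.pi fun _ : Fin n => P).withDensity fun x => ∏ j, f (x j) := by
  refine Measure.pi_eq fun s hs => ?_
  rw [withDensity_apply _ (MeasurableSet.univ_pi hs), ← lintegral_indicator (MeasurableSet.univ_pi hs)]
  have h1 : (Set.pi Set.univ s).indicator (fun x : Fin n → X => ∏ j, f (x j)) =
      fun x => ∏ j, (s j).indicator f (x j) := by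
    funext x
    by_cases hx : x ∈ Set.pi Set.univ s
    · rw [Set.indicator_of_mem hx]
      exact Finset.prod_congr rfl fun j _ => (Set.indicator_of_mem (hx j trivial) f).symm
    · rw [Set.indicator_of_notMem hx]
      simp only [Set.mem_pi, not_forall] at hx
      obtain ⟨j, _, hj⟩ := hx
      exact (Finset.prod_eq_zero (Finset.mem_univ j) (Set.indicator_of_notMem hj f)).symm
  rw [h1, lintegral_pi_prod P n _ fun j => hf.indicator (hs j)]
  exact Finset.prod_congr rfl fun j _ => by
    rw [lintegral_indicator (hs j), withDensity_apply _ (hs j)]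

variable {d : ℕ}

/-- Empirical mean of the statistic `T` over a sample. -/
noncomputable def sampleMean (T : X → Fin d → ℝ) (n : ℕ) (x : Fin n → X) : Fin d → ℝ :=
  (n : ℝ)⁻¹ • ∑ j, T (x j)

theorem measurable_sampleMean {T : X → Fin d → ℝ} (hT : Measurable T) (n : ℕ) :
    Measurable (sampleMean T n) := by
  unfold sampleMean
  fun_prop

theorem pi_withDensity_exp (P : Measure X) [SigmaFinite P] {T : X → Fin d → ℝ} (hT : Measurable T)
    {n : ℕ} (hn : n ≠ 0) (Λ : (Fin d → ℝ) → ℝ) (θ : Fin d → ℝ)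
    [SigmaFinite (P.withDensity fun x => ENNReal.ofReal (Real.exp (θ ⬝ᵥ T x - Λ θ)))] :
    (Measure.pi fun _ : Fin n =>
        P.withDensity fun x => ENNReal.ofReal (Real.exp (θ ⬝ᵥ T x - Λ θ))) =
      (Measure.pi fun _ : Fin n => P).withDensity fun x => lik Λ n (sampleMean T n x) θ := by
  rw [pi_withDensity P n ((measurable_dotProduct hT θ).sub_const _).exp.ennreal_ofReal]
  congr 1
  funext x
  have hn' : (n : ℝ) ≠ 0 := Nat.cast_ne_zero.2 hn
  rw [lik, ← ENNReal.ofReal_prod_of_nonneg fun _ _ => (Real.exp_nonneg _), ← Real.exp_sum]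
  congr 2
  rw [Finset.sum_sub_distrib, sampleMean, smul_dotProduct, sum_dotProduct]
  simp only [dotProduct_comm θ, Finset.sum_const, Finset.card_univ, Fintype.card_fin, smul_eq_mul,
    nsmul_eq_mul]
  field_simp

end ProductDensity

section ExponentialFamily

variable {X : Type*} [MeasurableSpace X] {d : ℕ} {μ : Measure X} {T : X → Fin d → ℝ}

theorem measurable_sum_mul (hT : Measurable T) (θ : Fin d → ℝ) :
    Measurable fun x => ∑ i, θ i * T x i :=
  measurable_dotProduct hT θ

theorem expFamZ_ne_zero (hT : Measurable T) (hμ : μ ≠ 0) (θ : Fin d → ℝ) : expFamZ μ T θ ≠ 0 := by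
  intro h
  rw [expFamZ, lintegral_eq_zero_iff (measurable_sum_mul hT θ).exp.ennreal_ofReal] at h
  refine hμ (ae_eq_bot.1 (Filter.empty_mem_iff_bot.1 ?_))
  filter_upwards [h] with x hx
  exact absurd hx (ENNReal.ofReal_pos.2 (Real.exp_pos _)).ne'

theorem lintegral_exp_sub_const (μ : Measure X) (s : X → ℝ) (A : ℝ) :
    ∫⁻ x, ENNReal.ofReal (Real.exp (s x - A)) ∂μ =
      ENNReal.ofReal (Real.exp (-A)) * ∫⁻ x, ENNReal.ofReal (Real.exp (s x)) ∂μ := by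
  rw [← lintegral_const_mul' _ _ ENNReal.ofReal_ne_top]
  refine lintegral_congr fun x => ?_
  rw [← ENNReal.ofReal_mul (Real.exp_nonneg _), ← Real.exp_add]
  congr 2
  ring

theorem exp_neg_expFamA_mul (hT : Measurable T) (hμ : μ ≠ 0) {θ : Fin d → ℝ}
    (hθ : θ ∈ expFamDom μ T) :
    ENNReal.ofReal (Real.exp (-expFamA μ T θ)) * expFamZ μ T θ = 1 := by
  have h0 := expFamZ_ne_zero hT hμ θ
  have h1 : 0 < (expFamZ μ T θ).toReal := ENNReal.toReal_pos h0 hθ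
  rw [expFamA, Real.exp_neg, Real.exp_log h1, ENNReal.ofReal_inv_of_pos h1, ENNReal.ofReal_toReal hθ,
    ENNReal.inv_mul_cancel h0 hθ]

theorem isProbabilityMeasure_expFam (hT : Measurable T) (hμ : μ ≠ 0) {θ : Fin d → ℝ}
    (hθ : θ ∈ expFamDom μ T) : IsProbabilityMeasure (expFam μ T θ) := by
  refine ⟨?_⟩
  rw [expFam, withDensity_apply _ MeasurableSet.univ, Measure.restrict_univ,
    lintegral_exp_sub_const, ← exp_neg_expFamA_mul hT hμ hθ, expFamZ]

theorem lintegral_exp_expFam (hT : Measurable T) (θ η : Fin d → ℝ) :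
    ∫⁻ x, ENNReal.ofReal (Real.exp (η ⬝ᵥ T x)) ∂(expFam μ T θ) =
      ENNReal.ofReal (Real.exp (-expFamA μ T θ)) * expFamZ μ T (θ + η) := by
  rw [expFam, lintegral_withDensity_eq_lintegral_mul _
    ((measurable_sum_mul hT θ).sub_const _).exp.ennreal_ofReal
    (measurable_dotProduct hT η).exp.ennreal_ofReal, expFamZ, ← lintegral_exp_sub_const]
  refine lintegral_congr fun x => ?_
  rw [Pi.mul_apply, ← ENNReal.ofReal_mul (Real.exp_nonneg _), ← Real.exp_add]
  congr 2
  simp only [dotProduct, Pi.add_apply, add_mul, Finset.sum_add_distrib]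
  ring

theorem logMgf_expFam (hT : Measurable T) (hμ : μ ≠ 0) {θ η : Fin d → ℝ}
    (hη : θ + η ∈ expFamDom μ T) :
    logMgf (expFam μ T θ) T η = expFamA μ T (θ + η) - expFamA μ T θ := by
  have h1 : 0 < (expFamZ μ T (θ + η)).toReal :=
    ENNReal.toReal_pos (expFamZ_ne_zero hT hμ _) hη
  rw [logMgf, integral_eq_lintegral_of_nonneg_ae (Filter.Eventually.of_forall fun _ =>
    Real.exp_nonneg _) (measurable_dotProduct hT η).exp.aestronglyMeasurable,
    lintegral_exp_expFam hT, ENNReal.toReal_mul, ENNReal.toReal_ofReal (Real.exp_nonneg _),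
    Real.log_mul (Real.exp_pos _).ne' h1.ne', Real.log_exp, expFamA, expFamA]
  ring

theorem expFam_add (hT : Measurable T) (hμ : μ ≠ 0) {θ η : Fin d → ℝ}
    (hη : θ + η ∈ expFamDom μ T) :
    expFam μ T (θ + η) = (expFam μ T θ).withDensity fun x =>
      ENNReal.ofReal (Real.exp (η ⬝ᵥ T x - logMgf (expFam μ T θ) T η)) := by
  rw [logMgf_expFam hT hμ hη, expFam, expFam, ← withDensity_mul _
    ((measurable_sum_mul hT θ).sub_const _).exp.ennreal_ofReal
    ((measurable_dotProduct hT η).sub_const _).exp.ennreal_ofReal]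
  congr 1
  funext x
  rw [Pi.mul_apply, ← ENNReal.ofReal_mul (Real.exp_nonneg _), ← Real.exp_add]
  congr 2
  simp only [dotProduct, Pi.add_apply, add_mul, Finset.sum_add_distrib]
  ring

theorem integrable_exp_expFam (hT : Measurable T) {θ η : Fin d → ℝ}
    (hη : θ + η ∈ expFamDom μ T) :
    Integrable (fun x => Real.exp (η ⬝ᵥ T x)) (expFam μ T θ) := by
  refine ⟨(measurable_dotProduct hT η).exp.aestronglyMeasurable, ?_⟩
  rw [hasFiniteIntegral_iff_ofReal (Filter.Eventually.of_forall fun _ => Real.exp_nonneg _),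
    lintegral_exp_expFam hT]
  exact ENNReal.mul_lt_top ENNReal.ofReal_lt_top (lt_top_iff_ne_top.2 hη)

theorem integrable_exp_norm_expFam (hT : Measurable T) (hd : 0 < d) {θ : Fin d → ℝ} {a : ℝ}
    (ha : 0 ≤ a) (h : ∀ η : Fin d → ℝ, ‖η‖ ≤ a → θ + η ∈ expFamDom μ T) :
    Integrable (fun x => Real.exp (a * ‖T x‖)) (expFam μ T θ) := by
  have : Nonempty (Fin d) := ⟨⟨0, hd⟩⟩
  have hn : ∀ i, ‖(Pi.single i a : Fin d → ℝ)‖ ≤ a := fun i => by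
    rw [Pi.norm_single, Real.norm_of_nonneg ha]
  have hdot : ∀ i x, (Pi.single i a : Fin d → ℝ) ⬝ᵥ T x = a * T x i := fun i x =>
    single_dotProduct _ _ _
  have hs : Integrable (fun x => ∑ i, (Real.exp ((Pi.single i a : Fin d → ℝ) ⬝ᵥ T x) +
      Real.exp ((-Pi.single i a : Fin d → ℝ) ⬝ᵥ T x))) (expFam μ T θ) :=
    integrable_finsetSum _ fun i _ =>
      (integrable_exp_expFam hT (h _ (hn i))).add
        (integrable_exp_expFam hT (h _ (by rw [norm_neg]; exact hn i)))
  refine hs.mono' (hT.norm.const_mul a).exp.aestronglyMeasurable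
    (Filter.Eventually.of_forall fun x => ?_)
  rw [Real.norm_of_nonneg (Real.exp_nonneg _)]
  obtain ⟨i, hi⟩ : ∃ i, ‖T x‖ = |T x i| := by
    obtain ⟨i, hi⟩ := Finite.exists_max fun i => ‖T x i‖
    exact ⟨i, le_antisymm ((pi_norm_le_iff_of_nonneg (norm_nonneg _)).2 hi)
      (norm_le_pi_norm (T x) i)⟩
  refine le_trans ?_ (Finset.single_le_sum (f := fun i =>
    Real.exp ((Pi.single i a : Fin d → ℝ) ⬝ᵥ T x) +
      Real.exp ((-Pi.single i a : Fin d → ℝ) ⬝ᵥ T x))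
    (fun i _ => by positivity) (Finset.mem_univ i))
  simp only [neg_dotProduct, hdot, hi]
  rcases abs_cases (T x i) with ⟨h1, _⟩ | ⟨h1, _⟩ <;> rw [h1]
  · linarith [Real.exp_pos (-(a * T x i))]
  · rw [mul_neg]; linarith [Real.exp_pos (a * T x i)]

theorem volume_hyperplane (h : Fin d → ℝ) (hh : h ≠ 0) (c : ℝ) :
    volume {t : Fin d → ℝ | h ⬝ᵥ t = c} = 0 := by
  let s : AffineSubspace ℝ (Fin d → ℝ) :=
    { carrier := {t | h ⬝ᵥ t = c}
      smul_vsub_vadd_mem' := by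
        intro r p₁ p₂ p₃ h₁ h₂ h₃
        change h ⬝ᵥ p₁ = c at h₁
        change h ⬝ᵥ p₂ = c at h₂
        change h ⬝ᵥ p₃ = c at h₃
        change h ⬝ᵥ (r • (p₁ - p₂) + p₃) = c
        rw [dotProduct_add, dotProduct_smul, dotProduct_sub, h₁, h₂, h₃]
        simp }
  refine Measure.addHaar_affineSubspace volume s fun hs => hh ?_
  have hmem : ∀ t, h ⬝ᵥ t = c := fun t => by
    have : t ∈ s := hs ▸ AffineSubspace.mem_top ℝ _ t
    exact this
  rw [← dotProduct_self_eq_zero, hmem h, ← hmem 0, dotProduct_zero]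

theorem not_ae_dotProduct_const (hT : Measurable T) {P : Measure X} [IsProbabilityMeasure P]
    (hac : Measure.map T P ≪ volume) (h : Fin d → ℝ) (hh : h ≠ 0) (c : ℝ) :
    ¬ ∀ᵐ x ∂P, h ⬝ᵥ T x = c := by
  intro hx
  have hm : MeasurableSet {t : Fin d → ℝ | h ⬝ᵥ t = c} :=
    (measurable_dotProduct measurable_id h) (measurableSet_singleton c)
  have h0 := hac (volume_hyperplane h hh c)
  rw [Measure.map_apply hT hm] at h0
  have h1 : ∀ᵐ x ∂P, ¬ h ⬝ᵥ T x = c := by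
    rw [ae_iff]
    simpa using h0
  obtain ⟨x, hx1, hx2⟩ := (hx.and h1).exists
  exact hx2 hx1

end ExponentialFamily

theorem ampErr_nonneg {X Θ : Type*} [MeasurableSpace X] (P : Θ → Measure X) (n m : ℕ) :
    0 ≤ ampErr P n m :=
  Real.iInf_nonneg fun _ => Real.iSup_nonneg fun _ => tvDist_nonneg _ _

theorem rpow_neg_third_le {n : ℝ} (hn : 2 ≤ n) :
    n ^ (-(1 : ℝ) / 3) ≤ 2 * (Real.log n / n) ^ ((1 : ℝ) / 3) := by
  have hn0 : 0 < n := by linarith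
  have hlog : 1 / 2 ≤ Real.log n :=
    (by linarith [Real.log_two_gt_d9] : (1 : ℝ) / 2 ≤ Real.log 2).trans
      (Real.log_le_log two_pos hn)
  have h8 : (2 : ℝ) = 8 ^ ((1 : ℝ) / 3) := by
    rw [show (8 : ℝ) = 2 ^ (3 : ℝ) by norm_num, ← Real.rpow_mul two_pos.le]
    norm_num
  rw [neg_div, Real.rpow_neg hn0.le, ← Real.inv_rpow hn0.le]
  calc n⁻¹ ^ ((1 : ℝ) / 3) ≤ (8 * (Real.log n / n)) ^ ((1 : ℝ) / 3) := by
        refine Real.rpow_le_rpow (inv_nonneg.2 hn0.le) ?_ (by norm_num)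
        rw [inv_eq_one_div, ← mul_div_assoc]
        exact div_le_div_of_nonneg_right (by linarith) hn0.le
    _ = _ := by rw [Real.mul_rpow (by norm_num) (div_nonneg (by linarith) hn0.le), ← h8]

section

universe u

/-- The lower bound for exponential families of positive dimension, with remainder `n^{-1/3}`. -/
theorem ampErr_expFam_lower_bound {X : Type u} [MeasurableSpace X] {d : ℕ} (hd : 0 < d)
    {μ : Measure X} (hμ : μ ≠ 0) {T : X → Fin d → ℝ} (hT : Measurable T)
    (hint : (interior (expFamDom μ T)).Nonempty)
    (hac : ∀ θ ∈ expFamDom μ T, Measure.map T (expFam μ T θ) ≪ volume) :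
    ∃ A : ℝ, 0 ≤ A ∧ ∀ n m : ℕ, 1 ≤ n →
      (1 / 2500) ^ 2 * min ((m : ℝ) * Real.sqrt d / n) 1 ≤
        2 * ampErr (fun θ : {θ : Fin d → ℝ // θ ∈ expFamDom μ T} => expFam μ T θ.1) n m +
          A * (n : ℝ) ^ (-(1 : ℝ) / 3) := by
  obtain ⟨θ₀, hθ₀⟩ := hint
  obtain ⟨r, hr, hball⟩ := Metric.isOpen_iff.1 isOpen_interior θ₀ hθ₀
  have hdom : ∀ η : Fin d → ℝ, ‖η‖ ≤ r / 2 → θ₀ + η ∈ expFamDom μ T := fun η hη => by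
    refine interior_subset (hball ?_)
    rw [Metric.mem_ball, dist_eq_norm, add_sub_cancel_left]
    linarith
  have hp : ∀ {θ}, θ ∈ expFamDom μ T → IsProbabilityMeasure (expFam μ T θ) :=
    fun hθ => isProbabilityMeasure_expFam hT hμ hθ
  have hθ₀' := interior_subset hθ₀
  have := hp hθ₀'
  obtain ⟨ρ, κ, K, C, hρ, -, H⟩ := exists_quadApprox (P := expFam μ T θ₀) hT (half_pos hr)
    (integrable_exp_norm_expFam hT hd (half_pos hr).le hdom)
    (not_ae_dotProduct_const hT (hac θ₀ hθ₀')) (half_pos hr)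
  obtain ⟨A, hA, key⟩ := H.amplification_lower_bound (measurable_gaussMass_tiltCov hT) hd
  refine ⟨A, hA, fun n m hn => ?_⟩
  set D := {θ : Fin d → ℝ // θ ∈ expFamDom μ T}
  have hpD : ∀ θ : D, IsProbabilityMeasure (expFam μ T θ.1) := fun θ => hp θ.2
  obtain ⟨x₀⟩ : Nonempty X := (expFam μ T θ₀).nonempty_of_neZero
  have : Nonempty {S : Kernel (Fin n → X) (Fin (n + m) → X) // IsMarkovKernel S} :=
    ⟨⟨Kernel.const _ (Measure.dirac fun _ => x₀), inferInstance⟩⟩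
  suffices h : ((1 / 2500) ^ 2 * min ((m : ℝ) * Real.sqrt d / n) 1 -
      A * (n : ℝ) ^ (-(1 : ℝ) / 3)) / 2 ≤ ampErr (fun θ : D => expFam μ T θ.1) n m by linarith
  refine le_ciInf fun S => ?_
  have := S.2
  have hn1 : (1 : ℝ) ≤ n := by exact_mod_cast hn
  have hpi : ∀ k : ℕ, k ≠ 0 → ∀ θ : Fin d → ℝ, ‖θ‖ ≤ ρ →
      (Measure.pi fun _ : Fin k => expFam μ T (θ₀ + θ)) =
        (Measure.pi fun _ : Fin k => expFam μ T θ₀).withDensity fun y =>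
          lik (logMgf (expFam μ T θ₀) T) k (sampleMean T k y) θ := fun k hk θ hθ => by
    have hD := hdom θ (hθ.trans hρ)
    have := hp hD
    rw [expFam_add hT hμ hD] at this ⊢
    exact pi_withDensity_exp _ hT hk _ θ
  have hnm : n + m ≠ 0 := by omega
  have hb : BddAbove (Set.range fun θ : D => tvDist (Measure.pi fun _ : Fin (n + m) => expFam μ T θ.1)
      ((Measure.pi fun _ : Fin n => expFam μ T θ.1).bind S.1)) :=
    ⟨1, by rintro _ ⟨θ, rfl⟩; exact tvDist_le_one _ _⟩
  have h := key n ((n + m : ℕ) : ℝ) hn1 (by push_cast; linarith [(Nat.cast_nonneg m : (0 : ℝ) ≤ m)])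
    (Fin n → X) (Fin (n + m) → X) (Measure.pi fun _ => expFam μ T θ₀)
    (Measure.pi fun _ => expFam μ T θ₀) (sampleMean T n) (sampleMean T (n + m))
    (measurable_sampleMean hT n) (measurable_sampleMean hT (n + m))
    (fun θ hθ => by
      have := hp (hdom θ (hθ.trans hρ))
      rw [← hpi n (by omega) θ hθ]
      infer_instance)
    (fun θ hθ => by
      have := hp (hdom θ (hθ.trans hρ))
      rw [← hpi (n + m) hnm θ hθ]
      infer_instance) S.1
    (⨆ θ : D, tvDist (Measure.pi fun _ : Fin (n + m) => expFam μ T θ.1)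
      ((Measure.pi fun _ : Fin n => expFam μ T θ.1).bind S.1))
    (Real.iSup_nonneg fun θ => tvDist_nonneg _ _)
    (fun θ hθ A hA => by
      have hD := hdom θ (hθ.trans hρ)
      have := hp hD
      rw [← hpi n (by omega) θ hθ, ← hpi (n + m) hnm θ hθ]
      have hle := ENNReal.ofReal_le_ofReal (le_ciSup hb ⟨θ₀ + θ, hD⟩)
      exact ⟨(measure_le_add_tvDist _ _ hA).trans (add_le_add_right hle _),
        (measure_le_add_tvDist' _ _ hA).trans (add_le_add_right hle _)⟩)
  rw [show (((n + m : ℕ) : ℝ) - n) / n * Real.sqrt d = m * Real.sqrt d / n by push_cast; ring] at h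
  linarith

end

/-- Asymptotic lower bound for exponential families.
There is an absolute constant `c > 0` (independent of `n`, `m`, `d` and the family)
such that for every `d`-dimensional exponential family satisfying the continuity
assumption (nonempty interior of the domain, law of `T` absolutely continuous w.r.t.
Lebesgue measure) and linear independence of the components of `T`, there is a
constant `C > 0` depending only on the family with
`ε*(𝒫, n, m) ≥ c·min(m√d/n, 1) − C·(log n / n)^{1/3}` for all `n ≥ 2`, `m ≥ 0`. -/
theorem expFam_amplification_lower_bound :
    ∃ c : ℝ, 0 < c ∧
      ∀ (X : Type*) [MeasurableSpace X] (d : ℕ) (μ : Measure X) (T : X → Fin d → ℝ),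
        Measurable T →
        (interior (expFamDom μ T)).Nonempty →
        (∀ θ ∈ expFamDom μ T, Measure.map T (expFam μ T θ) ≪ MeasureTheory.volume) →
        (∀ a : Fin d → ℝ, (∀ᵐ x ∂μ, ∑ i, a i * T x i = 0) → a = 0) →
        ∃ C : ℝ, 0 < C ∧
          ∀ n m : ℕ, 2 ≤ n →
            c * min ((m : ℝ) * Real.sqrt d / n) 1 -
                C * (Real.log n / n) ^ ((1 : ℝ) / 3) ≤
              ampErr
                (fun θ : {θ : Fin d → ℝ // θ ∈ expFamDom μ T} => expFam μ T θ.1)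
                n m := by
  refine ⟨(1 / 2500) ^ 2 / 2, by norm_num, fun X _ d μ T hT hint hac hli => ?_⟩
  rcases Nat.eq_zero_or_pos d with rfl | hd
  · refine ⟨1, one_pos, fun n m hn => ?_⟩
    have h0 : 0 ≤ (Real.log n / n : ℝ) ^ ((1 : ℝ) / 3) :=
      Real.rpow_nonneg (div_nonneg (Real.log_natCast_nonneg n) (Nat.cast_nonneg n)) _
    refine le_trans ?_ (ampErr_nonneg _ n m)
    simp only [CharP.cast_eq_zero, Real.sqrt_zero, mul_zero, zero_div]
    rw [min_eq_left zero_le_one]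
    linarith
  · have hμ : μ ≠ 0 := by
      rintro rfl
      have h1 := hli (fun _ => 1) (by simp)
      exact one_ne_zero (congrFun h1 ⟨0, hd⟩)
    obtain ⟨A, hA, h⟩ := ampErr_expFam_lower_bound hd hμ hT hint hac
    refine ⟨A + 1, by linarith, fun n m hn => ?_⟩
    have h1 := h n m (by omega)
    have h2 := mul_le_mul_of_nonneg_left
      (rpow_neg_third_le (n := n) (by exact_mod_cast hn)) hA
    have h0 : 0 ≤ (Real.log n / n : ℝ) ^ ((1 : ℝ) / 3) :=
      Real.rpow_nonneg (div_nonneg (Real.log_natCast_nonneg n) (Nat.cast_nonneg n)) _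
    linarith
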